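/- arXiv:1108.1878 — 4 statements merged into one kernel-verified Lean document; each statement's English description precedes it below -/
import Mathlib

section
/- Let {a_n} be a sequence of real numbers with a_n → 0 as n → ∞. Let 0 < δ < c and ε > 0 be constants with δ < 1 and δ + ε < c − ε, and let χ be a smooth function on ℝ with χ(s) = 1 for |s| ≤ δ + ε and χ(s) = 0 for |s| ≥ c − ε. Then both integrals ∫_ℝ e^{i n (s³/3 + a_n s)} (1 − χ(s)) ds and ∫_ℝ e^{i n (s³/3 + a_n s)} s (1 − χ(s)) ds (as improper oscillatory integrals) are O(n^{−N}) as n → ∞ for every N > 0. -/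
/-!
Where the phase `φ` has no stationary point, `φ' e^{itφ} = (it)⁻¹ (e^{itφ})'`, so integrating by
parts trades an amplitude `φ' G` for `-(it)⁻¹ G'`, provided `G` vanishes at infinity. For the cubic
phase `s³/3 + a s` this is applied to amplitudes `s ^ j / (s² + a) ^ k * ψ s`, where `ψ` has bounded
derivatives of all orders and `s² + a ≥ κ (1 + s²)` on the support of `ψ`. Such an amplitude is
`O(|s| ^ (j - 2 k))` uniformly in `a`, and `G'` is a combination of three amplitudes of the same
shape, each of order at least two below that of `φ' G`. Hence every amplitude of order at most one
becomes absolutely integrable after two steps, and each further step gains another factor `t⁻¹`.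

The finitely many `n` for which `a n` is too negative only need convergence. There `ψ` is
split into a compactly supported part and a part supported far from the stationary points.
-/

open Filter Topology Asymptotics MeasureTheory

noncomputable section

section ImproperIntegral

variable {E : Type*} [NormedAddCommGroup E] [NormedSpace ℝ E] {f g : ℝ → E} {L K : E}

/-- `L` is the improper Riemann integral of `f` over the real line. The two endpoints tend to
infinity independently, and local integrability rules out the junk values of `∫ s in x..y, f s`. -/
structure HasImproperIntegral (f : ℝ → E) (L : E) : Prop where
  locallyIntegrable : LocallyIntegrable f
  tendsto : Tendsto (fun I : ℝ × ℝ => ∫ s in I.1..I.2, f s) (atBot ×ˢ atTop) (𝓝 L)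

namespace HasImproperIntegral

lemma tendsto_symmetric (hf : HasImproperIntegral f L) :
    Tendsto (fun R : ℝ => ∫ s in (-R)..R, f s) atTop (𝓝 L) :=
  hf.tendsto.comp (tendsto_neg_atTop_atBot.prodMk tendsto_id)

lemma unique (hL : HasImproperIntegral f L) (hK : HasImproperIntegral f K) : L = K :=
  tendsto_nhds_unique hL.tendsto hK.tendsto

lemma intervalIntegrable (hf : HasImproperIntegral f L) (x y : ℝ) :
    IntervalIntegrable f volume x y :=
  (hf.locallyIntegrable.integrableOn_isCompact isCompact_uIcc).intervalIntegrable

lemma add (hf : HasImproperIntegral f L) (hg : HasImproperIntegral g K) :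
    HasImproperIntegral (fun s => f s + g s) (L + K) where
  locallyIntegrable := hf.locallyIntegrable.add hg.locallyIntegrable
  tendsto := (hf.tendsto.add hg.tendsto).congr fun _ =>
    (intervalIntegral.integral_add (hf.intervalIntegrable _ _) (hg.intervalIntegrable _ _)).symm

lemma const_smul {𝕜 : Type*} [RCLike 𝕜] [NormedSpace 𝕜 E] [SMulCommClass ℝ 𝕜 E]
    (c : 𝕜) (hf : HasImproperIntegral f L) : HasImproperIntegral (fun s => c • f s) (c • L) where
  locallyIntegrable := hf.locallyIntegrable.smul c
  tendsto := (hf.tendsto.const_smul c).congr fun _ => (intervalIntegral.integral_smul c f).symm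

end HasImproperIntegral

lemma hasImproperIntegral_of_integrable (hf : Integrable f) :
    HasImproperIntegral f (∫ s, f s) where
  locallyIntegrable := hf.locallyIntegrable
  tendsto := intervalIntegral_tendsto_integral hf tendsto_fst tendsto_snd

lemma hasImproperIntegral_of_hasDerivAt [CompleteSpace E] {F : ℝ → E} {l u : E}
    (hF : ∀ s, HasDerivAt F (f s) s) (hf : LocallyIntegrable f)
    (hl : Tendsto F atBot (𝓝 l)) (hu : Tendsto F atTop (𝓝 u)) :
    HasImproperIntegral f (u - l) where
  locallyIntegrable := hf
  tendsto := ((hu.comp tendsto_snd).sub (hl.comp tendsto_fst)).congr fun _ =>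
    (intervalIntegral.integral_eq_sub_of_hasDerivAt (fun s _ => hF s)
      (hf.integrableOn_isCompact isCompact_uIcc).intervalIntegrable).symm

end ImproperIntegral

section BoundedDerivs

variable {E : Type*} [NormedAddCommGroup E] [NormedSpace ℝ E] {ψ : ℝ → E}

/-- Smooth functions on the line all of whose derivatives, including the zeroth, are bounded. -/
structure HasBoundedDerivs (ψ : ℝ → E) : Prop where
  contDiff : ContDiff ℝ (⊤ : ℕ∞) ψ
  bounded : ∀ k : ℕ, ∃ C : ℝ, ∀ s, ‖iteratedDeriv k ψ s‖ ≤ C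

namespace HasBoundedDerivs

lemma exists_norm_le (hψ : HasBoundedDerivs ψ) : ∃ C : ℝ, ∀ s, ‖ψ s‖ ≤ C := by
  simpa only [iteratedDeriv_zero] using hψ.bounded 0

lemma differentiable (hψ : HasBoundedDerivs ψ) : Differentiable ℝ ψ :=
  hψ.contDiff.differentiable (by simp)

lemma deriv (hψ : HasBoundedDerivs ψ) : HasBoundedDerivs (deriv ψ) where
  contDiff := (contDiff_infty_iff_deriv.1 hψ.contDiff).2
  bounded k := by simpa only [← iteratedDeriv_succ'] using hψ.bounded (k + 1)

lemma const_sub (c : E) (hψ : HasBoundedDerivs ψ) : HasBoundedDerivs fun s => c - ψ s where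
  contDiff := contDiff_const.sub hψ.contDiff
  bounded k := by
    obtain ⟨C, hC⟩ := hψ.bounded k
    rcases k with _ | k
    · refine ⟨‖c‖ + C, fun s => ?_⟩
      rw [iteratedDeriv_zero] at hC ⊢
      exact norm_sub_le_of_le le_rfl (hC s)
    · refine ⟨C, fun s => ?_⟩
      rw [iteratedDeriv_const_sub k.succ_pos, iteratedDeriv_neg, norm_neg]
      exact hC s

lemma smul {f : ℝ → ℝ} (hf : HasBoundedDerivs f) (hψ : HasBoundedDerivs ψ) :
    HasBoundedDerivs fun s => f s • ψ s where
  contDiff := hf.contDiff.smul hψ.contDiff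
  bounded k := by
    choose A hA using hf.bounded
    choose B hB using hψ.bounded
    refine ⟨∑ i ∈ Finset.range (k + 1), k.choose i * A i * B (k - i), fun s => ?_⟩
    have leibniz := norm_iteratedFDeriv_smul_le (𝕜 := ℝ) hf.contDiff hψ.contDiff s
      (n := k) (by exact_mod_cast le_top)
    simp only [norm_iteratedFDeriv_eq_norm_iteratedDeriv] at leibniz
    refine leibniz.trans (Finset.sum_le_sum fun i _ => ?_)
    have hA0 : 0 ≤ A i := (norm_nonneg _).trans (hA i s)
    gcongr
    exacts [hA i s, hB (k - i) s]

end HasBoundedDerivs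

lemma hasBoundedDerivs_of_hasCompactSupport (hψ : ContDiff ℝ (⊤ : ℕ∞) ψ)
    (hsupp : HasCompactSupport ψ) : HasBoundedDerivs ψ where
  contDiff := hψ
  bounded k := by
    have hsupp_deriv : HasCompactSupport (iteratedDeriv k ψ) := by
      induction k with
      | zero => simpa only [iteratedDeriv_zero] using hsupp
      | succ k ih => simpa only [iteratedDeriv_succ] using ih.deriv
    exact hsupp_deriv.exists_bound_of_continuous
      (hψ.continuous_iteratedDeriv k (by exact_mod_cast le_top))

lemma hasBoundedDerivs_one_sub {χ : ℝ → ℝ} {r : ℝ} (hχ : ContDiff ℝ (⊤ : ℕ∞) χ)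
    (hχ0 : ∀ s, r ≤ |s| → χ s = 0) : HasBoundedDerivs fun s => ((1 - χ s : ℝ) : ℂ) := by
  have hsupp : HasCompactSupport fun s => (χ s : ℂ) := by
    refine .intro (isCompact_closedBall (0 : ℝ) r) fun s hs => ?_
    rw [mem_closedBall_zero_iff, not_le] at hs
    rw [hχ0 s hs.le, Complex.ofReal_zero]
  simpa using (hasBoundedDerivs_of_hasCompactSupport
    (Complex.ofRealCLM.contDiff.comp hχ) hsupp).const_sub 1

end BoundedDerivs

section OscillatoryIntegral

/-- The oscillating factor `e^{i t φ(s)}` with phase `φ` and frequency `t`. -/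
def oscFactor (φ : ℝ → ℝ) (t s : ℝ) : ℂ := Complex.exp (Complex.I * t * φ s)

lemma norm_oscFactor (φ : ℝ → ℝ) (t s : ℝ) : ‖oscFactor φ t s‖ = 1 := by
  rw [oscFactor, mul_assoc, mul_comm, ← Complex.ofReal_mul, Complex.norm_exp_ofReal_mul_I]

lemma hasDerivAt_oscFactor {φ : ℝ → ℝ} {φ' s : ℝ} (hφ : HasDerivAt φ φ' s) (t : ℝ) :
    HasDerivAt (oscFactor φ t) (oscFactor φ t s * (Complex.I * t * φ')) s :=
  (hφ.ofReal_comp.const_mul (Complex.I * t)).cexp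

lemma continuous_oscFactor {φ : ℝ → ℝ} (hφ : Continuous φ) (t : ℝ) :
    Continuous (oscFactor φ t) := by
  unfold oscFactor
  fun_prop

lemma hasImproperIntegral_oscFactor_mul_deriv {φ φ' : ℝ → ℝ} {G G' : ℝ → ℂ} {t : ℝ} {L : ℂ}
    (hφ : ∀ s, HasDerivAt φ (φ' s) s) (hφ' : Continuous φ') (hG : ∀ s, HasDerivAt G (G' s) s)
    (hG0 : Tendsto G (cocompact ℝ) (𝓝 0)) (ht : t ≠ 0)
    (hL : HasImproperIntegral (fun s => oscFactor φ t s * G' s) L) :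
    HasImproperIntegral (fun s => oscFactor φ t s * (φ' s * G s)) (-(Complex.I * t)⁻¹ * L) := by
  have hIt : Complex.I * t ≠ 0 := mul_ne_zero Complex.I_ne_zero (Complex.ofReal_ne_zero.2 ht)
  have hosc : Continuous (oscFactor φ t) :=
    continuous_oscFactor (continuous_iff_continuousAt.2 fun s => (hφ s).continuousAt) t
  have hGc : Continuous G := continuous_iff_continuousAt.2 fun s => (hG s).continuousAt
  have hderiv : ∀ s, HasDerivAt (fun s => oscFactor φ t s * G s)
      (oscFactor φ t s * (Complex.I * t * φ' s) * G s + oscFactor φ t s * G' s) s := fun s =>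
    (hasDerivAt_oscFactor (hφ s) t).mul (hG s)
  have hloc : LocallyIntegrable fun s =>
      oscFactor φ t s * (Complex.I * t * φ' s) * G s + oscFactor φ t s * G' s :=
    .add (Continuous.locallyIntegrable (by fun_prop)) hL.locallyIntegrable
  have hboundary : Tendsto (fun s => oscFactor φ t s * G s) (cocompact ℝ) (𝓝 0) := by
    rw [tendsto_zero_iff_norm_tendsto_zero]
    simpa only [norm_mul, norm_oscFactor, one_mul] using tendsto_zero_iff_norm_tendsto_zero.1 hG0
  rw [cocompact_eq_atBot_atTop, tendsto_sup] at hboundary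
  have htotal := hasImproperIntegral_of_hasDerivAt hderiv hloc hboundary.1 hboundary.2
  convert (htotal.add (hL.const_smul (-1 : ℂ))).const_smul (Complex.I * t)⁻¹ using 1
  · ext s
    rw [smul_eq_mul, smul_eq_mul, neg_one_mul, add_neg_cancel_right, eq_inv_mul_iff_mul_eq₀ hIt]
    ring
  · simp only [smul_eq_mul]
    ring

variable {ι : Type*} {φ : ι → ℝ → ℝ} {M : ℕ} {F G : ι → ℝ → ℂ}

/-- For a family of phases `φ i` and amplitudes `F i`, the improper integrals of `e^{i t φ} F`
exist for all frequencies `t ≥ 1` and are `O(t ^ (-M))`, uniformly in the family. -/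
def OscillatoryDecay (φ : ι → ℝ → ℝ) (M : ℕ) (F : ι → ℝ → ℂ) : Prop :=
  ∃ C : ℝ, ∀ i, ∀ t : ℝ, 1 ≤ t → ∃ L : ℂ,
    HasImproperIntegral (fun s => oscFactor (φ i) t s * F i s) L ∧ t ^ M * ‖L‖ ≤ C

namespace OscillatoryDecay

lemma mono {N : ℕ} (hF : OscillatoryDecay φ N F) (hMN : M ≤ N) : OscillatoryDecay φ M F := by
  obtain ⟨C, hC⟩ := hF
  refine ⟨C, fun i t ht => ?_⟩
  obtain ⟨L, hL, hLC⟩ := hC i t ht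
  exact ⟨L, hL, le_trans (by gcongr) hLC⟩

lemma add (hF : OscillatoryDecay φ M F) (hG : OscillatoryDecay φ M G) :
    OscillatoryDecay φ M fun i s => F i s + G i s := by
  obtain ⟨A, hA⟩ := hF
  obtain ⟨B, hB⟩ := hG
  refine ⟨A + B, fun i t ht => ?_⟩
  obtain ⟨K, hK, hKA⟩ := hA i t ht
  obtain ⟨L, hL, hLB⟩ := hB i t ht
  refine ⟨K + L, by simpa only [mul_add] using hK.add hL, ?_⟩
  calc t ^ M * ‖K + L‖ ≤ t ^ M * (‖K‖ + ‖L‖) := by gcongr; exact norm_add_le K L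
    _ ≤ A + B := by rw [mul_add]; exact add_le_add hKA hLB

lemma const_mul (c : ℂ) (hF : OscillatoryDecay φ M F) :
    OscillatoryDecay φ M fun i s => c * F i s := by
  obtain ⟨C, hC⟩ := hF
  refine ⟨‖c‖ * C, fun i t ht => ?_⟩
  obtain ⟨L, hL, hLC⟩ := hC i t ht
  refine ⟨c * L, by simpa only [smul_eq_mul, mul_left_comm c] using hL.const_smul c, ?_⟩
  calc t ^ M * ‖c * L‖ = ‖c‖ * (t ^ M * ‖L‖) := by rw [norm_mul]; ring
    _ ≤ ‖c‖ * C := by gcongr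

lemma zero_of_norm_le (hφ : ∀ i, Continuous (φ i)) (hF : ∀ i, AEStronglyMeasurable (F i))
    {g : ℝ → ℝ} (hg : Integrable g) (hFg : ∀ i s, ‖F i s‖ ≤ g s) : OscillatoryDecay φ 0 F := by
  refine ⟨∫ s, g s, fun i t _ => ?_⟩
  have hbound : ∀ s, ‖oscFactor (φ i) t s * F i s‖ ≤ g s := fun s => by
    rw [norm_mul, norm_oscFactor, one_mul]
    exact hFg i s
  have hint : Integrable fun s => oscFactor (φ i) t s * F i s :=
    hg.mono' ((continuous_oscFactor (hφ i) t).aestronglyMeasurable.mul (hF i)) (.of_forall hbound)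
  refine ⟨_, hasImproperIntegral_of_integrable hint, ?_⟩
  rw [pow_zero, one_mul]
  exact norm_integral_le_of_norm_le hg (.of_forall hbound)

theorem deriv_phase_mul {φ' : ι → ℝ → ℝ} {G' : ι → ℝ → ℂ}
    (hφ : ∀ i s, HasDerivAt (φ i) (φ' i s) s) (hφ' : ∀ i, Continuous (φ' i))
    (hG : ∀ i s, HasDerivAt (G i) (G' i s) s) (hG0 : ∀ i, Tendsto (G i) (cocompact ℝ) (𝓝 0))
    (hG' : OscillatoryDecay φ M G') :
    OscillatoryDecay φ (M + 1) fun i s => φ' i s * G i s := by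
  obtain ⟨C, hC⟩ := hG'
  refine ⟨C, fun i t ht => ?_⟩
  obtain ⟨L, hL, hLC⟩ := hC i t ht
  have ht0 : 0 < t := one_pos.trans_le ht
  refine ⟨_, hasImproperIntegral_oscFactor_mul_deriv (hφ i) (hφ' i) (hG i) (hG0 i) ht0.ne' hL, ?_⟩
  calc t ^ (M + 1) * ‖-(Complex.I * t)⁻¹ * L‖ = t ^ M * ‖L‖ := by
        rw [norm_mul, norm_neg, norm_inv, norm_mul, Complex.norm_I, one_mul,
          Complex.norm_of_nonneg ht0.le]
        field_simp
        ring
    _ ≤ C := hLC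

end OscillatoryDecay

end OscillatoryIntegral

section AiryPhase

/-- The phase of the Airy integral; its stationary points are the zeros of `s² + a`. -/
def airyPhase (a s : ℝ) : ℝ := s ^ 3 / 3 + a * s

lemma hasDerivAt_airyPhase (a s : ℝ) : HasDerivAt (airyPhase a) (s ^ 2 + a) s :=
  (((hasDerivAt_pow 3 s).div_const 3).add ((hasDerivAt_id s).const_mul a)).congr_deriv
    (by norm_num)

lemma continuous_airyPhase (a : ℝ) : Continuous (airyPhase a) := by
  unfold airyPhase
  fun_prop

/-- The amplitude `s ^ j (s² + a) ^ (-k) ψ(s)`, a function of order `j - 2 k` at infinity. For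
`k > 0` it is meaningful only when `s² + a` has no zeros on the support of `ψ`. -/
def airyAmplitude (a : ℝ) (j k : ℕ) (ψ : ℝ → ℂ) (s : ℝ) : ℂ :=
  (s ^ j / (s ^ 2 + a) ^ k : ℝ) * ψ s

variable {a s : ℝ} {ψ : ℝ → ℂ}

lemma airyAmplitude_zero (a : ℝ) (j : ℕ) (ψ : ℝ → ℂ) :
    airyAmplitude a j 0 ψ = fun s : ℝ => (s : ℂ) ^ j * ψ s := by
  ext s
  simp [airyAmplitude]

lemma airyAmplitude_of_notMem_tsupport (a : ℝ) (j k : ℕ) (hs : s ∉ tsupport ψ) :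
    airyAmplitude a j k ψ s = 0 := by
  rw [airyAmplitude, image_eq_zero_of_notMem_tsupport hs, mul_zero]

lemma sq_add_mul_airyAmplitude (ha : ∀ s ∈ tsupport ψ, s ^ 2 + a ≠ 0) (j k : ℕ) (s : ℝ) :
    ((s ^ 2 + a : ℝ) : ℂ) * airyAmplitude a j (k + 1) ψ s = airyAmplitude a j k ψ s := by
  by_cases hs : s ∈ tsupport ψ
  · rw [airyAmplitude, airyAmplitude, ← mul_assoc, ← Complex.ofReal_mul, ← mul_div_assoc,
      pow_succ' _ k, mul_div_mul_left _ _ (ha s hs)]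
  · rw [airyAmplitude_of_notMem_tsupport a j _ hs, airyAmplitude_of_notMem_tsupport a j k hs,
      mul_zero]

lemma hasDerivAt_pow_div_sq_add_pow (ha : s ^ 2 + a ≠ 0) (j k : ℕ) :
    HasDerivAt (fun x : ℝ => x ^ j / (x ^ 2 + a) ^ k)
      (j * (s ^ (j - 1) / (s ^ 2 + a) ^ k)
        - 2 * k * (s ^ (j + 1) / (s ^ 2 + a) ^ (k + 1))) s := by
  refine ((hasDerivAt_pow j s).div (((hasDerivAt_pow 2 s).add_const a).pow k)
    (pow_ne_zero k ha)).congr_deriv ?_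
  rcases k with _ | k
  · simp
  · simp only [Pi.pow_apply, Nat.add_sub_cancel]
    field_simp
    push_cast
    ring

lemma hasDerivAt_airyAmplitude (ha : ∀ s ∈ tsupport ψ, s ^ 2 + a ≠ 0) (hψ : Differentiable ℝ ψ)
    (j k : ℕ) (s : ℝ) :
    HasDerivAt (airyAmplitude a j k ψ)
      (j * airyAmplitude a (j - 1) k ψ s + -(2 * k) * airyAmplitude a (j + 1) (k + 1) ψ s
        + airyAmplitude a j k (deriv ψ) s) s := by
  by_cases hs : s ∈ tsupport ψ
  · refine ((hasDerivAt_pow_div_sq_add_pow (ha s hs) j k).ofReal_comp.mul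
      (hψ s).hasDerivAt).congr_deriv ?_
    simp only [airyAmplitude]
    push_cast
    ring
  · have hs' : s ∉ tsupport (deriv ψ) := fun h => hs (tsupport_deriv_subset h)
    have hzero : airyAmplitude a j k ψ =ᶠ[𝓝 s] fun _ => 0 := by
      filter_upwards [(isClosed_tsupport ψ).isOpen_compl.mem_nhds hs] with x hx
      exact airyAmplitude_of_notMem_tsupport a j k hx
    refine ((hasDerivAt_const s (0 : ℂ)).congr_of_eventuallyEq hzero).congr_deriv ?_
    simp only [airyAmplitude_of_notMem_tsupport a _ _ hs,
      airyAmplitude_of_notMem_tsupport a _ _ hs', mul_zero, add_zero]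

lemma continuous_airyAmplitude (ha : ∀ s ∈ tsupport ψ, s ^ 2 + a ≠ 0) (hψ : Differentiable ℝ ψ)
    (j k : ℕ) : Continuous (airyAmplitude a j k ψ) :=
  continuous_iff_continuousAt.2 fun s => (hasDerivAt_airyAmplitude ha hψ j k s).continuousAt

end AiryPhase

section Nonstationary

variable {ι : Type*} {a : ι → ℝ} {κ : ℝ} {ψ : ℝ → ℂ} {j k : ℕ}

/-- Uniformly over the parameters `a i`, the derivative `s² + a i` of the Airy phase is positive on
the support of `ψ`, and at least `κ (1 + s²)` there. -/
structure IsNonstationary (a : ι → ℝ) (κ : ℝ) (ψ : ℝ → ℂ) : Prop where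
  pos : 0 < κ
  le : ∀ i, ∀ s ∈ tsupport ψ, κ * (1 + s ^ 2) ≤ s ^ 2 + a i

namespace IsNonstationary

lemma deriv (h : IsNonstationary a κ ψ) : IsNonstationary a κ (deriv ψ) where
  pos := h.pos
  le i s hs := h.le i s (tsupport_deriv_subset hs)

lemma sq_add_ne_zero (h : IsNonstationary a κ ψ) (i : ι) : ∀ s ∈ tsupport ψ, s ^ 2 + a i ≠ 0 :=
  fun s hs => by
    have hκ := h.pos
    exact ((by positivity : 0 < κ * (1 + s ^ 2)).trans_le (h.le i s hs)).ne'

lemma norm_airyAmplitude_mul_le (h : IsNonstationary a κ ψ) {C : ℝ} (hC : ∀ s, ‖ψ s‖ ≤ C)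
    {p : ℕ} (hjk : j + p ≤ 2 * k) (i : ι) (s : ℝ) :
    ‖airyAmplitude (a i) j k ψ s‖ * √(1 + s ^ 2) ^ p ≤ C / κ ^ k := by
  have hκ : 0 < κ := h.pos
  have hC0 : 0 ≤ C := (norm_nonneg _).trans (hC s)
  by_cases hs : s ∈ tsupport ψ
  · set w := √(1 + s ^ 2)
    have hw_sq : w ^ 2 = 1 + s ^ 2 := Real.sq_sqrt (by positivity)
    have hw_one : 1 ≤ w := Real.one_le_sqrt.2 (by nlinarith)
    have hsw : |s| ≤ w := Real.abs_le_sqrt (by linarith)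
    have hphase : κ * w ^ 2 ≤ |s ^ 2 + a i| := by
      rw [hw_sq]
      exact (h.le i s hs).trans (le_abs_self _)
    calc ‖airyAmplitude (a i) j k ψ s‖ * w ^ p
        = |s| ^ j / |s ^ 2 + a i| ^ k * ‖ψ s‖ * w ^ p := by
          rw [airyAmplitude, norm_mul, Complex.norm_real, Real.norm_eq_abs, abs_div, abs_pow,
            abs_pow]
      _ ≤ w ^ j / (κ * w ^ 2) ^ k * C * w ^ p := by
          gcongr
          exact hC s
      _ = w ^ (j + p) / w ^ (2 * k) * (C / κ ^ k) := by
          rw [mul_pow, ← pow_mul, pow_add]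
          field_simp
      _ ≤ C / κ ^ k := by
          refine mul_le_of_le_one_left (by positivity) (div_le_one_of_le₀ ?_ (by positivity))
          exact pow_le_pow_right₀ hw_one hjk
  · rw [airyAmplitude_of_notMem_tsupport _ j k hs, norm_zero, zero_mul]
    positivity

lemma tendsto_airyAmplitude_zero (h : IsNonstationary a κ ψ) {C : ℝ} (hC : ∀ s, ‖ψ s‖ ≤ C)
    (hjk : j + 1 ≤ 2 * k) (i : ι) :
    Tendsto (airyAmplitude (a i) j k ψ) (cocompact ℝ) (𝓝 0) := by
  have hlim : Tendsto (fun s : ℝ => C / κ ^ k / ‖s‖) (cocompact ℝ) (𝓝 0) :=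
    (tendsto_norm_cocompact_atTop (E := ℝ)).const_div_atTop _
  refine squeeze_zero_norm' ?_ hlim
  filter_upwards [tendsto_norm_cocompact_atTop.eventually_gt_atTop 0] with s hs
  rw [le_div_iff₀ hs]
  calc ‖airyAmplitude (a i) j k ψ s‖ * ‖s‖
      ≤ ‖airyAmplitude (a i) j k ψ s‖ * √(1 + s ^ 2) ^ 1 := by
        rw [pow_one]
        gcongr
        exact Real.abs_le_sqrt (by linarith)
    _ ≤ C / κ ^ k := h.norm_airyAmplitude_mul_le hC hjk i s

lemma oscillatoryDecay_zero (h : IsNonstationary a κ ψ) (hψ : HasBoundedDerivs ψ)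
    (hjk : j + 2 ≤ 2 * k) :
    OscillatoryDecay (fun i => airyPhase (a i)) 0 fun i => airyAmplitude (a i) j k ψ := by
  obtain ⟨C, hC⟩ := hψ.exists_norm_le
  refine .zero_of_norm_le (fun i => continuous_airyPhase (a i))
    (fun i => (continuous_airyAmplitude (h.sq_add_ne_zero i) hψ.differentiable j
      k).aestronglyMeasurable)
    (integrable_inv_one_add_sq.const_mul (C / κ ^ k)) fun i s => ?_
  rw [← div_eq_mul_inv, le_div_iff₀ (by positivity)]
  simpa only [Real.sq_sqrt (by positivity : 0 ≤ 1 + s ^ 2)] using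
    h.norm_airyAmplitude_mul_le hC hjk i s

lemma oscillatoryDecay_succ {M : ℕ} (h : IsNonstationary a κ ψ) (hψ : HasBoundedDerivs ψ)
    (hjk : j ≤ 2 * k + 1)
    (h₁ : OscillatoryDecay (fun i => airyPhase (a i)) M
      fun i => airyAmplitude (a i) (j - 1) (k + 1) ψ)
    (h₂ : OscillatoryDecay (fun i => airyPhase (a i)) M
      fun i => airyAmplitude (a i) (j + 1) (k + 2) ψ)
    (h₃ : OscillatoryDecay (fun i => airyPhase (a i)) M
      fun i => airyAmplitude (a i) j (k + 1) (_root_.deriv ψ)) :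
    OscillatoryDecay (fun i => airyPhase (a i)) (M + 1) fun i => airyAmplitude (a i) j k ψ := by
  obtain ⟨C, hC⟩ := hψ.exists_norm_le
  have hparts := OscillatoryDecay.deriv_phase_mul (fun i => hasDerivAt_airyPhase (a i))
    (fun i => by fun_prop)
    (fun i => hasDerivAt_airyAmplitude (h.sq_add_ne_zero i) hψ.differentiable j (k + 1))
    (h.tendsto_airyAmplitude_zero hC (by omega))
    (((h₁.const_mul _).add (h₂.const_mul _)).add h₃)
  simpa only [sq_add_mul_airyAmplitude (h.sq_add_ne_zero _)] using hparts

theorem oscillatoryDecay (M : ℕ) (h : IsNonstationary a κ ψ) (hψ : HasBoundedDerivs ψ)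
    (hjk : j ≤ 2 * k + 1) :
    OscillatoryDecay (fun i => airyPhase (a i)) M fun i => airyAmplitude (a i) j k ψ := by
  -- Each step gains one power of `t` and lowers the order `j - 2 k` by two; starting from order at
  -- most one, the amplitude is integrable after the second step.
  suffices hgain : ∀ m, ∀ {ψ : ℝ → ℂ}, IsNonstationary a κ ψ → HasBoundedDerivs ψ → ∀ {j k : ℕ},
      j ≤ 2 * k + 1 → j + 2 ≤ 2 * (k + m) →
      OscillatoryDecay (fun i => airyPhase (a i)) m fun i => airyAmplitude (a i) j k ψ from
    (hgain (M + 2) h hψ hjk (by omega)).mono (by omega)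
  intro m
  induction m with
  | zero => exact fun h hψ _ _ _ hm => h.oscillatoryDecay_zero hψ (by omega)
  | succ m ih =>
    exact fun h hψ _ _ hjk hm => h.oscillatoryDecay_succ hψ hjk (ih h hψ (by omega) (by omega))
      (ih h hψ (by omega) (by omega)) (ih h.deriv hψ.deriv (by omega) (by omega))

end IsNonstationary

end Nonstationary

section Vanishing

variable {ψ : ℝ → ℂ} {b d : ℝ} {j : ℕ}

lemma exists_mul_one_add_sq_le (hd : 0 ≤ d) (hbd : -d ^ 2 < b) :
    ∃ κ > 0, ∀ a ≥ b, ∀ s : ℝ, d ≤ |s| → κ * (1 + s ^ 2) ≤ s ^ 2 + a := by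
  -- `(u + b) / (1 + u)` is monotone in `u = s² ≥ d²` and tends to `1`, so its infimum is the
  -- smaller of `1` and its value at `d²`.
  refine ⟨min 1 ((d ^ 2 + b) / (1 + d ^ 2)), lt_min one_pos (div_pos (by linarith) (by positivity)),
    fun a ha s hs => ?_⟩
  have hds : d ^ 2 ≤ s ^ 2 := sq_le_sq.2 (by rwa [abs_of_nonneg hd])
  set κ := min 1 ((d ^ 2 + b) / (1 + d ^ 2))
  have hκ_one : κ ≤ 1 := min_le_left _ _
  have hκ_d : κ * (1 + d ^ 2) ≤ d ^ 2 + b :=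
    (le_div_iff₀ (by positivity)).1 (min_le_right _ _)
  calc κ * (1 + s ^ 2) = κ * (1 + d ^ 2) + κ * (s ^ 2 - d ^ 2) := by ring
    _ ≤ (d ^ 2 + b) + 1 * (s ^ 2 - d ^ 2) := by gcongr
    _ ≤ s ^ 2 + a := by linarith

lemma le_abs_of_mem_tsupport (hψ0 : ∀ s, |s| < d → ψ s = 0) {s : ℝ} (hs : s ∈ tsupport ψ) :
    d ≤ |s| :=
  have hsupp : Function.support ψ ⊆ {s | d ≤ |s|} := fun x hx => not_lt.1 fun h => hx (hψ0 x h)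
  closure_minimal hsupp (isClosed_le continuous_const continuous_abs) hs

theorem oscillatoryDecay_pow_mul {ι : Type*} {a : ι → ℝ} (hd : 0 ≤ d) (hbd : -d ^ 2 < b)
    (ha : ∀ i, b ≤ a i) (hψ : HasBoundedDerivs ψ) (hψ0 : ∀ s, |s| < d → ψ s = 0) (hj : j ≤ 1)
    (M : ℕ) :
    OscillatoryDecay (fun i => airyPhase (a i)) M fun _ s => (s : ℂ) ^ j * ψ s := by
  obtain ⟨κ, hκ, hle⟩ := exists_mul_one_add_sq_le hd hbd
  have h : IsNonstationary a κ ψ :=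
    ⟨hκ, fun i s hs => hle (a i) (ha i) s (le_abs_of_mem_tsupport hψ0 hs)⟩
  simpa only [airyAmplitude_zero] using h.oscillatoryDecay (j := j) (k := 0) M hψ (by omega)

theorem exists_hasImproperIntegral_pow_mul (a : ℝ) {t : ℝ} (ht : 1 ≤ t) (hψ : HasBoundedDerivs ψ)
    (hj : j ≤ 1) :
    ∃ L : ℂ,
      HasImproperIntegral (fun s => oscFactor (airyPhase a) t s * ((s : ℂ) ^ j * ψ s)) L := by
  let χ : ContDiffBump (0 : ℝ) := ⟨1 + |a|, 2 + |a|, by positivity, by linarith⟩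
  have hχ : HasBoundedDerivs χ :=
    hasBoundedDerivs_of_hasCompactSupport χ.contDiff χ.hasCompactSupport
  have hfar0 : ∀ s, |s| < 1 + |a| → (1 - χ s) • ψ s = 0 := fun s hs => by
    rw [χ.one_of_mem_closedBall (by simpa using hs.le), sub_self, zero_smul]
  have ha : -(1 + |a|) ^ 2 < a := by nlinarith [abs_nonneg a, neg_abs_le a]
  obtain ⟨C, hC⟩ := oscillatoryDecay_pow_mul (a := fun _ : Unit => a) (by positivity) ha
    (fun _ => le_rfl) ((hχ.const_sub 1).smul hψ) hfar0 hj 0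
  obtain ⟨L, hfar, -⟩ := hC () t ht
  have hnear : Integrable fun s : ℝ =>
      oscFactor (airyPhase a) t s * ((s : ℂ) ^ j * (χ s • ψ s)) := by
    have hosc := continuous_oscFactor (continuous_airyPhase a) t
    have hψc := hψ.contDiff.continuous
    have hχc := hχ.contDiff.continuous
    refine Continuous.integrable_of_hasCompactSupport (by fun_prop) ?_
    exact (χ.hasCompactSupport.smul_right (f' := ψ)).mul_left.mul_left
  refine ⟨L + ∫ s : ℝ, oscFactor (airyPhase a) t s * ((s : ℂ) ^ j * (χ s • ψ s)), ?_⟩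
  convert hfar.add (hasImproperIntegral_of_integrable hnear) using 2 with s
  simp only [Complex.real_smul]
  push_cast
  ring

theorem exists_hasImproperIntegral_isBigO {a : ℕ → ℝ} (hd : 0 ≤ d) (hbd : -d ^ 2 < b)
    (ha : ∀ᶠ n in atTop, b ≤ a n) (hψ : HasBoundedDerivs ψ) (hψ0 : ∀ s, |s| < d → ψ s = 0)
    (hj : j ≤ 1) :
    ∃ L : ℕ → ℂ,
      (∀ n : ℕ, 1 ≤ n → HasImproperIntegral
        (fun s => oscFactor (airyPhase (a n)) n s * ((s : ℂ) ^ j * ψ s)) (L n)) ∧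
      ∀ N : ℝ, L =O[atTop] fun n : ℕ => (n : ℝ) ^ (-N) := by
  choose! L hL using fun (n : ℕ) (hn : 1 ≤ n) =>
    exists_hasImproperIntegral_pow_mul (a n) (Nat.one_le_cast.2 hn) hψ hj
  refine ⟨L, hL, fun N => ?_⟩
  obtain ⟨C, hC⟩ := oscillatoryDecay_pow_mul (a := fun n : {n // b ≤ a n} => a n) hd hbd
    (fun n => n.2) hψ hψ0 hj ⌈N⌉₊
  refine IsBigO.of_bound C ?_
  filter_upwards [ha, eventually_ge_atTop 1] with n hbn hn
  have hn1 : (1 : ℝ) ≤ n := Nat.one_le_cast.2 hn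
  have hn0 : (0 : ℝ) < n := one_pos.trans_le hn1
  obtain ⟨K, hK, hKC⟩ := hC ⟨n, hbn⟩ n hn1
  rw [(hL n hn).unique hK, Real.norm_of_nonneg (by positivity), Real.rpow_neg hn0.le,
    ← div_eq_mul_inv, le_div_iff₀' (by positivity)]
  calc (n : ℝ) ^ N * ‖K‖ ≤ (n : ℝ) ^ ⌈N⌉₊ * ‖K‖ := by
        rw [← Real.rpow_natCast]
        gcongr
        exact Nat.le_ceil N
    _ ≤ C := hKC

end Vanishing

theorem stmt14_general (a : ℕ → ℝ) (b d : ℝ) (hd : 0 ≤ d) (hbd : -d ^ 2 < b)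
    (ha : ∀ᶠ n in atTop, b ≤ a n) (ψ : ℝ → ℂ) (hψ : HasBoundedDerivs ψ)
    (hψ0 : ∀ s, |s| < d → ψ s = 0) :
    ∃ L₁ L₂ : ℕ → ℂ,
      (∀ n : ℕ, 1 ≤ n →
        HasImproperIntegral (fun s : ℝ =>
          Complex.exp (Complex.I * (n : ℂ) * ((s : ℂ) ^ 3 / 3 + (a n : ℂ) * (s : ℂ))) * ψ s)
          (L₁ n) ∧
        HasImproperIntegral (fun s : ℝ =>
          Complex.exp (Complex.I * (n : ℂ) * ((s : ℂ) ^ 3 / 3 + (a n : ℂ) * (s : ℂ))) *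
            (s : ℂ) * ψ s)
          (L₂ n)) ∧
      ∀ N : ℝ,
        (L₁ =O[atTop] fun n : ℕ => (n : ℝ) ^ (-N)) ∧
        (L₂ =O[atTop] fun n : ℕ => (n : ℝ) ^ (-N)) := by
  obtain ⟨L₁, hL₁, hO₁⟩ :=
    exists_hasImproperIntegral_isBigO hd hbd ha hψ hψ0 (Nat.zero_le 1)
  obtain ⟨L₂, hL₂, hO₂⟩ := exists_hasImproperIntegral_isBigO hd hbd ha hψ hψ0 (le_refl 1)
  refine ⟨L₁, L₂, fun n hn => ⟨?_, ?_⟩, fun N => ⟨hO₁ N, hO₂ N⟩⟩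
  · simpa [oscFactor, airyPhase] using hL₁ n hn
  · simpa [oscFactor, airyPhase, mul_assoc] using hL₂ n hn

/-- Lemma `error1`: let `a_n → 0`, and let `χ` be a smooth cutoff with
`χ = 1` on `{|s| ≤ δ + ε}` and `χ = 0` on `{|s| ≥ c − ε}` (`0 < δ < c`, `δ < 1`,
`δ + ε < c − ε`, `ε > 0`). Then the improper oscillatory integrals
`∫ e^{in(s³/3 + a_n s)}(1 − χ(s)) ds` and `∫ e^{in(s³/3 + a_n s)} s (1 − χ(s)) ds`
(limits of `∫_{−R}^{R}` as `R → ∞`) exist for `n ≥ 1` and are `O(n^{−N})` for every `N > 0`. -/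
theorem stmt14 (aseq : ℕ → ℝ) (ha : Tendsto aseq atTop (𝓝 0))
    (c δ ε : ℝ) (hδ0 : 0 < δ) (hδc : δ < c) (hδ1 : δ < 1) (hε : 0 < ε)
    (hsep : δ + ε < c - ε)
    (χ : ℝ → ℝ) (hχ : ContDiff ℝ (⊤ : ℕ∞) χ)
    (hχ1 : ∀ s : ℝ, |s| ≤ δ + ε → χ s = 1)
    (hχ0 : ∀ s : ℝ, c - ε ≤ |s| → χ s = 0) :
    ∃ L₁ L₂ : ℕ → ℂ,
      (∀ n : ℕ, 1 ≤ n →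
        Tendsto (fun R : ℝ => ∫ s in (-R)..R,
            Complex.exp (Complex.I * (n : ℂ) * ((s : ℂ) ^ 3 / 3 + (aseq n : ℂ) * (s : ℂ))) *
              ((1 - χ s : ℝ) : ℂ))
          atTop (𝓝 (L₁ n)) ∧
        Tendsto (fun R : ℝ => ∫ s in (-R)..R,
            Complex.exp (Complex.I * (n : ℂ) * ((s : ℂ) ^ 3 / 3 + (aseq n : ℂ) * (s : ℂ))) *
              (s : ℂ) * ((1 - χ s : ℝ) : ℂ))
          atTop (𝓝 (L₂ n))) ∧
      ∀ N : ℝ, 0 < N →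
        (L₁ =O[atTop] fun n : ℕ => (n : ℝ) ^ (-N)) ∧
        (L₂ =O[atTop] fun n : ℕ => (n : ℝ) ^ (-N)) := by
  obtain ⟨L₁, L₂, hL, hO⟩ := stmt14_general aseq (-δ ^ 2) (δ + ε) (by positivity)
    (by nlinarith) (ha.eventually_const_le (by nlinarith)) (fun s => ((1 - χ s : ℝ) : ℂ))
    (hasBoundedDerivs_one_sub hχ hχ0) (fun s hs => by simp [hχ1 s hs.le])
  exact ⟨L₁, L₂, fun n hn => (hL n hn).imp (·.tendsto_symmetric) (·.tendsto_symmetric),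
    fun N _ => hO N⟩
end
end

section
/- Let ξ ∈ ℝ satisfy |a| < |ξ| < 1 and suppose a sequence of integers {y_n} satisfies y_n = nξ + O(1) as n → ∞. Then for every ψ ∈ ℂ² with ‖ψ‖ = 1 there is a smooth function F_ψ on {η : |a| < |η| < 1} (independent of n) such that, writing ξ_n = y_n/n, ⟨Uⁿ(δ₀ ⊗ φ), δ_{y_n} ⊗ ψ⟩_{ℓ²} = (1 + (−1)^{n+y_n}) ω^{−y_n} (e^{−n H_Q(ξ_n)/2} / √(2πn)) · √(|b| / ((1 − ξ²)√(ξ² − |a|²))) · e^{πi(n − |y_n|)/2} (F_ψ(ξ) + O(1/n)) as n → ∞. -/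
/-!
By Fourier inversion the amplitude is a Cauchy integral over any circle `|w| = e^σ`. On such a
circle the `n`-th power of the symbol satisfies, up to phases, the recurrence
`k (n + 2) = 2 r sinh z * k (n + 1) + k n` with `r = |a|`, so it behaves like
`exp (n ν(z))` with `sinh ν(z) = r sinh z`. For `r < ξ < 1` the phase `ν(z) - ξ z` has a critical
point on the real axis; the circle through it is the path of steepest descent, on which `Re ν(z)`
is maximal only at the saddle point (and at its antipode, which contributes the factor
`1 + (-1)^(n+y)`), and Laplace's method applies. The rate function `H_Q / 2` is the Legendre
transform of `ν`, hence has derivative `σ` at `ξ`: replacing `n ξ` by `y_n = n ξ + O(1)` in the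
exponent therefore only costs `O(1/n)`.
-/

open Filter Topology Asymptotics MeasureTheory

noncomputable section

/-- One step of the (column-decomposition) quantum walk `U` on functions `ℤ → ℂ²`:
`(Uf)(x) = P f(x+1) + Q f(x-1)` with `P = [[a,0],[-conj b,0]]`, `Q = [[0,b],[0,conj a]]`. -/
def qwStep (a b : ℂ) (f : ℤ → ℂ × ℂ) : ℤ → ℂ × ℂ := fun x =>
  (a * (f (x + 1)).1 + b * (f (x - 1)).2,
   -(starRingEnd ℂ) b * (f (x + 1)).1 + (starRingEnd ℂ) a * (f (x - 1)).2)

/-- `δ₀ ⊗ φ : ℤ → ℂ²`. -/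
def qwDelta (φ : ℂ × ℂ) : ℤ → ℂ × ℂ := fun x => if x = 0 then φ else 0

/-- Squared norm of a vector in `ℂ²`. -/
def nsq (u : ℂ × ℂ) : ℝ := ‖u.1‖ ^ 2 + ‖u.2‖ ^ 2

/-- Transition probability `p_n(φ; y) = ‖(Uⁿ(δ₀ ⊗ φ))(y)‖²`. -/
def qwP (a b : ℂ) (φ : ℂ × ℂ) (n : ℕ) (y : ℤ) : ℝ :=
  nsq (((qwStep a b)^[n] (qwDelta φ)) y)

/-- `λ_A(φ) = |φ₂|² − |φ₁|² + (1/|a|²)(ab conj(φ₁)φ₂ + conj(ab) φ₁ conj(φ₂))` (a real number). -/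
def lamA (a b : ℂ) (φ : ℂ × ℂ) : ℝ :=
  ‖φ.2‖ ^ 2 - ‖φ.1‖ ^ 2 +
    (a * b * (starRingEnd ℂ) φ.1 * φ.2 +
      (starRingEnd ℂ) a * (starRingEnd ℂ) b * φ.1 * (starRingEnd ℂ) φ.2).re / ‖a‖ ^ 2

/-- `μ(t) = arccos(|a| cos t)`. -/
def muF (a : ℂ) (t : ℝ) : ℝ := Real.arccos (‖a‖ * Real.cos t)

/-- `t(η) = arcsin(|b|η/(|a|√(1 − η²)))`. -/
def tF (a b : ℂ) (η : ℝ) : ℝ := Real.arcsin (‖b‖ * η / (‖a‖ * Real.sqrt (1 - η ^ 2)))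

/-- `θ(η) = 2μ(t(η)) − 2η t(η)`. -/
def thetaF (a b : ℂ) (η : ℝ) : ℝ := 2 * muF a (tF a b η) - 2 * η * tF a b η

/-- The standard inner product on `ℂ²`, conjugate-linear in the second argument
(the convention of the paper): `⟨u, v⟩ = u₁ conj(v₁) + u₂ conj(v₂)`. -/
def innC (u v : ℂ × ℂ) : ℂ :=
  u.1 * (starRingEnd ℂ) v.1 + u.2 * (starRingEnd ℂ) v.2

/-- The rate function `H_Q(ξ)` on `|a| < |ξ| < 1`. -/
def HQ (a b : ℂ) (ξ : ℝ) : ℝ :=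
  2 * |ξ| * Real.log (‖b‖ * |ξ| + Real.sqrt (ξ ^ 2 - ‖a‖ ^ 2)) -
    2 * Real.log (‖b‖ + Real.sqrt (ξ ^ 2 - ‖a‖ ^ 2)) +
    (1 - |ξ|) * Real.log (1 - ξ ^ 2) - 2 * |ξ| * Real.log ‖a‖

/-! ### Laplace's method -/

section Laplace

/-- The Gaussian `exp (-b n x²)` as a function of `(n, x)`, so that estimates uniform in `x` are
`IsBigO` statements along product filters on `ℕ × ℝ`. -/
def scaledGaussian (b : ℝ) (p : ℕ × ℝ) : ℝ := Real.exp (-(b * p.1) * p.2 ^ 2)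

/-- The first-order integrand of Laplace's method at a critical point of a phase with quadratic
coefficient `-κ / 2` and cubic coefficient `c`, for an amplitude `g₀ + d n * x`. -/
def laplaceModel (κ : ℝ) (c g₀ : ℂ) (d : ℕ → ℂ) (p : ℕ × ℝ) : ℂ :=
  (g₀ + (d p.1 * p.2 + g₀ * (p.1 * (c * p.2 ^ 3)))) * scaledGaussian (κ / 2) p

lemma scaledGaussian_pos (b : ℝ) (p : ℕ × ℝ) : 0 < scaledGaussian b p := Real.exp_pos _

lemma continuous_scaledGaussian (b : ℝ) (n : ℕ) : Continuous fun x => scaledGaussian b (n, x) := by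
  unfold scaledGaussian
  fun_prop

lemma integrable_scaledGaussian {b : ℝ} (hb : 0 < b) {n : ℕ} (hn : 0 < n) :
    Integrable fun x => scaledGaussian b (n, x) :=
  integrable_exp_neg_mul_sq (b := b * n) (by positivity)

lemma integral_scaledGaussian (b : ℝ) (n : ℕ) :
    ∫ x, scaledGaussian b (n, x) = √(Real.pi / (b * n)) :=
  integral_gaussian (b * n)

lemma isBigO_pow_mul_pow_scaledGaussian {b₁ b₂ : ℝ} (hb : b₂ < b₁) (j : ℕ) :
    (fun p : ℕ × ℝ => (p.1 : ℝ) ^ j * p.2 ^ (2 * (j + 1)) * scaledGaussian b₁ p)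
      =O[atTop ×ˢ ⊤] fun p => (p.1 : ℝ)⁻¹ * scaledGaussian b₂ p := by
  have hc : 0 < b₁ - b₂ := sub_pos.2 hb
  refine IsBigO.of_bound ((j + 1).factorial / (b₁ - b₂) ^ (j + 1)) ?_
  filter_upwards [tendsto_fst.eventually (eventually_gt_atTop 0)] with ⟨n, x⟩ hn
  replace hn : (0 : ℝ) < n := Nat.cast_pos.2 hn
  have hexp := Real.pow_div_factorial_le_exp ((b₁ - b₂) * (n * x ^ 2)) (by positivity) (j + 1)
  rw [div_le_iff₀ (by positivity), mul_pow] at hexp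
  have hgauss : scaledGaussian b₂ (n, x) =
      Real.exp ((b₁ - b₂) * (n * x ^ 2)) * scaledGaussian b₁ (n, x) := by
    rw [scaledGaussian, scaledGaussian, ← Real.exp_add]
    ring_nf
  have hpow : (n : ℝ) ^ j * x ^ (2 * (j + 1)) = (n : ℝ)⁻¹ * (n * x ^ 2) ^ (j + 1) := by
    rw [mul_pow, ← pow_mul, pow_succ]
    field_simp
  have hG := scaledGaussian_pos b₁ (n, x)
  rw [hgauss, hpow, Real.norm_of_nonneg (by positivity), Real.norm_of_nonneg (by positivity)]
  calc (n : ℝ)⁻¹ * (n * x ^ 2) ^ (j + 1) * scaledGaussian b₁ (n, x)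
      = (n : ℝ)⁻¹ * ((b₁ - b₂) ^ (j + 1) * (n * x ^ 2) ^ (j + 1)) / (b₁ - b₂) ^ (j + 1) *
          scaledGaussian b₁ (n, x) := by field_simp
    _ ≤ (n : ℝ)⁻¹ * (Real.exp ((b₁ - b₂) * (n * x ^ 2)) * (j + 1).factorial) /
          (b₁ - b₂) ^ (j + 1) * scaledGaussian b₁ (n, x) := by gcongr
    _ = _ := by ring

lemma isBigO_mul_scaledGaussian {f g : ℕ × ℝ → ℂ} {l : Filter (ℕ × ℝ)} (hl : l ≤ atTop ×ˢ ⊤)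
    {b₁ b₂ : ℝ} (hb : b₂ < b₁) (j : ℕ)
    (hf : f =O[l] fun p => (p.1 : ℝ) ^ j * p.2 ^ (2 * (j + 1)))
    (hg : g =O[l] scaledGaussian b₁) :
    (fun p => f p * g p) =O[l] fun p => (p.1 : ℝ)⁻¹ * scaledGaussian b₂ p :=
  (hf.mul hg).trans ((isBigO_pow_mul_pow_scaledGaussian hb j).mono hl)

lemma isBigO_ofReal_scaledGaussian (b : ℝ) (l : Filter (ℕ × ℝ)) :
    (fun p => (scaledGaussian b p : ℂ)) =O[l] scaledGaussian b :=
  Complex.isBigO_ofReal_left.2 (isBigO_refl (scaledGaussian b) l)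

lemma isBigO_natCast_fst (l : Filter (ℕ × ℝ)) :
    (fun p : ℕ × ℝ => (p.1 : ℂ)) =O[l] fun p => (p.1 : ℝ) :=
  isBigO_of_le _ fun p => by simp

lemma norm_exp_sub_one_sub_self_le (z : ℂ) :
    ‖Complex.exp z - 1 - z‖ ≤ ‖z‖ ^ 2 * Real.exp ‖z‖ := by
  simpa [Finset.sum_range_succ, sub_sub] using Complex.norm_exp_sub_sum_le_norm_mul_exp z 2

lemma isBigO_exp_sub_one_sub_mul_scaledGaussian {κ : ℝ} (hκ : 0 < κ) {u : ℝ → ℂ}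
    (hu : u =O[𝓝 0] fun x => x ^ 3) :
    (fun p : ℕ × ℝ => (Complex.exp (p.1 * u p.2) - 1 - p.1 * u p.2) * scaledGaussian (κ / 2) p)
      =O[atTop ×ˢ 𝓝 0] fun p => (p.1 : ℝ)⁻¹ * scaledGaussian (κ / 8) p := by
  have hsmall : ∀ᶠ x in 𝓝 (0 : ℝ), ‖u x‖ ≤ κ / 4 * x ^ 2 := by
    have h : u =o[𝓝 0] fun x : ℝ => x ^ 2 := hu.trans_isLittleO (isLittleO_pow_pow (by norm_num))
    filter_upwards [h.bound (by positivity : 0 < κ / 4)] with x hx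
    simpa using hx
  have hsq : (fun p : ℕ × ℝ => (p.1 * u p.2) ^ 2) =O[atTop ×ˢ 𝓝 0]
      fun p => (p.1 : ℝ) ^ 2 * p.2 ^ (2 * (2 + 1)) := by
    refine (((isBigO_natCast_fst _).mul
      (hu.comp_tendsto tendsto_snd)).pow 2).congr_right fun p => ?_
    simp only [Function.comp_apply]
    ring
  have hexp : (fun p : ℕ × ℝ => ((Real.exp ‖p.1 * u p.2‖ : ℂ) * scaledGaussian (κ / 2) p))
      =O[atTop ×ˢ 𝓝 0] scaledGaussian (κ / 4) := by
    refine IsBigO.of_bound 1 ?_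
    filter_upwards [tendsto_snd.eventually hsmall] with ⟨n, x⟩ hx
    rw [norm_mul, Complex.norm_real, Complex.norm_real, Real.norm_of_nonneg (Real.exp_pos _).le,
      Real.norm_of_nonneg (scaledGaussian_pos _ _).le,
      Real.norm_of_nonneg (scaledGaussian_pos _ _).le, scaledGaussian, scaledGaussian,
      ← Real.exp_add, one_mul, Real.exp_le_exp, norm_mul, Complex.norm_natCast]
    have := mul_le_mul_of_nonneg_left hx (Nat.cast_nonneg (α := ℝ) n)
    linarith
  refine (isBigO_of_le _ fun p => ?_).trans
    (isBigO_mul_scaledGaussian (prod_mono le_rfl le_top) (by linarith) 2 hsq hexp)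
  simp only [norm_mul, norm_pow, Complex.norm_real, Real.norm_eq_abs, Real.abs_exp]
  rw [← mul_assoc]
  gcongr
  simpa using norm_exp_sub_one_sub_self_le (p.1 * u p.2)

lemma exp_mul_phase_eq (κ : ℝ) (f : ℝ → ℂ) (p : ℕ × ℝ) :
    Complex.exp (p.1 * f p.2) =
      Complex.exp (p.1 * (f p.2 + κ / 2 * p.2 ^ 2)) * scaledGaussian (κ / 2) p := by
  rw [scaledGaussian, Complex.ofReal_exp, ← Complex.exp_add]
  push_cast
  ring_nf

lemma isBigO_amplitude_sub_const {h : ℕ → ℝ → ℂ} {g₀ : ℂ} {d : ℕ → ℂ}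
    (hd : d =O[atTop] fun _ => (1 : ℝ))
    (hh : (fun p : ℕ × ℝ => h p.1 p.2 - g₀ - d p.1 * p.2) =O[atTop ×ˢ 𝓝 0] fun p => p.2 ^ 2) :
    (fun p : ℕ × ℝ => h p.1 p.2 - g₀) =O[atTop ×ˢ 𝓝 0] fun p => p.2 := by
  have hx : (fun p : ℕ × ℝ => (p.2 : ℂ)) =O[atTop ×ˢ 𝓝 0] fun p => p.2 :=
    isBigO_of_le _ fun p => by simp
  have hdx : (fun p : ℕ × ℝ => d p.1 * p.2) =O[atTop ×ˢ 𝓝 0] fun p => p.2 := by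
    simpa using (hd.comp_tendsto tendsto_fst).mul hx
  have hpow : (fun p : ℕ × ℝ => p.2 ^ 2) =O[atTop ×ˢ 𝓝 0] fun p => p.2 := by
    simpa [Function.comp_def] using (isLittleO_pow_pow one_lt_two).isBigO.comp_tendsto
      (tendsto_snd : Tendsto Prod.snd ((atTop : Filter ℕ) ×ˢ 𝓝 (0 : ℝ)) _)
  exact ((hh.trans hpow).add hdx).congr_left fun p => by ring

/-- The two odd terms of the model are larger than the error bound, but they integrate to `0`. -/
lemma isBigO_sub_laplaceModel_nhds {κ : ℝ} (hκ : 0 < κ) {f : ℝ → ℂ} {h : ℕ → ℝ → ℂ} {c g₀ : ℂ}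
    {d : ℕ → ℂ} (hf : (fun x : ℝ => f x + κ / 2 * x ^ 2 - c * x ^ 3) =O[𝓝 0] fun x => x ^ 4)
    (hd : d =O[atTop] fun _ => (1 : ℝ))
    (hh : (fun p : ℕ × ℝ => h p.1 p.2 - g₀ - d p.1 * p.2) =O[atTop ×ˢ 𝓝 0] fun p => p.2 ^ 2) :
    (fun p : ℕ × ℝ => h p.1 p.2 * Complex.exp (p.1 * f p.2) - laplaceModel κ c g₀ d p)
      =O[atTop ×ˢ 𝓝 0] fun p => (p.1 : ℝ)⁻¹ * scaledGaussian (κ / 8) p := by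
  set l : Filter (ℕ × ℝ) := atTop ×ˢ 𝓝 0
  have hl : l ≤ atTop ×ˢ ⊤ := prod_mono le_rfl le_top
  have hsnd : Tendsto Prod.snd l (𝓝 (0 : ℝ)) := tendsto_snd
  set u : ℝ → ℂ := fun x => f x + κ / 2 * x ^ 2
  have hu : u =O[𝓝 0] fun x => x ^ 3 := by
    have hcube : (fun x : ℝ => c * (x : ℂ) ^ 3) =O[𝓝 0] fun x => x ^ 3 :=
      (isBigO_of_le _ fun x => by simp).const_mul_left c
    exact ((hf.trans (isLittleO_pow_pow (by norm_num)).isBigO).add hcube).congr_left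
      fun x => sub_add_cancel _ _
  have hhx := isBigO_amplitude_sub_const hd hh
  have hh1 : (fun p : ℕ × ℝ => h p.1 p.2) =O[l] fun _ => (1 : ℝ) := by
    have h1 : (fun p : ℕ × ℝ => p.2) =O[l] fun _ => (1 : ℝ) := hsnd.isBigO_one ℝ
    exact ((hhx.trans h1).add (isBigO_const_const g₀ one_ne_zero _)).congr_left fun p => by ring
  have hexp := hh1.mul (isBigO_exp_sub_one_sub_mul_scaledGaussian hκ hu)
  have hlin : (fun p : ℕ × ℝ => (h p.1 p.2 - g₀) * (p.1 * u p.2) +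
      g₀ * (p.1 * (u p.2 - c * p.2 ^ 3))) =O[l] fun p => (p.1 : ℝ) ^ 1 * p.2 ^ (2 * (1 + 1)) :=
    ((hhx.mul ((isBigO_natCast_fst l).mul (hu.comp_tendsto hsnd))).congr_right fun p => by
        simp only [Function.comp_apply]; ring).add
      ((((isBigO_natCast_fst l).mul (hf.comp_tendsto hsnd)).const_mul_left g₀).congr_right
        fun p => by simp only [Function.comp_apply]; ring)
  have hG := isBigO_ofReal_scaledGaussian (κ / 2) l
  have hquad := isBigO_mul_scaledGaussian (b₂ := κ / 8) hl (by linarith) 0 (by simpa using hh) hG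
  refine (((hexp.congr_right fun p => one_mul _).add
    (isBigO_mul_scaledGaussian hl (by linarith) 1 hlin hG)).add hquad).congr_left fun p => ?_
  have hsplit : Complex.exp (p.1 * f p.2) = Complex.exp (p.1 * u p.2) * _ := exp_mul_phase_eq κ f p
  rw [hsplit, laplaceModel]
  ring

lemma isBigO_laplaceModel_far {κ δ : ℝ} (hκ : 0 < κ) (hδ : 0 < δ) (c g₀ : ℂ) {d : ℕ → ℂ}
    (hd : d =O[atTop] fun _ => (1 : ℝ)) :
    laplaceModel κ c g₀ d =O[atTop ×ˢ 𝓟 {x | δ ≤ |x|}]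
      fun p => (p.1 : ℝ)⁻¹ * scaledGaussian (κ / 8) p := by
  set l : Filter (ℕ × ℝ) := atTop ×ˢ 𝓟 {x | δ ≤ |x|}
  have hl : l ≤ atTop ×ˢ ⊤ := prod_mono le_rfl le_top
  have hpow {i j : ℕ} (hij : i ≤ j) : (fun p : ℕ × ℝ => (p.2 : ℂ) ^ i) =O[l] fun p => p.2 ^ j := by
    refine IsBigO.of_bound (δ ^ (j - i))⁻¹ ?_
    filter_upwards [tendsto_snd.eventually (mem_principal_self _)] with p hp
    rw [inv_mul_eq_div, le_div_iff₀ (by positivity), norm_pow, norm_pow, Complex.norm_real]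
    calc ‖p.2‖ ^ i * δ ^ (j - i) ≤ ‖p.2‖ ^ i * ‖p.2‖ ^ (j - i) := by gcongr; exact hp
      _ = ‖p.2‖ ^ j := by rw [← pow_add, Nat.add_sub_cancel' hij]
  have hd' : (fun p : ℕ × ℝ => d p.1) =O[l] fun _ => (1 : ℝ) := hd.comp_tendsto tendsto_fst
  have hlin : (fun p : ℕ × ℝ => g₀ + d p.1 * p.2) =O[l]
      fun p => (p.1 : ℝ) ^ 0 * p.2 ^ (2 * (0 + 1)) := by
    simpa using ((hpow zero_le_two).const_mul_left g₀).add
      ((hd'.mul (hpow one_le_two)).congr (fun p => by rw [pow_one]) fun p => one_mul _)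
  have hcube : (fun p : ℕ × ℝ => g₀ * (p.1 * (c * p.2 ^ 3))) =O[l]
      fun p => (p.1 : ℝ) ^ 1 * p.2 ^ (2 * (1 + 1)) := by
    simpa using ((isBigO_natCast_fst l).mul
      ((hpow (by norm_num : 3 ≤ 4)).const_mul_left c)).const_mul_left g₀
  have hG := isBigO_ofReal_scaledGaussian (κ / 2) l
  refine ((isBigO_mul_scaledGaussian hl (by linarith) 0 hlin hG).add
    (isBigO_mul_scaledGaussian hl (by linarith) 1 hcube hG)).congr_left fun p => ?_
  rw [laplaceModel]
  ring

lemma isBigO_prod_principal_of_nhds {ι X E F : Type*} [PseudoMetricSpace X] [Norm E]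
    [SeminormedAddCommGroup F] {l : Filter ι} {s : Set X} {x₀ : X} {f : ι × X → E} {g : ι × X → F}
    (hnear : f =O[l ×ˢ 𝓝 x₀] g)
    (hfar : ∀ δ > 0, f =O[l ×ˢ 𝓟 (s ∩ {x | δ ≤ dist x x₀})] g) : f =O[l ×ˢ 𝓟 s] g := by
  obtain ⟨C, hC⟩ := hnear.bound
  obtain ⟨p, hp, q, hq, hpq⟩ := eventually_prod_iff.1 hC
  obtain ⟨δ, hδ, hball⟩ := Metric.eventually_nhds_iff.1 hq
  have hball' : f =O[l ×ˢ 𝓟 (Metric.ball x₀ δ)] g :=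
    IsBigO.of_bound C <| eventually_prod_principal_iff.2 <|
      hp.mono fun n hn x hx => hpq hn (hball hx)
  refine (hball'.sup (hfar δ hδ)).mono ?_
  rw [← prod_sup, sup_principal]
  refine prod_mono le_rfl (principal_mono.2 fun x hx => ?_)
  exact (lt_or_ge (dist x x₀) δ).imp id fun h => ⟨hx, h⟩

lemma isBigO_setIntegral {X E : Type*} [MeasurableSpace X] [NormedAddCommGroup E] [NormedSpace ℝ E]
    {ι : Type*} {l : Filter ι} {μ : Measure X} {s : Set X} (hs : MeasurableSet s) {f : ι × X → E}
    {g : ι × X → ℝ} (hg : ∀ᶠ n in l, IntegrableOn (fun x => g (n, x)) s μ)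
    (hfg : f =O[l ×ˢ 𝓟 s] g) :
    (fun n => ∫ x in s, f (n, x) ∂μ) =O[l] fun n => ∫ x in s, ‖g (n, x)‖ ∂μ := by
  obtain ⟨C, hC⟩ := hfg.bound
  refine IsBigO.of_bound C ?_
  filter_upwards [eventually_prod_principal_iff.1 hC, hg] with n hn hgn
  rw [Real.norm_of_nonneg (integral_nonneg fun x => norm_nonneg _), ← integral_const_mul]
  exact norm_integral_le_of_norm_le (hgn.norm.const_mul C)
    ((ae_restrict_iff' hs).2 (Eventually.of_forall hn))

lemma isBigO_integral_scaledGaussian {b : ℝ} (hb : 0 < b) (s : Set ℝ) :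
    (fun n : ℕ => ∫ x in s, ‖(n : ℝ)⁻¹ * scaledGaussian b (n, x)‖)
      =O[atTop] fun n => 1 / (n * √n) := by
  refine IsBigO.of_bound √(Real.pi / b) ?_
  filter_upwards [eventually_gt_atTop 0] with n hn
  have hle : ∫ x in s, ‖(n : ℝ)⁻¹ * scaledGaussian b (n, x)‖ ≤
      (n : ℝ)⁻¹ * √(Real.pi / (b * n)) := by
    rw [← integral_scaledGaussian, ← integral_const_mul]
    refine (setIntegral_le_integral ((integrable_scaledGaussian hb hn).const_mul _).norm
      (Eventually.of_forall fun x => norm_nonneg _)).trans_eq (integral_congr_ae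
        (Eventually.of_forall fun x => Real.norm_of_nonneg ?_))
    exact mul_nonneg (by positivity) (scaledGaussian_pos _ _).le
  rw [Real.norm_of_nonneg (integral_nonneg fun x => norm_nonneg _),
    Real.norm_of_nonneg (by positivity)]
  refine hle.trans_eq ?_
  rw [← div_div, Real.sqrt_div (by positivity)]
  ring

lemma intervalIntegral_eq_zero_of_odd {f : ℝ → ℂ} (hf : ∀ x, f (-x) = -f x) (P : ℝ) :
    ∫ x in -P..P, f x = 0 := by
  have h := intervalIntegral.integral_comp_neg (a := -P) (b := P) f
  simp_rw [hf, intervalIntegral.integral_neg, neg_neg] at h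
  exact self_eq_neg.1 h.symm

lemma isBigO_inv_sq_one_div_mul_sqrt :
    (fun n : ℕ => ((n : ℝ) ^ 2)⁻¹) =O[atTop] fun n : ℕ => 1 / ((n : ℝ) * √n) := by
  refine IsBigO.of_bound 1 ?_
  filter_upwards [eventually_ge_atTop 1] with n hn
  have hn1 : (1 : ℝ) ≤ n := Nat.one_le_cast.2 hn
  have hsqrt : √(n : ℝ) ≤ n := Real.sqrt_le_iff.2 ⟨by linarith, by nlinarith⟩
  rw [Real.norm_of_nonneg (by positivity), Real.norm_of_nonneg (by positivity), one_mul, sq,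
    ← one_div]
  gcongr

lemma isBigO_integral_inv_sq_add_scaledGaussian {b P : ℝ} (hb : 0 < b) (hP : 0 ≤ P) :
    (fun n : ℕ => ∫ x in Set.Ioc (-P) P, ‖((n : ℝ) ^ 2)⁻¹ + (n : ℝ)⁻¹ * scaledGaussian b (n, x)‖)
      =O[atTop] fun n => 1 / (n * √n) := by
  refine ((isBigO_inv_sq_one_div_mul_sqrt.const_mul_left (2 * P)).add
    (isBigO_integral_scaledGaussian hb (Set.Ioc (-P) P))).congr_left fun n => ?_
  have hint : Integrable (fun x => ‖(n : ℝ)⁻¹ * scaledGaussian b (n, x)‖)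
      (volume.restrict (Set.Ioc (-P) P)) :=
    ((continuous_scaledGaussian b n).const_mul _).norm.integrableOn_Ioc
  have hconst : ∫ _ in Set.Ioc (-P) P, ((n : ℝ) ^ 2)⁻¹ = 2 * P * ((n : ℝ) ^ 2)⁻¹ := by
    rw [setIntegral_const, Real.volume_real_Ioc_of_le (by linarith), smul_eq_mul]
    ring
  rw [← hconst, ← integral_add (integrable_const _) hint]
  refine integral_congr_ae (Eventually.of_forall fun x => ?_)
  have hG := scaledGaussian_pos b (n, x)
  simp only [Real.norm_of_nonneg (by positivity : 0 ≤ (n : ℝ)⁻¹ * scaledGaussian b (n, x)),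
    Real.norm_of_nonneg
      (by positivity : 0 ≤ ((n : ℝ) ^ 2)⁻¹ + (n : ℝ)⁻¹ * scaledGaussian b (n, x))]

lemma continuous_laplaceModel (κ : ℝ) (c g₀ : ℂ) (d : ℕ → ℂ) (n : ℕ) :
    Continuous fun x => laplaceModel κ c g₀ d (n, x) := by
  unfold laplaceModel scaledGaussian
  fun_prop

lemma integral_laplaceModel (κ P : ℝ) (c g₀ : ℂ) (d : ℕ → ℂ) (n : ℕ) :
    ∫ x in -P..P, laplaceModel κ c g₀ d (n, x) =
      ∫ x in -P..P, laplaceModel κ 0 g₀ 0 (n, x) := by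
  rw [← sub_eq_zero, ← intervalIntegral.integral_sub
    ((continuous_laplaceModel ..).intervalIntegrable _ _)
    ((continuous_laplaceModel ..).intervalIntegrable _ _)]
  refine intervalIntegral_eq_zero_of_odd (fun x => ?_) P
  simp only [laplaceModel, scaledGaussian, neg_sq, Pi.zero_apply]
  push_cast
  ring

lemma isBigO_integral_laplaceModel_sub {κ P : ℝ} (hκ : 0 < κ) (hP : 0 < P) (c g₀ : ℂ)
    (d : ℕ → ℂ) :
    (fun n : ℕ => (∫ x in -P..P, laplaceModel κ c g₀ d (n, x)) - g₀ * √(2 * Real.pi / (n * κ)))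
      =O[atTop] fun n : ℕ => 1 / (n * √n) := by
  have hfar : laplaceModel κ 0 g₀ 0 =O[atTop ×ˢ 𝓟 (Set.Ioc (-P) P)ᶜ]
      fun p => (p.1 : ℝ)⁻¹ * scaledGaussian (κ / 8) p := by
    refine (isBigO_laplaceModel_far hκ hP 0 g₀ (isBigO_zero _ _)).mono
      (prod_mono le_rfl (principal_mono.2 fun x hx => ?_))
    exact not_lt.1 fun h : |x| < P => hx ⟨(abs_lt.1 h).1, (abs_lt.1 h).2.le⟩
  have herr : ∀ᶠ n : ℕ in atTop,
      IntegrableOn (fun x => (n : ℝ)⁻¹ * scaledGaussian (κ / 8) (n, x)) (Set.Ioc (-P) P)ᶜ :=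
    (eventually_gt_atTop 0).mono fun n hn =>
      ((integrable_scaledGaussian (by positivity) hn).const_mul _).integrableOn
  refine ((isBigO_setIntegral measurableSet_Ioc.compl herr hfar).trans
    (isBigO_integral_scaledGaussian (by positivity) _)).neg_left.congr' ?_ EventuallyEq.rfl
  filter_upwards [eventually_gt_atTop 0] with n hn
  have hmodel : (fun x => laplaceModel κ 0 g₀ 0 (n, x)) =
      fun x => g₀ * scaledGaussian (κ / 2) (n, x) := by
    funext x
    simp [laplaceModel]
  have hfull : ∫ x, laplaceModel κ 0 g₀ 0 (n, x) = g₀ * √(2 * Real.pi / (n * κ)) := by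
    rw [hmodel, integral_const_mul, integral_complex_ofReal, integral_scaledGaussian]
    congr 3
    field_simp
  have hint : Integrable fun x => laplaceModel κ 0 g₀ 0 (n, x) := by
    rw [hmodel]
    exact (integrable_scaledGaussian (by positivity) hn).ofReal.const_mul g₀
  rw [integral_laplaceModel, intervalIntegral.integral_of_le (by linarith), ← hfull,
    ← integral_add_compl measurableSet_Ioc hint, sub_add_cancel_left]

/-- The relative error is `1 / n` and not `1 / √n` because the odd corrections integrate to `0`. -/
theorem laplace_method {κ P : ℝ} (hκ : 0 < κ) (hP : 0 < P) {f : ℝ → ℂ} {h Φ : ℕ → ℝ → ℂ}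
    {c g₀ : ℂ} {d : ℕ → ℂ} (hΦ : ∀ n, Continuous (Φ n))
    (hf : (fun x : ℝ => f x + κ / 2 * x ^ 2 - c * x ^ 3) =O[𝓝 0] fun x => x ^ 4)
    (hd : d =O[atTop] fun _ => (1 : ℝ))
    (hh : (fun p : ℕ × ℝ => h p.1 p.2 - g₀ - d p.1 * p.2) =O[atTop ×ˢ 𝓝 0] fun p => p.2 ^ 2)
    (hnear : (fun p : ℕ × ℝ => Φ p.1 p.2 - h p.1 p.2 * Complex.exp (p.1 * f p.2))
      =O[atTop ×ˢ 𝓝 0] fun p => ((p.1 : ℝ) ^ 2)⁻¹)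
    (hfar : ∀ δ > 0, (fun p : ℕ × ℝ => Φ p.1 p.2)
      =O[atTop ×ˢ 𝓟 (Set.Icc (-P) P ∩ {x | δ ≤ |x|})] fun p => ((p.1 : ℝ) ^ 2)⁻¹) :
    (fun n : ℕ => (∫ x in -P..P, Φ n x) - g₀ * √(2 * Real.pi / (n * κ)))
      =O[atTop] fun n : ℕ => 1 / (n * √n) := by
  set err₁ : ℕ × ℝ → ℝ := fun p => ((p.1 : ℝ) ^ 2)⁻¹
  set err₂ : ℕ × ℝ → ℝ := fun p => (p.1 : ℝ)⁻¹ * scaledGaussian (κ / 8) p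
  have herr₁ (p) : 0 ≤ err₁ p := by positivity
  have herr₂ (p) : 0 ≤ err₂ p := mul_nonneg (by positivity) (scaledGaussian_pos _ _).le
  have h₁ (l) : err₁ =O[l] (err₁ + err₂) := isBigO_of_le _ fun p =>
    abs_le_abs_of_nonneg (herr₁ p) (le_add_of_nonneg_right (herr₂ p))
  have h₂ (l) : err₂ =O[l] (err₁ + err₂) := isBigO_of_le _ fun p =>
    abs_le_abs_of_nonneg (herr₂ p) (le_add_of_nonneg_left (herr₁ p))
  have hmodel : (fun p : ℕ × ℝ => Φ p.1 p.2 - laplaceModel κ c g₀ d p)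
      =O[atTop ×ˢ 𝓟 (Set.Icc (-P) P)] (err₁ + err₂) := by
    refine isBigO_prod_principal_of_nhds (x₀ := 0) ?_ fun δ hδ => ?_
    · exact ((hnear.trans (h₁ _)).add
        ((isBigO_sub_laplaceModel_nhds hκ hf hd hh).trans (h₂ _))).congr_left fun p => by ring
    · simp only [dist_zero_right, Real.norm_eq_abs]
      exact ((hfar δ hδ).trans (h₁ _)).sub (((isBigO_laplaceModel_far hκ hδ c g₀ hd).mono
        (prod_mono le_rfl (principal_mono.2 Set.inter_subset_right))).trans (h₂ _))
  have herr (n : ℕ) : Continuous fun x => (err₁ + err₂) (n, x) := by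
    simp only [err₁, err₂, Pi.add_apply]
    exact continuous_const.add ((continuous_scaledGaussian (κ / 8) n).const_mul _)
  have hdiff := (isBigO_setIntegral measurableSet_Ioc
    (Eventually.of_forall fun n => (herr n).integrableOn_Ioc)
    (hmodel.mono (prod_mono le_rfl (principal_mono.2 Set.Ioc_subset_Icc_self)))).trans
      (isBigO_integral_inv_sq_add_scaledGaussian (by positivity : 0 < κ / 8) hP.le)
  refine (hdiff.add (isBigO_integral_laplaceModel_sub hκ hP c g₀ d)).congr_left fun n => ?_
  rw [← intervalIntegral.integral_of_le (by linarith), intervalIntegral.integral_sub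
    ((hΦ n).intervalIntegrable _ _) ((continuous_laplaceModel ..).intervalIntegrable _ _)]
  ring

end Laplace

/-! ### Second-order linear recurrences -/

section Recurrence

section CommRing

variable {R : Type*} [CommRing R] {α β : R} {u : ℕ → R}

lemma succ_sub_mul_eq_pow_mul (hu : ∀ n, u (n + 2) = (α + β) * u (n + 1) - α * β * u n) (n : ℕ) :
    u (n + 1) - β * u n = α ^ n * (u 1 - β * u 0) := by
  induction n with
  | zero => simp
  | succ n ih => rw [pow_succ', mul_assoc, ← ih, hu]; ring

lemma sub_mul_eq_pow_mul_sub_pow_mul (hu : ∀ n, u (n + 2) = (α + β) * u (n + 1) - α * β * u n)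
    (n : ℕ) : (α - β) * u n = α ^ n * (u 1 - β * u 0) - β ^ n * (u 1 - α * u 0) := by
  have hu' (n) : u (n + 2) = (β + α) * u (n + 1) - β * α * u n := by rw [hu]; ring
  rw [← succ_sub_mul_eq_pow_mul hu, ← succ_sub_mul_eq_pow_mul hu']
  ring

end CommRing

lemma norm_le_add_mul_pow_of_recurrence {R : Type*} [SeminormedCommRing R] [NormOneClass R]
    {α β : R} {u : ℕ → R} (hu : ∀ n, u (n + 2) = (α + β) * u (n + 1) - α * β * u n) {ρ : ℝ}
    (hρ : 1 ≤ ρ) (hα : ‖α‖ ≤ ρ) (hβ : ‖β‖ ≤ ρ) (n : ℕ) :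
    ‖u n‖ ≤ (‖u 0‖ + n * ‖u 1 - β * u 0‖) * ρ ^ n := by
  induction n with
  | zero => simp
  | succ n ih =>
    have hstep : u (n + 1) = α ^ n * (u 1 - β * u 0) + β * u n := by
      rw [← succ_sub_mul_eq_pow_mul hu, sub_add_cancel]
    have hpow : ‖α ^ n‖ ≤ ρ ^ (n + 1) := calc
      ‖α ^ n‖ ≤ ρ ^ n := (norm_pow_le α n).trans (by gcongr)
      _ ≤ ρ ^ (n + 1) := pow_le_pow_right₀ hρ n.le_succ
    calc ‖u (n + 1)‖ ≤ ‖α ^ n‖ * ‖u 1 - β * u 0‖ + ‖β‖ * ‖u n‖ := by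
          rw [hstep]
          exact (norm_add_le _ _).trans (add_le_add (norm_mul_le _ _) (norm_mul_le _ _))
      _ ≤ ρ ^ (n + 1) * ‖u 1 - β * u 0‖ + ρ * ((‖u 0‖ + n * ‖u 1 - β * u 0‖) * ρ ^ n) := by
          gcongr
      _ = (‖u 0‖ + (n + 1 : ℕ) * ‖u 1 - β * u 0‖) * ρ ^ (n + 1) := by
          push_cast
          ring

end Recurrence

/-! ### Roots of the characteristic equation and confocal ellipses -/

section Ellipse

open Complex

lemma norm_cosh_sq_add_norm_sinh_sq (w : ℂ) :
    ‖cosh w‖ ^ 2 + ‖sinh w‖ ^ 2 = Real.cosh (2 * w.re) := by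
  have h := parallelogram_law_with_norm ℝ (cosh w) (sinh w)
  rw [cosh_add_sinh, cosh_sub_sinh, norm_exp, norm_exp, neg_re, ← Real.exp_nat_mul,
    ← Real.exp_nat_mul, Nat.cast_ofNat, mul_neg] at h
  rw [Real.cosh_eq]
  linarith

lemma norm_sinh_add_I_add_norm_sinh_sub_I (w : ℂ) :
    ‖sinh w + I‖ + ‖sinh w - I‖ = 2 * Real.cosh w.re := by
  have hw : w = 2 * (w / 2) := by ring
  have hadd : sinh w + I = I * (cosh (w / 2) - I * sinh (w / 2)) ^ 2 := by
    rw [hw, sinh_two_mul, ← hw]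
    linear_combination -I * cosh_sq_sub_sinh_sq (w / 2) +
      (2 * sinh (w / 2) * cosh (w / 2) - I * sinh (w / 2) ^ 2) * I_sq
  have hsub : sinh w - I = -I * (cosh (w / 2) + I * sinh (w / 2)) ^ 2 := by
    rw [hw, sinh_two_mul, ← hw]
    linear_combination I * cosh_sq_sub_sinh_sq (w / 2) +
      (2 * sinh (w / 2) * cosh (w / 2) + I * sinh (w / 2) ^ 2) * I_sq
  have hpar := parallelogram_law_with_norm ℝ (cosh (w / 2)) (I * sinh (w / 2))
  have hre : 2 * (w / 2).re = w.re := by simp; ring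
  have hhalf := norm_cosh_sq_add_norm_sinh_sq (w / 2)
  rw [hre] at hhalf
  simp only [hadd, hsub, norm_mul, norm_pow, norm_neg, norm_I, one_mul] at hpar ⊢
  linarith

lemma norm_ellipse_add_I_lt {S C T s c : ℝ} (hT : 0 < T) (hST : T ^ 2 = 1 + S ^ 2)
    (hCT : C ^ 2 < T ^ 2) (hS : S ≠ 0) (hs : s ≠ 0) (hsc : s ^ 2 + c ^ 2 = 1) :
    ‖(S * c + C * s * I + I : ℂ)‖ < T + C * s / T := by
  have hgap : (T + C * s / T) ^ 2 - ((S * c) ^ 2 + (C * s + 1) ^ 2) =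
      S ^ 2 * s ^ 2 * (1 - C ^ 2 / T ^ 2) := by
    have hdiv : C ^ 2 = C ^ 2 / T ^ 2 * (1 + S ^ 2) := by
      rw [← hST]
      field_simp
    have hexpand : (T + C * s / T) ^ 2 = T ^ 2 + 2 * C * s + C ^ 2 / T ^ 2 * s ^ 2 := by
      field_simp
      ring
    linear_combination hexpand - S ^ 2 * hsc - s ^ 2 * hdiv + hST
  have hpos : 0 < S ^ 2 * s ^ 2 * (1 - C ^ 2 / T ^ 2) :=
    mul_pos (by positivity) (sub_pos.2 ((div_lt_one (by positivity)).2 hCT))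
  have hnonneg : 0 ≤ T + C * s / T := by
    have hCs : |C * s| ≤ T * T := by
      refine abs_le_of_sq_le_sq ?_ (by positivity)
      calc (C * s) ^ 2 ≤ T ^ 2 * 1 := by rw [mul_pow]; gcongr; nlinarith
        _ ≤ T ^ 2 * T ^ 2 := by gcongr; nlinarith
        _ = (T * T) ^ 2 := by ring
    have : -T ≤ C * s / T := (le_div_iff₀ hT).2 (by linarith [neg_le_of_abs_le hCs])
    linarith
  have hnorm : ‖(S * c + C * s * I + I : ℂ)‖ ^ 2 = (S * c) ^ 2 + (C * s + 1) ^ 2 := by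
    rw [← normSq_eq_norm_sq, normSq_apply]
    simp
    ring
  exact lt_of_pow_lt_pow_left₀ 2 hnonneg (by linarith)

lemma sinh_add_mul_I (σ x : ℝ) : sinh (σ + x * I) =
    (Real.sinh σ * Real.cos x + Real.cosh σ * Real.sin x * I : ℂ) := by
  push_cast
  rw [sinh_add, cosh_mul_I, sinh_mul_I, mul_assoc]

variable {r σ ν : ℝ}

/-- `sinh` maps the line `re w = ν` onto an ellipse with foci `±I`, and maps `σ + x I` to another
ellipse; scaled by `r < 1`, the latter touches the former only at `x ∈ π ℤ`. -/
lemma abs_re_lt_of_sinh_eq {x : ℝ} {w : ℂ} (hr : |r| < 1) (hν : 0 < ν)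
    (hσν : Real.sinh ν = r * Real.sinh σ) (hx : Real.sin x ≠ 0)
    (hw : sinh w = r * sinh (σ + x * I)) : |w.re| < ν := by
  have hS : Real.sinh ν ≠ 0 := (Real.sinh_pos_iff.2 hν).ne'
  have hST : Real.cosh ν ^ 2 = 1 + Real.sinh ν ^ 2 := Real.cosh_sq' ν
  have hCT : (r * Real.cosh σ) ^ 2 < Real.cosh ν ^ 2 := by
    rw [hST, hσν, mul_pow, mul_pow, Real.cosh_sq']
    linarith [(sq_lt_one_iff_abs_lt_one r).2 hr]
  have hw' : sinh w = Real.sinh ν * Real.cos x + (r * Real.cosh σ : ℝ) * Real.sin x * I := by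
    rw [hw, sinh_add_mul_I, hσν]
    push_cast
    ring
  have hadd := norm_ellipse_add_I_lt (Real.cosh_pos ν) hST hCT hS hx (Real.sin_sq_add_cos_sq x)
  have hsub := norm_ellipse_add_I_lt (Real.cosh_pos ν) (by rw [hST, neg_sq])
    (by rw [neg_sq]; exact hCT) (neg_ne_zero.2 hS) hx (Real.sin_sq_add_cos_sq x)
  have hneg : -sinh w + I = ((-Real.sinh ν : ℝ) * Real.cos x +
      (-(r * Real.cosh σ) : ℝ) * Real.sin x * I + I : ℂ) := by
    rw [hw']
    push_cast
    ring
  rw [← hw'] at hadd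
  rw [← hneg, ← norm_neg, neg_add, neg_neg, ← sub_eq_add_neg] at hsub
  have hsum := norm_sinh_add_I_add_norm_sinh_sub_I w
  rw [neg_mul, neg_div] at hsub
  rw [← abs_of_pos hν, ← Real.cosh_lt_cosh]
  linarith

lemma sinh_surjective : Function.Surjective sinh := fun z => by
  obtain ⟨w, hw⟩ := sin_surjective (z * I)
  exact ⟨-(w * I), by rw [sinh_neg, sinh_mul_I, hw]; linear_combination -z * I_sq⟩

lemma exists_abs_re_le_of_sinh_eq {K : Set ℝ} (hK : IsCompact K) (hr : |r| < 1) (hν : 0 < ν)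
    (hσν : Real.sinh ν = r * Real.sinh σ) (hsin : ∀ x ∈ K, Real.sin x ≠ 0) :
    ∃ ρ, ρ < ν ∧ ∀ x ∈ K, ∀ w : ℂ, sinh w = r * sinh (σ + x * I) → |w.re| ≤ ρ := by
  obtain rfl | hne := K.eq_empty_or_nonempty
  · exact ⟨0, hν, by simp⟩
  set q : ℝ → ℝ := fun x => ‖r * sinh (σ + x * I) + I‖ + ‖r * sinh (σ + x * I) - I‖
  have hq (x : ℝ) (w : ℂ) (hw : sinh w = r * sinh (σ + x * I)) : q x = 2 * Real.cosh w.re := by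
    rw [← norm_sinh_add_I_add_norm_sinh_sub_I, hw]
  obtain ⟨x₀, hx₀, hmax⟩ := hK.exists_isMaxOn hne (f := q) (by fun_prop)
  obtain ⟨w₀, hw₀⟩ := sinh_surjective (r * sinh (σ + x₀ * I))
  refine ⟨|w₀.re|, abs_re_lt_of_sinh_eq hr hν hσν (hsin x₀ hx₀) hw₀,
    fun x hx w hw => Real.cosh_le_cosh.1 ?_⟩
  have hle : q x ≤ q x₀ := hmax hx
  rw [hq x w hw, hq x₀ w₀ hw₀] at hle
  linarith

end Ellipse

/-! ### The saddle point -/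

section Saddle

lemma isBigO_sub_sum_iteratedDeriv {𝕜 : Type*} [RCLike 𝕜] {f : 𝕜 → 𝕜} {z : 𝕜}
    (hf : AnalyticAt 𝕜 f z) (N : ℕ) :
    (fun ζ => f (z + ζ) - ∑ k ∈ Finset.range N, iteratedDeriv k f z / k.factorial * ζ ^ k)
      =O[𝓝 0] fun ζ => ζ ^ N := by
  refine (hf.hasFPowerSeriesAt.isBigO_sub_partialSum_pow N).trans ?_ |>.congr_left fun ζ => ?_
  · simpa only [← norm_pow] using (isBigO_refl (fun ζ : 𝕜 => ζ ^ N) (𝓝 0)).norm_left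
  · simp [FormalMultilinearSeries.partialSum, mul_comm]

lemma isBigO_pow_mul_exp_neg_mul_inv_sq {c : ℝ} (hc : 0 < c) (j : ℕ) :
    (fun n : ℕ => (n : ℝ) ^ j * Real.exp (-(c * n))) =O[atTop] fun n : ℕ => ((n : ℝ) ^ 2)⁻¹ := by
  have h := (isLittleO_pow_exp_pos_mul_atTop (j + 2) hc).isBigO.comp_tendsto
    (tendsto_natCast_atTop_atTop (R := ℝ))
  refine ((h.mul (isBigO_refl (fun n : ℕ => ((n : ℝ) ^ 2)⁻¹ * Real.exp (-(c * n))) atTop)).congr'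
    ?_ ?_)
  · filter_upwards [eventually_gt_atTop 0] with n hn
    have : (n : ℝ) ≠ 0 := by positivity
    simp only [Function.comp_apply]
    field_simp
    ring
  · refine .of_forall fun n => ?_
    simp only [Function.comp_apply, Real.exp_neg]
    field_simp

open Complex

lemma exists_analyticAt_sinh_eq {f : ℂ → ℂ} {z w : ℂ} (hf : AnalyticAt ℂ f z) (hw : cosh w ≠ 0)
    (hfz : f z = sinh w) :
    ∃ N : ℂ → ℂ, AnalyticAt ℂ N z ∧ N z = w ∧ ∀ᶠ ζ in 𝓝 z, sinh (N ζ) = f ζ := by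
  have hsinh : AnalyticAt ℂ sinh w := differentiable_sinh.analyticAt w
  have hderiv : deriv sinh w ≠ 0 := by rwa [Complex.deriv_sinh]
  have hstrict := hsinh.hasStrictDerivAt
  refine ⟨fun ζ => hstrict.localInverse sinh _ w hderiv (f ζ), ?_, ?_, ?_⟩
  · have h := hsinh.analyticAt_localInverse hderiv
    rw [← hfz] at h
    exact h.comp hf
  · simp only [hfz]
    exact HasStrictFDerivAt.localInverse_apply_image ..
  · have h := HasStrictDerivAt.eventually_right_inverse hstrict hderiv
    rw [← hfz] at h
    exact hf.continuousAt.eventually h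

lemma deriv_of_sinh_eq {r z : ℂ} {N : ℂ → ℂ} (hN : AnalyticAt ℂ N z)
    (h : ∀ᶠ ζ in 𝓝 z, sinh (N ζ) = r * sinh ζ) :
    cosh (N z) * deriv N z = r * cosh z ∧
      cosh (N z) * deriv (deriv N) z + sinh (N z) * deriv N z ^ 2 = r * sinh z := by
  have h₁ : ∀ᶠ ζ in 𝓝 z, cosh (N ζ) * deriv N ζ = r * cosh ζ := by
    filter_upwards [h.eventually_nhds, hN.eventually_analyticAt] with ζ hζ hNζ
    have hd := hNζ.differentiableAt.hasDerivAt.csinh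
    exact (hd.congr_of_eventuallyEq (hζ.mono fun _ h => h.symm)).unique
      ((hasDerivAt_sinh ζ).const_mul r)
  have hd := hN.differentiableAt.hasDerivAt.ccosh.mul hN.deriv.differentiableAt.hasDerivAt
  have h₂ := (hd.congr_of_eventuallyEq (h₁.mono fun _ h => h.symm)).unique
    ((hasDerivAt_cosh z).const_mul r)
  exact ⟨h₁.self_of_nhds, by rw [← h₂]; ring⟩

/-- The coefficient of `exp (n w)` in the solution of `u (n + 2) = 2 sinh w u (n + 1) + u n` with
initial values `u₀`, `u₁`. -/
def binetCoeff (u₀ u₁ w : ℂ) : ℂ := (u₁ + exp (-w) * u₀) / (2 * cosh w)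

section SinhRecurrence

variable {u : ℕ → ℂ} {w : ℂ}

lemma eq_exp_add_mul_sub_mul (hu : ∀ n, u (n + 2) = 2 * sinh w * u (n + 1) + u n) (n : ℕ) :
    u (n + 2) = (exp w + -exp (-w)) * u (n + 1) - exp w * -exp (-w) * u n := by
  have hexp : exp w * exp (-w) = 1 := by rw [← exp_add, add_neg_cancel, exp_zero]
  rw [hu, two_sinh]
  linear_combination -u n * hexp

lemma eq_binetCoeff_mul_exp_pow_sub (hw : cosh w ≠ 0)
    (hu : ∀ n, u (n + 2) = 2 * sinh w * u (n + 1) + u n) (n : ℕ) :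
    u n = binetCoeff (u 0) (u 1) w * exp w ^ n -
      (-exp (-w)) ^ n * ((u 1 - exp w * u 0) / (2 * cosh w)) := by
  have h := sub_mul_eq_pow_mul_sub_pow_mul (eq_exp_add_mul_sub_mul hu) n
  rw [sub_neg_eq_add, ← two_cosh, neg_mul, sub_neg_eq_add] at h
  rw [binetCoeff, div_mul_eq_mul_div, mul_div_assoc', ← sub_div, eq_div_iff (by simpa using hw),
    mul_comm, h]
  ring

lemma norm_le_mul_exp_pow (hu : ∀ n, u (n + 2) = 2 * sinh w * u (n + 1) + u n) {ρ : ℝ}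
    (hw : |w.re| ≤ ρ) (n : ℕ) :
    ‖u n‖ ≤ (‖u 0‖ + n * (‖u 1‖ + Real.exp ρ * ‖u 0‖)) * Real.exp ρ ^ n := by
  have hρ := abs_le.1 hw
  have hneg : ‖exp (-w)‖ ≤ Real.exp ρ := by
    rw [norm_exp, neg_re]
    gcongr
    linarith
  refine (norm_le_add_mul_pow_of_recurrence (eq_exp_add_mul_sub_mul hu)
    (Real.one_le_exp ((abs_nonneg _).trans hw)) ?_ ?_ n).trans ?_
  · rw [norm_exp]
    gcongr
    exact hρ.2
  · rwa [norm_neg]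
  · gcongr
    refine (norm_sub_le _ _).trans ?_
    rw [norm_mul, norm_neg]
    gcongr

end SinhRecurrence

variable {r σ ν : ℝ} {k : ℕ → ℂ → ℂ}

lemma continuous_of_recurrence (h₀ : Continuous (k 0)) (h₁ : Continuous (k 1))
    (hk : ∀ n z, k (n + 2) z = 2 * (r * sinh z) * k (n + 1) z + k n z) (n : ℕ) :
    Continuous (k n) := by
  induction n using Nat.twoStepInduction with
  | zero => exact h₀
  | one => exact h₁
  | more n ih₀ ih₁ =>
    rw [funext (hk n)]
    fun_prop

lemma isBigO_saddle_far (hr : |r| < 1) (hν : 0 < ν) (hσν : Real.sinh ν = r * Real.sinh σ)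
    (h₀ : Continuous (k 0)) (h₁ : Continuous (k 1))
    (hk : ∀ n z, k (n + 2) z = 2 * (r * sinh z) * k (n + 1) z + k n z) {K : Set ℝ}
    (hK : IsCompact K) (hsin : ∀ x ∈ K, Real.sin x ≠ 0) :
    (fun p : ℕ × ℝ => exp (-(p.1 * ν)) * k p.1 (σ + p.2 * I)) =O[atTop ×ˢ 𝓟 K]
      fun p => ((p.1 : ℝ) ^ 2)⁻¹ := by
  obtain ⟨ρ, hρν, hρ⟩ := exists_abs_re_le_of_sinh_eq hK hr hν hσν hsin
  obtain ⟨M₀, hM₀⟩ := hK.exists_bound_of_continuousOn (f := fun x : ℝ => k 0 (σ + x * I))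
    (by fun_prop)
  obtain ⟨M₁, hM₁⟩ := hK.exists_bound_of_continuousOn (f := fun x : ℝ => k 1 (σ + x * I))
    (by fun_prop)
  have hexp (j : ℕ) := (isBigO_pow_mul_exp_neg_mul_inv_sq (sub_pos.2 hρν) j).comp_tendsto
    (tendsto_fst (f := atTop) (g := 𝓟 K))
  refine IsBigO.trans (.of_norm_eventuallyLE ?_) (((hexp 0).const_mul_left M₀).add
    ((hexp 1).const_mul_left (M₁ + Real.exp ρ * M₀)))
  filter_upwards [tendsto_snd.eventually (mem_principal_self K)] with ⟨n, x⟩ hx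
  obtain ⟨w, hw⟩ := sinh_surjective (r * sinh (σ + x * I))
  have hu := norm_le_mul_exp_pow (u := fun n => k n (σ + x * I)) (w := w)
    (fun n => by rw [hw, hk]) (hρ x hx w hw) n
  calc ‖exp (-(n * ν)) * k n (σ + x * I)‖
      = Real.exp (-(n * ν)) * ‖k n (σ + x * I)‖ := by
        rw [norm_mul, norm_exp]
        simp
    _ ≤ Real.exp (-(n * ν)) * ((M₀ + n * (M₁ + Real.exp ρ * M₀)) * Real.exp ρ ^ n) := by
        refine mul_le_mul_of_nonneg_left (hu.trans ?_) (Real.exp_pos _).le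
        gcongr
        exacts [hM₀ x hx, hM₁ x hx, hM₀ x hx]
    _ = _ := by
        have hsplit : Real.exp (-((ν - ρ) * n)) = Real.exp (-(n * ν)) * Real.exp ρ ^ n := by
          rw [← Real.exp_nat_mul, ← Real.exp_add]
          ring_nf
        simp only [Function.comp_apply, hsplit]
        ring

lemma tendsto_add_ofReal_mul_I {z : ℂ} : Tendsto (fun x : ℝ => z + x * I) (𝓝 0) (𝓝 z) :=
  Continuous.tendsto' (by fun_prop) _ _ (by simp)

lemma isBigO_sub_sum_iteratedDeriv_mul_I {f : ℂ → ℂ} {z : ℂ} (hf : AnalyticAt ℂ f z) (N : ℕ) :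
    (fun x : ℝ => f (z + x * I) -
        ∑ k ∈ Finset.range N, iteratedDeriv k f z / k.factorial * (x * I) ^ k)
      =O[𝓝 0] fun x => x ^ N :=
  have hzero : Tendsto (fun x : ℝ => x * I) (𝓝 0) (𝓝 0) := by
    simpa using tendsto_add_ofReal_mul_I (z := 0)
  ((isBigO_sub_sum_iteratedDeriv hf N).comp_tendsto hzero).trans (isBigO_of_le _ fun x => by simp)

lemma isBigO_phase_sub_cubic {N : ℂ → ℂ} {z : ℂ} (hN : AnalyticAt ℂ N z) :
    (fun x : ℝ => N (z + x * I) - N z - deriv N z * x * I + deriv (deriv N) z / 2 * x ^ 2 -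
      -(iteratedDeriv 3 N z / 6 * I) * x ^ 3) =O[𝓝 0] fun x => x ^ 4 := by
  refine (isBigO_sub_sum_iteratedDeriv_mul_I hN 4).congr_left fun x => ?_
  simp only [Finset.sum_range_succ, Finset.sum_range_zero, iteratedDeriv_zero, iteratedDeriv_one,
    iteratedDeriv_succ (n := 1), Nat.factorial, mul_pow, I_pow_three, I_sq]
  push_cast
  ring

lemma isBigO_ofReal_fst_mul {e : ℕ → ℝ} (he : e =O[atTop] fun _ => (1 : ℝ)) {l : Filter ℝ}
    {f : ℕ × ℝ → ℂ} {g : ℕ × ℝ → ℝ} (hf : f =O[atTop ×ˢ l] g) :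
    (fun p : ℕ × ℝ => e p.1 * f p) =O[atTop ×ˢ l] g := by
  have he' : (fun n => (e n : ℂ)) =O[atTop] fun _ => (1 : ℝ) := isBigO_ofReal_left.2 he
  simpa using (he'.comp_tendsto tendsto_fst).mul hf

lemma isBigO_exp_mul_I_sub {e : ℕ → ℝ} (he : e =O[atTop] fun _ => (1 : ℝ)) :
    (fun p : ℕ × ℝ => exp (-(e p.1 * p.2 * I)) - 1 + e p.1 * p.2 * I) =O[atTop ×ˢ 𝓝 0]
      fun p => p.2 ^ 2 := by
  have hprod : (fun p : ℕ × ℝ => -(e p.1 * p.2 * I : ℂ)) =O[atTop ×ˢ 𝓝 0] fun p => p.2 := by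
    have h := isBigO_ofReal_fst_mul he (isBigO_of_le (atTop ×ˢ 𝓝 0) (g := fun p : ℕ × ℝ => p.2)
      (f := fun p => (p.2 * I : ℂ)) fun p => by simp)
    simpa only [mul_assoc] using h.neg_left
  have hzero : Tendsto (fun p : ℕ × ℝ => -(e p.1 * p.2 * I : ℂ)) (atTop ×ˢ 𝓝 0) (𝓝 0) :=
    hprod.trans_tendsto tendsto_snd
  have h := (exp_sub_sum_range_isBigO_pow 2).comp_tendsto hzero
  refine (h.trans (hprod.pow 2)).congr_left fun p => ?_
  simp [Finset.sum_range_succ]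
  ring

lemma isBigO_modulated_amplitude {b : ℂ → ℂ} {z : ℂ} (hb : AnalyticAt ℂ b z) {e : ℕ → ℝ}
    (he : e =O[atTop] fun _ => (1 : ℝ)) :
    (fun p : ℕ × ℝ => b (z + p.2 * I) * exp (-(e p.1 * p.2 * I)) - b z -
      (deriv b z - e p.1 * b z) * I * p.2) =O[atTop ×ˢ 𝓝 0] fun p => p.2 ^ 2 := by
  have hB : (fun p : ℕ × ℝ => b (z + p.2 * I) - b z - deriv b z * I * p.2) =O[atTop ×ˢ 𝓝 0]
      fun p => p.2 ^ 2 := by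
    refine ((isBigO_sub_sum_iteratedDeriv_mul_I hb 2).comp_tendsto
      (tendsto_snd (f := (atTop : Filter ℕ)))).congr_left fun p => ?_
    simp [Finset.sum_range_succ]
    ring
  have hE := isBigO_exp_mul_I_sub he
  have hexp : (fun p : ℕ × ℝ => exp (-(e p.1 * p.2 * I))) =O[atTop ×ˢ 𝓝 0]
      fun _ => (1 : ℝ) := .of_norm_le fun p => by simp [norm_exp]
  have hone : (fun p : ℕ × ℝ => b z + deriv b z * I * p.2) =O[atTop ×ˢ 𝓝 0] fun _ => (1 : ℝ) :=
    have hcont : Continuous fun x : ℝ => b z + deriv b z * I * x := by fun_prop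
    ((hcont.tendsto 0).comp tendsto_snd).isBigO_one ℝ
  have hcross : (fun p : ℕ × ℝ => deriv b z * (e p.1 * p.2 ^ 2)) =O[atTop ×ˢ 𝓝 0]
      fun p => p.2 ^ 2 :=
    (isBigO_ofReal_fst_mul he (isBigO_of_le _ fun p => by simp)).const_mul_left _
  have h := ((hB.mul hexp).congr_right fun _ => mul_one _).add
    (((hone.mul hE).congr_right fun _ => one_mul _).add hcross)
  refine h.congr_left fun p => ?_
  linear_combination deriv b z * e p.1 * p.2 ^ 2 * I_sq

lemma isBigO_exp_neg_mul_mul_exp_neg_mul_I {ν : ℝ} (hν : 0 < ν) (y : ℕ → ℝ) {g : ℕ × ℝ → ℂ}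
    {l : Filter ℝ} (hg : g =O[atTop ×ˢ l] fun _ => (1 : ℝ)) :
    (fun p : ℕ × ℝ => exp (-(p.1 * ν)) * exp (-(y p.1 * p.2 * I)) * g p) =O[atTop ×ˢ l]
      fun p => ((p.1 : ℝ) ^ 2)⁻¹ := by
  have hexp := (isBigO_pow_mul_exp_neg_mul_inv_sq hν 0).comp_tendsto (tendsto_fst (g := l))
  refine (((isBigO_of_le _ fun p => ?_).trans hexp).mul hg).congr_right fun _ => mul_one _
  simp [norm_exp, mul_comm]

variable {N : ℂ → ℂ}

lemma isBigO_second_root_pow_mul (hN : ContinuousAt N σ) (hNσ : 0 < (N σ).re) {g : ℂ → ℂ}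
    (hg : ContinuousAt g σ) :
    (fun p : ℕ × ℝ => (-exp (-N (σ + p.2 * I))) ^ p.1 * g (σ + p.2 * I)) =O[atTop ×ˢ 𝓝 0]
      fun _ => (1 : ℝ) := by
  have hline : Tendsto (fun p : ℕ × ℝ => (σ + p.2 * I : ℂ)) (atTop ×ˢ 𝓝 0) (𝓝 σ) :=
    tendsto_add_ofReal_mul_I.comp tendsto_snd
  have hre : ∀ᶠ p : ℕ × ℝ in atTop ×ˢ 𝓝 0, 0 < (N (σ + p.2 * I)).re :=
    ((continuous_re.tendsto _).comp (hN.tendsto.comp hline)).eventually (lt_mem_nhds hNσ)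
  refine (IsBigO.of_bound 1 ?_).mul ((hg.tendsto.comp hline).isBigO_one ℝ)
    |>.congr_right fun _ => mul_one (1 : ℝ)
  filter_upwards [hre] with p hp
  rw [norm_pow, norm_neg, norm_exp, norm_one, one_mul]
  exact pow_le_one₀ (Real.exp_pos _).le (Real.exp_le_one_iff.2 (by simpa using hp.le))

lemma isBigO_saddle_near {ξ : ℝ} (hν : 0 < ν) (h₀ : ContinuousAt (k 0) σ)
    (h₁ : ContinuousAt (k 1) σ) (hk : ∀ n z, k (n + 2) z = 2 * (r * sinh z) * k (n + 1) z + k n z)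
    (hN : ContinuousAt N σ) (hNσ : N σ = ν) (hsinh : ∀ᶠ z in 𝓝 (σ : ℂ), sinh (N z) = r * sinh z)
    (y : ℕ → ℝ) :
    (fun p : ℕ × ℝ => exp (-(p.1 * ν)) * k p.1 (σ + p.2 * I) * exp (-(y p.1 * p.2 * I)) -
        binetCoeff (k 0 (σ + p.2 * I)) (k 1 (σ + p.2 * I)) (N (σ + p.2 * I)) *
          exp (-((y p.1 - p.1 * ξ : ℝ) * p.2 * I)) *
          exp (p.1 * (N (σ + p.2 * I) - N σ - ξ * p.2 * I)))
      =O[atTop ×ˢ 𝓝 0] fun p => ((p.1 : ℝ) ^ 2)⁻¹ := by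
  have hcosh : cosh (N σ) ≠ 0 := by
    rw [hNσ, ← ofReal_cosh]
    exact ofReal_ne_zero.2 (Real.cosh_pos ν).ne'
  have hsecond := isBigO_second_root_pow_mul hN (by simpa [hNσ] using hν)
    (g := fun z => (k 1 z - exp (N z) * k 0 z) / (2 * cosh (N z)))
    (by fun_prop (disch := simpa using hcosh))
  have hline : Tendsto (fun p : ℕ × ℝ => (σ + p.2 * I : ℂ)) (atTop ×ˢ 𝓝 0) (𝓝 σ) :=
    tendsto_add_ofReal_mul_I.comp tendsto_snd
  refine (isBigO_exp_neg_mul_mul_exp_neg_mul_I hν y hsecond).neg_left.congr' ?_ .rfl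
  filter_upwards [hline.eventually hsinh, (hN.tendsto.comp hline).eventually
    (continuous_cosh.continuousAt.eventually_ne hcosh)] with ⟨n, x⟩ hs hc
  have hbinet := eq_binetCoeff_mul_exp_pow_sub (u := fun n => k n (σ + x * I)) hc
    (fun n => by rw [Function.comp_apply, hs, hk]) n
  have hphase : exp (-((y n - n * ξ : ℝ) * x * I)) * exp (n * (N (σ + x * I) - N σ - ξ * x * I)) =
      exp (-(n * ν)) * exp (-(y n * x * I)) * exp (N (σ + x * I)) ^ n := by
    rw [hNσ, ← exp_nat_mul, ← exp_add, ← exp_add, ← exp_add]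
    push_cast
    ring_nf
  simp only [Function.comp_apply] at hbinet ⊢
  rw [mul_assoc (binetCoeff _ _ _), hphase]
  linear_combination -exp (-(n * ν)) * exp (-(y n * x * I)) * hbinet

lemma analyticAt_binetCoeff {f₀ f₁ : ℂ → ℂ} {z : ℂ} (h₀ : AnalyticAt ℂ f₀ z)
    (h₁ : AnalyticAt ℂ f₁ z) (hN : AnalyticAt ℂ N z) (hz : cosh (N z) ≠ 0) :
    AnalyticAt ℂ (fun ζ => binetCoeff (f₀ ζ) (f₁ ζ) (N ζ)) z := by
  have hcosh : AnalyticAt ℂ (fun ζ => cosh (N ζ)) z :=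
    (differentiable_cosh.analyticAt _).comp hN
  unfold binetCoeff
  exact (h₁.add (hN.neg.cexp.mul h₀)).div (analyticAt_const.mul hcosh) (by simpa using hz)

lemma tanh_pos {x : ℝ} (hx : 0 < x) : 0 < Real.tanh x := by
  rw [Real.tanh_eq_sinh_div_cosh]
  exact div_pos (Real.sinh_pos_iff.2 hx) (Real.cosh_pos x)

lemma saddle_curvature_pos {ξ : ℝ} (hr : |r| < 1) (hν : 0 < ν)
    (hσν : Real.sinh ν = r * Real.sinh σ) (hξ : ξ = r * Real.cosh σ / Real.cosh ν) :
    0 < Real.tanh ν * (1 - ξ ^ 2) := by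
  have hlt : (r * Real.cosh σ) ^ 2 < Real.cosh ν ^ 2 := by
    rw [Real.cosh_sq', hσν, mul_pow, mul_pow, Real.cosh_sq']
    linarith [(sq_lt_one_iff_abs_lt_one r).2 hr]
  have hξ1 : ξ ^ 2 < 1 := by rwa [hξ, div_pow, div_lt_one (by positivity)]
  exact mul_pos (tanh_pos hν) (sub_pos.2 hξ1)

lemma exists_saddle_branch {ξ κ : ℝ} (hν : Real.sinh ν = r * Real.sinh σ)
    (hξ : ξ = r * Real.cosh σ / Real.cosh ν) (hκ : κ = Real.tanh ν * (1 - ξ ^ 2)) :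
    ∃ N : ℂ → ℂ, AnalyticAt ℂ N σ ∧ N σ = ν ∧ deriv N σ = ξ ∧ deriv (deriv N) σ = κ ∧
      ∀ᶠ z in 𝓝 (σ : ℂ), sinh (N z) = r * sinh z := by
  have hcosh : cosh (ν : ℂ) ≠ 0 := by
    rw [← ofReal_cosh]
    exact ofReal_ne_zero.2 (Real.cosh_pos ν).ne'
  have hνC : sinh (ν : ℂ) = r * sinh σ := by exact_mod_cast hν
  obtain ⟨N, hN, hNσ, hsinh⟩ := exists_analyticAt_sinh_eq (f := fun z => r * sinh z) (z := σ)
    (w := ν) (by fun_prop) hcosh hνC.symm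
  obtain ⟨hd₁, hd₂⟩ := deriv_of_sinh_eq hN hsinh
  rw [hNσ] at hd₁ hd₂
  have hderiv : deriv N σ = ξ := by
    rw [hξ]
    push_cast
    exact eq_div_of_mul_eq hcosh (by rw [mul_comm, hd₁])
  refine ⟨N, hN, hNσ, hderiv, mul_left_cancel₀ hcosh ?_, hsinh⟩
  rw [hderiv, ← hνC] at hd₂
  rw [hκ, Real.tanh_eq_sinh_div_cosh]
  push_cast
  field_simp
  linear_combination hd₂

theorem isBigO_saddle_integral {ξ κ : ℝ} (hr : |r| < 1) (hν : 0 < ν)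
    (hσν : Real.sinh ν = r * Real.sinh σ) (hξ : ξ = r * Real.cosh σ / Real.cosh ν)
    (hκ : κ = Real.tanh ν * (1 - ξ ^ 2)) (h₀ : Differentiable ℂ (k 0))
    (h₁ : Differentiable ℂ (k 1))
    (hk : ∀ n z, k (n + 2) z = 2 * (r * sinh z) * k (n + 1) z + k n z) {y : ℕ → ℝ}
    (hy : (fun n : ℕ => y n - n * ξ) =O[atTop] fun _ => (1 : ℝ)) :
    (fun n : ℕ => (∫ x in -(Real.pi / 2)..Real.pi / 2,
        exp (-(n * ν)) * k n (σ + x * I) * exp (-(y n * x * I))) -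
        binetCoeff (k 0 σ) (k 1 σ) ν * √(2 * Real.pi / (n * κ)))
      =O[atTop] fun n : ℕ => 1 / (n * √n) := by
  obtain ⟨N, hN, hNσ, hd₁, hd₂, hsinh⟩ := exists_saddle_branch hσν hξ hκ
  set B : ℂ → ℂ := fun z => binetCoeff (k 0 z) (k 1 z) (N z)
  have hB : AnalyticAt ℂ B σ := analyticAt_binetCoeff (h₀.analyticAt σ) (h₁.analyticAt σ) hN (by
    rw [hNσ, ← ofReal_cosh]
    exact ofReal_ne_zero.2 (Real.cosh_pos ν).ne')
  have hBσ : B σ = binetCoeff (k 0 σ) (k 1 σ) ν := by rw [← hNσ]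
  have hcont := continuous_of_recurrence h₀.continuous h₁.continuous hk
  rw [← hBσ]
  refine laplace_method (f := fun x => N (σ + x * I) - N σ - ξ * x * I)
    (h := fun n x => B (σ + x * I) * exp (-((y n - n * ξ : ℝ) * x * I)))
    (c := -(iteratedDeriv 3 N σ / 6 * I)) (d := fun n => (deriv B σ - (y n - n * ξ : ℝ) * B σ) * I)
    (hκ ▸ saddle_curvature_pos hr hν hσν hξ) (by positivity) (fun n => by fun_prop) ?_ ?_ ?_ ?_ ?_
  · simpa only [hd₁, hd₂] using isBigO_phase_sub_cubic hN
  · have hyC := (isBigO_ofReal_left.2 hy).mul (isBigO_const_one ℝ (B σ) atTop)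
    simp only [mul_one] at hyC
    simpa using ((isBigO_const_one ℝ (deriv B σ) atTop).sub hyC).mul (isBigO_const_one ℝ I atTop)
  · exact isBigO_modulated_amplitude (e := fun n => y n - n * ξ) hB hy
  · exact isBigO_saddle_near hν h₀.continuous.continuousAt h₁.continuous.continuousAt hk
      hN.continuousAt hNσ hsinh y
  · intro δ hδ
    have hK : IsCompact (Set.Icc (-(Real.pi / 2)) (Real.pi / 2) ∩ {x : ℝ | δ ≤ |x|}) :=
      isCompact_Icc.inter_right (isClosed_le continuous_const continuous_abs)
    refine ((isBigO_saddle_far hr hν hσν h₀.continuous h₁.continuous hk hK fun x hx => ?_).mul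
      (.of_norm_le (g := fun _ => (1 : ℝ)) fun p => ?_)).congr_right fun _ => mul_one _
    · rw [Ne, Real.sin_eq_zero_iff_of_lt_of_lt (by linarith [hx.1.1, Real.pi_pos])
        (by linarith [hx.1.2, Real.pi_pos])]
      exact abs_pos.1 (hδ.trans_le hx.2)
    · simp [norm_exp]

end Saddle

/-! ### Fourier inversion for translation-invariant walks -/

section Walk

open Complex

variable {E : Type*} [NormedAddCommGroup E] [NormedSpace ℂ E]

/-- One step of the walk on `ℤ → E` with coefficients `P`, `Q`, see `walkStep_eq_qwStep`. -/
def walkStep (P Q : E →L[ℂ] E) (f : ℤ → E) (x : ℤ) : E := P (f (x + 1)) + Q (f (x - 1))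

/-- The Fourier symbol of `walkStep P Q`: the operator by which it acts on `x ↦ w ^ (-x) • u`. -/
def walkSymbol (P Q : E →L[ℂ] E) (w : ℂ) : E →L[ℂ] E := w⁻¹ • P + w • Q

variable (P Q : E →L[ℂ] E)

lemma walkSymbol_neg_pow (w : ℂ) (n : ℕ) :
    walkSymbol P Q (-w) ^ n = (-1 : ℂ) ^ n • walkSymbol P Q w ^ n := by
  have hneg : walkSymbol P Q (-w) = (-1 : ℂ) • walkSymbol P Q w := by
    simp only [walkSymbol, inv_neg, neg_smul, smul_add, one_smul]
  rw [hneg, smul_pow]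

lemma continuous_walkSymbol_comp {w : ℝ → ℂ} (hw : Continuous w) (hw₀ : ∀ x, w x ≠ 0) :
    Continuous fun x => walkSymbol P Q (w x) :=
  ((hw.inv₀ hw₀).smul continuous_const).add (hw.smul continuous_const)

lemma continuous_zpow_smul_walkSymbol_pow {c : ℂ} (hc : c ≠ 0) (φ : E) (n : ℕ) (m : ℤ) :
    Continuous fun x : ℝ => (c * exp (x * I)) ^ m • (walkSymbol P Q (c * exp (x * I)) ^ n) φ := by
  have hw : Continuous fun x : ℝ => c * exp (x * I) := by fun_prop
  have hw₀ (x : ℝ) : c * exp (x * I) ≠ 0 := mul_ne_zero hc (exp_ne_zero _)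
  exact (hw.zpow₀ m fun x => .inl (hw₀ x)).smul
    (((continuous_walkSymbol_comp P Q hw hw₀).pow n).clm_apply continuous_const)

lemma integral_zpow_circle {c : ℂ} (m : ℤ) :
    ∫ x in -(Real.pi / 2)..(Real.pi / 2 + Real.pi), (c * exp (x * I)) ^ m =
      if m = 0 then (2 * Real.pi : ℂ) else 0 := by
  split_ifs with hm
  · simp only [hm, zpow_zero, intervalIntegral.integral_const, real_smul]
    push_cast
    ring
  · have hpow (x : ℝ) : (c * exp (x * I)) ^ m = c ^ m * exp (m * I * x) := by
      rw [mul_zpow, ← exp_int_mul]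
      ring_nf
    have hperiod : exp (m * I * (Real.pi / 2 + Real.pi : ℝ)) =
        exp (m * I * (-(Real.pi / 2) : ℝ)) :=
      exp_eq_exp_iff_exists_int.2 ⟨m, by push_cast; ring⟩
    simp only [hpow, intervalIntegral.integral_const_mul]
    rw [integral_exp_mul_complex (by simpa using hm), hperiod, sub_self, zero_div, mul_zero]

variable [CompleteSpace E]

/-- As the walk has finite range, the transform of `(walkStep P Q)^[n] (Pi.single 0 φ)` is a
Laurent polynomial and can be inverted on a circle of any radius `‖c‖`. -/
lemma two_pi_smul_walkStep_iterate {c : ℂ} (hc : c ≠ 0) (φ : E) (n : ℕ) (y : ℤ) :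
    (2 * Real.pi : ℂ) • (walkStep P Q)^[n] (Pi.single 0 φ) y =
      ∫ x in -(Real.pi / 2)..(Real.pi / 2 + Real.pi),
        (c * exp (x * I)) ^ (-y) • (walkSymbol P Q (c * exp (x * I)) ^ n) φ := by
  have hcont := continuous_zpow_smul_walkSymbol_pow P Q hc φ
  induction n generalizing y with
  | zero =>
    simp only [Function.iterate_zero, id_eq, pow_zero, one_apply_eq_self,
      intervalIntegral.integral_smul_const, integral_zpow_circle, neg_eq_zero, Pi.single_apply,
      ite_smul, smul_ite, zero_smul, smul_zero]
  | succ n ih =>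
    have hP := (P.continuous.comp (hcont n (-(y + 1)))).intervalIntegrable (μ := volume)
    have hQ := (Q.continuous.comp (hcont n (-(y - 1)))).intervalIntegrable (μ := volume)
    simp only [Function.comp_def] at hP hQ
    rw [Function.iterate_succ_apply', walkStep, smul_add, ← map_smul, ← map_smul, ih, ih,
      ← P.intervalIntegral_comp_comm ((hcont n _).intervalIntegrable _ _),
      ← Q.intervalIntegral_comp_comm ((hcont n _).intervalIntegrable _ _),
      ← intervalIntegral.integral_add (hP _ _) (hQ _ _)]
    refine intervalIntegral.integral_congr fun x _ => ?_
    have hw₀ : c * exp (x * I) ≠ 0 := mul_ne_zero hc (exp_ne_zero _)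
    simp only [walkSymbol, pow_succ', mul_apply_eq_comp, add_apply, smul_apply, map_smul, smul_add,
      smul_smul]
    rw [neg_add, ← sub_eq_add_neg, zpow_sub_one₀ hw₀, neg_sub, sub_eq_add_neg, add_comm 1,
      zpow_add_one₀ hw₀]

lemma two_pi_smul_walkStep_iterate_eq_half_circle {c : ℂ} (hc : c ≠ 0) (φ : E) (n : ℕ) (y : ℤ) :
    (2 * Real.pi : ℂ) • (walkStep P Q)^[n] (Pi.single 0 φ) y =
      (1 + (-1 : ℂ) ^ ((n : ℤ) + y)) • ∫ x in -(Real.pi / 2)..Real.pi / 2,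
        (c * exp (x * I)) ^ (-y) • (walkSymbol P Q (c * exp (x * I)) ^ n) φ := by
  have hcont := continuous_zpow_smul_walkSymbol_pow P Q hc φ n (-y)
  set G : ℝ → E := fun x => (c * exp (x * I)) ^ (-y) • (walkSymbol P Q (c * exp (x * I)) ^ n) φ
  have hshift (x : ℝ) : G (x + Real.pi) = (-1 : ℂ) ^ ((n : ℤ) + y) • G x := by
    have hw : c * exp ((x + Real.pi : ℝ) * I) = -(c * exp (x * I)) := by
      push_cast
      rw [add_mul, exp_add, exp_pi_mul_I]
      ring
    have hy : (-1 : ℂ) ^ (-y) = (-1 : ℂ) ^ y := by rw [zpow_neg, ← inv_zpow, inv_neg_one]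
    simp only [G]
    rw [hw, walkSymbol_neg_pow, neg_eq_neg_one_mul (c * _), mul_zpow, hy,
      zpow_add₀ (by norm_num), zpow_natCast]
    rw [smul_apply, smul_smul, smul_smul]
    congr 1
    ring
  have hsecond : ∫ x in (Real.pi / 2)..(Real.pi / 2 + Real.pi), G x =
      (-1 : ℂ) ^ ((n : ℤ) + y) • ∫ x in -(Real.pi / 2)..Real.pi / 2, G x := by
    rw [← intervalIntegral.integral_smul, ← intervalIntegral.integral_congr fun x _ => hshift x,
      intervalIntegral.integral_comp_add_right]
    ring_nf
  rw [two_pi_smul_walkStep_iterate P Q hc, ← intervalIntegral.integral_add_adjacent_intervals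
    (hcont.intervalIntegrable _ (Real.pi / 2)) (hcont.intervalIntegrable _ _), hsecond, add_smul,
    one_smul]

end Walk

/-! ### The transition amplitude as a saddle-point integral -/

section Amplitude

open Complex ComplexConjugate

/-- The matrix `P` of the walk `qwStep a b`, as an operator on `ℂ²`. -/
def qwLeft (a b : ℂ) : ℂ × ℂ →L[ℂ] ℂ × ℂ :=
  (ContinuousLinearMap.fst ℂ ℂ ℂ).smulRight (a, -conj b)

/-- The matrix `Q` of the walk `qwStep a b`, as an operator on `ℂ²`. -/
def qwRight (a b : ℂ) : ℂ × ℂ →L[ℂ] ℂ × ℂ :=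
  (ContinuousLinearMap.snd ℂ ℂ ℂ).smulRight (b, conj a)

/-- The functional `u ↦ innC u ψ`. -/
def innCLeft (ψ : ℂ × ℂ) : ℂ × ℂ →L[ℂ] ℂ :=
  conj ψ.1 • ContinuousLinearMap.fst ℂ ℂ ℂ + conj ψ.2 • ContinuousLinearMap.snd ℂ ℂ ℂ

/-- The Fourier symbol of the walk at `w = i ω exp z`, `ω = a / |a|`, divided by `i`. This choice of
base point turns its trace into `2 |a| sinh z` and places the saddle point on the real axis. -/
def hiddenSymbol (a b z : ℂ) : ℂ × ℂ →L[ℂ] ℂ × ℂ :=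
  (a / ‖a‖ * exp z) • qwRight a b - (a / ‖a‖ * exp z)⁻¹ • qwLeft a b

variable {a b : ℂ} {φ ψ : ℂ × ℂ}

lemma walkStep_eq_qwStep : walkStep (qwLeft a b) (qwRight a b) = qwStep a b := by
  ext f x <;> simp [walkStep, qwStep, qwLeft, qwRight, mul_comm]

lemma qwDelta_eq_single : qwDelta φ = Pi.single 0 φ := by
  ext x <;> simp [qwDelta, Pi.single_apply]

lemma innCLeft_apply (u : ℂ × ℂ) : innCLeft ψ u = innC u ψ := by
  simp [innCLeft, innC, mul_comm]

lemma walkSymbol_qw (z : ℂ) : walkSymbol (qwLeft a b) (qwRight a b) (I * (a / ‖a‖) * exp z) =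
    I • hiddenSymbol a b z := by
  rw [walkSymbol, hiddenSymbol, smul_sub, smul_smul, smul_smul, mul_assoc, mul_inv, inv_I, neg_mul,
    neg_smul]
  abel

lemma div_norm_ne_zero (ha : a ≠ 0) : a / (‖a‖ : ℂ) ≠ 0 :=
  div_ne_zero ha (by simpa using ha)

/-- Cayley–Hamilton. -/
lemma hiddenSymbol_sq (hab1 : ‖a‖ ^ 2 + ‖b‖ ^ 2 = 1) (ha : a ≠ 0) (z : ℂ) :
    hiddenSymbol a b z ^ 2 = (2 * (‖a‖ * sinh z)) • hiddenSymbol a b z + 1 := by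
  have hr : (‖a‖ : ℂ) ≠ 0 := by simpa using ha
  have hdet : a * conj a + b * conj b = 1 := by
    rw [mul_conj', mul_conj']
    exact_mod_cast hab1
  have hz := exp_ne_zero z
  refine ContinuousLinearMap.ext fun u => Prod.ext ?_ ?_ <;>
    simp only [pow_two, hiddenSymbol, qwLeft, qwRight, mul_apply_eq_comp, add_apply, sub_apply,
      smul_apply, ContinuousLinearMap.smulRight_apply, ContinuousLinearMap.coe_fst',
      ContinuousLinearMap.coe_snd', one_apply_eq_self, Prod.fst_add, Prod.snd_add, Prod.fst_sub,
      Prod.snd_sub, Prod.smul_fst, Prod.smul_snd, smul_eq_mul, sinh, exp_neg] <;>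
    field_simp <;> rw [← mul_conj' a]
  · linear_combination a * conj a * exp z ^ 2 * u.1 * hdet
  · linear_combination a * (a * conj a) * exp z ^ 2 * u.2 * hdet

lemma innC_hiddenSymbol_pow_add_two (hab1 : ‖a‖ ^ 2 + ‖b‖ ^ 2 = 1) (ha : a ≠ 0) (n : ℕ) (z : ℂ) :
    innC ((hiddenSymbol a b z ^ (n + 2)) φ) ψ =
      2 * (‖a‖ * sinh z) * innC ((hiddenSymbol a b z ^ (n + 1)) φ) ψ +
        innC ((hiddenSymbol a b z ^ n) φ) ψ := by
  have hsq := congrArg (innCLeft ψ) (DFunLike.congr_fun (hiddenSymbol_sq hab1 ha z)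
    ((hiddenSymbol a b z ^ n) φ))
  rw [← mul_apply_eq_comp, ← pow_add, add_comm 2, add_apply, smul_apply, ← mul_apply_eq_comp,
    ← pow_succ', one_apply_eq_self] at hsq
  simpa only [map_add, map_smul, smul_eq_mul, innCLeft_apply] using hsq

lemma differentiable_hiddenSymbol (a b : ℂ) : Differentiable ℂ (hiddenSymbol a b) := by
  unfold hiddenSymbol
  simp only [mul_inv, ← exp_neg]
  fun_prop

lemma I_pow_mul_I_zpow_neg (n : ℕ) (y : ℤ) :
    I ^ n * I ^ (-y) = exp (Real.pi * I * (((n : ℝ) - y) / 2 : ℝ)) := by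
  have hI : I ^ ((n : ℤ) - y) = exp (Real.pi / 2 * I) ^ ((n : ℤ) - y) := by
    rw [exp_pi_div_two_mul_I]
  rw [← zpow_natCast, ← zpow_add₀ I_ne_zero, ← sub_eq_add_neg, hI, ← exp_int_mul]
  push_cast
  ring_nf

theorem innC_qwStep_iterate (ha : a ≠ 0) (σ : ℝ) (n : ℕ) (y : ℤ) :
    innC ((qwStep a b)^[n] (qwDelta φ) y) ψ =
      (1 + (-1 : ℂ) ^ ((n : ℤ) + y)) * (a / (‖a‖ : ℂ)) ^ (-y) *
        exp (Real.pi * I * (((n : ℝ) - y) / 2 : ℝ)) * (Real.exp (-(y * σ)) / (2 * Real.pi) : ℝ) *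
        ∫ x in -(Real.pi / 2)..Real.pi / 2,
          innC ((hiddenSymbol a b (σ + x * I) ^ n) φ) ψ * exp (-((y : ℝ) * x * I)) := by
  set c : ℂ := I * (a / ‖a‖) * exp σ with hc
  have hc₀ : c ≠ 0 := mul_ne_zero (mul_ne_zero I_ne_zero (div_norm_ne_zero ha)) (exp_ne_zero _)
  have hpoint (x : ℝ) : innCLeft ψ ((c * exp (x * I)) ^ (-y) •
      (walkSymbol (qwLeft a b) (qwRight a b) (c * exp (x * I)) ^ n) φ) =
      I ^ n * I ^ (-y) * (a / ‖a‖) ^ (-y) * exp (-(y * σ)) *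
        (innC ((hiddenSymbol a b (σ + x * I) ^ n) φ) ψ * exp (-((y : ℝ) * x * I))) := by
    have hw : c * exp (x * I) = I * (a / ‖a‖) * exp (σ + x * I) := by rw [hc, exp_add, mul_assoc]
    have hexp : exp (σ + x * I) ^ (-y) = exp (-(y * σ)) * exp (-((y : ℝ) * x * I)) := by
      rw [← exp_int_mul, ← exp_add]
      push_cast
      ring_nf
    rw [hw, walkSymbol_qw, smul_pow, smul_apply, map_smul, map_smul, innCLeft_apply, mul_zpow,
      mul_zpow, hexp, smul_eq_mul, smul_eq_mul]
    ring
  have hhalf := congrArg (innCLeft ψ) (two_pi_smul_walkStep_iterate_eq_half_circle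
    (qwLeft a b) (qwRight a b) hc₀ φ n y)
  rw [map_smul, map_smul, ← ContinuousLinearMap.intervalIntegral_comp_comm _
    ((continuous_zpow_smul_walkSymbol_pow _ _ hc₀ φ n (-y)).intervalIntegrable _ _),
    walkStep_eq_qwStep, ← qwDelta_eq_single, innCLeft_apply] at hhalf
  simp only [hpoint, intervalIntegral.integral_const_mul, smul_eq_mul] at hhalf
  rw [I_pow_mul_I_zpow_neg] at hhalf
  have hpi : (2 * Real.pi : ℂ) ≠ 0 := by exact_mod_cast Real.two_pi_pos.ne'
  refine mul_left_cancel₀ hpi (hhalf.trans ?_)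
  push_cast
  field_simp

end Amplitude

/-! ### The rate function as a Legendre transform -/

section Rate

/-- The value `S` of `r sinh σ` at the saddle point `σ`. The saddle point equation
`r cosh σ = x √(1 + (r sinh σ)²)` is quadratic in `S`, with the positive solution below. -/
def saddleSinh (r x : ℝ) : ℝ := √(x ^ 2 - r ^ 2) / √(1 - x ^ 2)

/-- The saddle point of `σ ↦ arsinh (r sinh σ) - x σ`, for `r < x < 1`. -/
def saddlePoint (r x : ℝ) : ℝ := Real.arsinh (saddleSinh r x / r)

/-- The value of `arsinh (r sinh σ)` at `σ = saddlePoint r x`. -/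
def saddleExponent (r x : ℝ) : ℝ := Real.arsinh (saddleSinh r x)

variable {r q x : ℝ}

lemma saddleSinh_pos (hr : 0 ≤ r) (hrx : r < x) (hx : x < 1) : 0 < saddleSinh r x := by
  have hnum : 0 < x ^ 2 - r ^ 2 := by nlinarith
  have hden : 0 < 1 - x ^ 2 := by nlinarith
  exact div_pos (Real.sqrt_pos.2 hnum) (Real.sqrt_pos.2 hden)

lemma contDiffAt_saddleSinh (hr : 0 ≤ r) (hrx : r < x) (hx : x < 1) {n : WithTop ℕ∞} :
    ContDiffAt ℝ n (saddleSinh r) x := by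
  have hnum : x ^ 2 - r ^ 2 ≠ 0 := by nlinarith
  have hden : 0 < 1 - x ^ 2 := by nlinarith
  exact (((contDiffAt_id.pow 2).sub contDiffAt_const).sqrt hnum).div
    ((contDiffAt_const.sub (contDiffAt_id.pow 2)).sqrt hden.ne') (Real.sqrt_pos.2 hden).ne'

lemma contDiffAt_saddlePoint (hr : 0 ≤ r) (hrx : r < x) (hx : x < 1) {n : WithTop ℕ∞} :
    ContDiffAt ℝ n (saddlePoint r) x :=
  Real.contDiff_arsinh.contDiffAt.comp x ((contDiffAt_saddleSinh hr hrx hx).div_const r)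

lemma contDiffAt_saddleExponent (hr : 0 ≤ r) (hrx : r < x) (hx : x < 1) {n : WithTop ℕ∞} :
    ContDiffAt ℝ n (saddleExponent r) x :=
  Real.contDiff_arsinh.contDiffAt.comp x (contDiffAt_saddleSinh hr hrx hx)

lemma saddleExponent_pos (hr : 0 ≤ r) (hrx : r < x) (hx : x < 1) : 0 < saddleExponent r x :=
  Real.arsinh_pos_iff.2 (saddleSinh_pos hr hrx hx)

lemma tanh_saddleExponent_mul_pos (hr : 0 ≤ r) (hrx : r < x) (hx : x < 1) :
    0 < Real.tanh (saddleExponent r x) * (1 - x ^ 2) :=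
  mul_pos (tanh_pos (saddleExponent_pos hr hrx hx)) (by nlinarith)

lemma sinh_saddleExponent (hr : r ≠ 0) :
    Real.sinh (saddleExponent r x) = r * Real.sinh (saddlePoint r x) := by
  rw [saddleExponent, saddlePoint, Real.sinh_arsinh, Real.sinh_arsinh, mul_div_cancel₀ _ hr]

lemma cosh_saddleExponent (hr : 0 ≤ r) (hq : 0 ≤ q) (hrq : r ^ 2 + q ^ 2 = 1) (hrx : r < x)
    (hx : x < 1) : Real.cosh (saddleExponent r x) = q / √(1 - x ^ 2) := by
  have hnum : 0 ≤ x ^ 2 - r ^ 2 := by nlinarith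
  have hden : 0 < 1 - x ^ 2 := by nlinarith
  rw [saddleExponent, Real.cosh_arsinh,
    Real.sqrt_eq_iff_mul_self_eq (by positivity) (by positivity), saddleSinh, ← pow_two, div_pow,
    div_pow, Real.sq_sqrt hnum, Real.sq_sqrt hden.le]
  field_simp
  linear_combination -hrq

lemma cosh_saddlePoint (hr : 0 < r) (hq : 0 ≤ q) (hrq : r ^ 2 + q ^ 2 = 1) (hrx : r < x)
    (hx : x < 1) : Real.cosh (saddlePoint r x) = q * x / (r * √(1 - x ^ 2)) := by
  have hnum : 0 ≤ x ^ 2 - r ^ 2 := by nlinarith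
  have hden : 0 < 1 - x ^ 2 := by nlinarith
  have hx₀ : 0 < x := hr.trans hrx
  rw [saddlePoint, Real.cosh_arsinh, Real.sqrt_eq_iff_mul_self_eq (by positivity) (by positivity),
    saddleSinh, ← pow_two, div_pow, div_pow, div_pow, mul_pow, mul_pow, Real.sq_sqrt hnum,
    Real.sq_sqrt hden.le]
  field_simp
  linear_combination -x ^ 2 * hrq

lemma saddlePoint_equation (hr : 0 < r) (hrx : r < x) (hx : x < 1) :
    x = r * Real.cosh (saddlePoint r x) / Real.cosh (saddleExponent r x) := by
  have hr₁ : 0 < 1 - r ^ 2 := by nlinarith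
  have hden : 0 < 1 - x ^ 2 := by nlinarith
  have hrq : r ^ 2 + √(1 - r ^ 2) ^ 2 = 1 := by rw [Real.sq_sqrt hr₁.le, add_sub_cancel]
  have hq := Real.sqrt_pos.2 hr₁
  rw [cosh_saddlePoint hr hq.le hrq hrx hx, cosh_saddleExponent hr.le hq.le hrq hrx hx]
  field_simp

/-- Envelope theorem: at the critical point `saddlePoint r x`, only the explicit `x` contributes. -/
lemma hasDerivAt_legendre (hr : 0 < r) (hrx : r < x) (hx : x < 1) :
    HasDerivAt (fun t => t * saddlePoint r t - saddleExponent r t) (saddlePoint r x) x := by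
  obtain ⟨d, hd⟩ : ∃ d, HasDerivAt (saddleSinh r) d x :=
    ⟨_, ((contDiffAt_saddleSinh hr.le hrx hx).differentiableAt one_ne_zero).hasDerivAt⟩
  have hσ : HasDerivAt (saddlePoint r) ((Real.cosh (saddlePoint r x))⁻¹ * (d / r)) x := by
    rw [saddlePoint, Real.cosh_arsinh]
    exact (hd.div_const r).arsinh
  have hν : HasDerivAt (saddleExponent r) ((Real.cosh (saddleExponent r x))⁻¹ * d) x := by
    rw [saddleExponent, Real.cosh_arsinh]
    exact hd.arsinh
  have hcritical : x * ((Real.cosh (saddlePoint r x))⁻¹ * (d / r)) =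
      (Real.cosh (saddleExponent r x))⁻¹ * d := by
    nth_rw 1 [saddlePoint_equation hr hrx hx]
    field_simp
  refine (((hasDerivAt_id x).mul hσ).sub hν).congr_deriv ?_
  rw [id_eq, hcritical, one_mul, add_sub_cancel_right]

lemma isBigO_legendre_sub_tangent (hr : 0 < r) (hrx : r < x) (hx : x < 1) :
    (fun t => ((x + t) * saddlePoint r (x + t) - saddleExponent r (x + t)) -
        (x * saddlePoint r x - saddleExponent r x) - saddlePoint r x * t)
      =O[𝓝 0] fun t => t ^ 2 := by
  have hana : AnalyticAt ℝ (fun t => t * saddlePoint r t - saddleExponent r t) x :=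
    ((contDiffAt_id.mul (contDiffAt_saddlePoint hr.le hrx hx)).sub
      (contDiffAt_saddleExponent hr.le hrx hx)).analyticAt
  refine (isBigO_sub_sum_iteratedDeriv hana 2).congr_left fun t => ?_
  simp only [Finset.sum_range_succ, Finset.sum_range_zero, iteratedDeriv_zero, iteratedDeriv_one,
    (hasDerivAt_legendre hr hrx hx).deriv]
  norm_num
  ring

variable {a b : ℂ}

lemma HQ_eq_legendre (ha : a ≠ 0) (hab1 : ‖a‖ ^ 2 + ‖b‖ ^ 2 = 1) (hax : ‖a‖ < x) (hx : x < 1) :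
    HQ a b x = 2 * (x * saddlePoint ‖a‖ x - saddleExponent ‖a‖ x) := by
  have hr := norm_pos_iff.2 ha
  have hx₀ : 0 < x := hr.trans hax
  have hnum : 0 < √(x ^ 2 - ‖a‖ ^ 2) := Real.sqrt_pos.2 (by nlinarith)
  have hden : 0 < 1 - x ^ 2 := by nlinarith
  have hu := Real.sqrt_pos.2 hden
  have hσ : saddlePoint ‖a‖ x = Real.log (‖b‖ * x + √(x ^ 2 - ‖a‖ ^ 2)) -
      (Real.log ‖a‖ + Real.log (1 - x ^ 2) / 2) := by
    rw [← Real.log_sqrt hden.le, ← Real.log_mul hr.ne' hu.ne',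
      ← Real.log_div (by positivity) (by positivity), ← Real.log_exp (saddlePoint ‖a‖ x),
      ← Real.cosh_add_sinh, cosh_saddlePoint hr (norm_nonneg b) hab1 hax hx, saddlePoint,
      Real.sinh_arsinh, saddleSinh, div_div, mul_comm ‖a‖, ← add_div]
  have hν : saddleExponent ‖a‖ x =
      Real.log (‖b‖ + √(x ^ 2 - ‖a‖ ^ 2)) - Real.log (1 - x ^ 2) / 2 := by
    rw [← Real.log_sqrt hden.le, ← Real.log_div (by positivity) hu.ne',
      ← Real.log_exp (saddleExponent ‖a‖ x), ← Real.cosh_add_sinh,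
      cosh_saddleExponent hr.le (norm_nonneg b) hab1 hax hx, saddleExponent, Real.sinh_arsinh,
      saddleSinh, ← add_div]
  rw [HQ, abs_of_pos hx₀, hσ, hν]
  ring

lemma div_eq_inv_tanh_mul (hab1 : ‖a‖ ^ 2 + ‖b‖ ^ 2 = 1) (hax : ‖a‖ < x) (hx : x < 1) :
    ‖b‖ / ((1 - x ^ 2) * √(x ^ 2 - ‖a‖ ^ 2)) =
      (Real.tanh (saddleExponent ‖a‖ x) * (1 - x ^ 2))⁻¹ := by
  have hx₀ : 0 < x := (norm_nonneg a).trans_lt hax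
  have hu : √(1 - x ^ 2) ≠ 0 := (Real.sqrt_pos.2 (by nlinarith)).ne'
  rw [Real.tanh_eq_sinh_div_cosh, cosh_saddleExponent (norm_nonneg a) (norm_nonneg b) hab1 hax hx,
    saddleExponent, Real.sinh_arsinh, saddleSinh, div_div_div_cancel_right₀ hu, div_mul_eq_mul_div,
    inv_div, mul_comm (1 - x ^ 2)]

/-- The linear term of the Taylor expansion cancels, so an `O(1)` error in `y n` only costs `O(1/n)`
in the exponent. -/
lemma isBigO_exponent_defect (ha : a ≠ 0) (hab1 : ‖a‖ ^ 2 + ‖b‖ ^ 2 = 1) (hax : ‖a‖ < x)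
    (hx : x < 1) {y : ℕ → ℝ} (hy : (fun n : ℕ => y n - n * x) =O[atTop] fun _ => (1 : ℝ)) :
    (fun n : ℕ => n * saddleExponent ‖a‖ x - y n * saddlePoint ‖a‖ x + n * HQ a b (y n / n) / 2)
      =O[atTop] fun n : ℕ => 1 / (n : ℝ) := by
  have hinv : Tendsto (fun n : ℕ => 1 / (n : ℝ)) atTop (𝓝 0) := tendsto_one_div_atTop_nhds_zero_nat
  have ht : (fun n : ℕ => y n / n - x) =O[atTop] fun n : ℕ => 1 / (n : ℝ) := by
    refine ((isBigO_refl (fun n : ℕ => 1 / (n : ℝ)) atTop).mul hy).congr' ?_ (by simp)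
    filter_upwards [eventually_gt_atTop 0] with n hn
    field_simp
  have ht₀ : Tendsto (fun n : ℕ => y n / n - x) atTop (𝓝 0) := ht.trans_tendsto hinv
  have hyx : Tendsto (fun n : ℕ => y n / n) atTop (𝓝 x) := by simpa using ht₀.add_const x
  have htaylor := (isBigO_legendre_sub_tangent (norm_pos_iff.2 ha) hax hx).comp_tendsto ht₀
  refine ((isBigO_refl (fun n : ℕ => (n : ℝ)) atTop).mul (htaylor.trans (ht.pow 2))).congr' ?_ ?_
  · filter_upwards [eventually_gt_atTop 0, hyx.eventually_const_lt hax, hyx.eventually_lt_const hx]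
      with n hn hlow hupp
    rw [HQ_eq_legendre ha hab1 hlow hupp, Function.comp_apply, add_sub_cancel]
    field_simp
    ring
  · filter_upwards [eventually_gt_atTop 0] with n hn
    field_simp

end Rate

/-! ### Asymptotics in the hidden region -/

section HiddenRegion

open Complex ComplexConjugate

/-- The explicit factor in the asymptotics of the amplitude at `(n, y)`, where `y ≈ n ξ`. -/
def hiddenPrefactor (a b : ℂ) (ξ : ℝ) (n : ℕ) (y : ℤ) : ℂ :=
  (1 + (-1 : ℂ) ^ ((n : ℤ) + y)) * (a / (‖a‖ : ℂ)) ^ (-y) *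
    ((Real.exp (-(n : ℝ) * HQ a b ((y : ℝ) / (n : ℝ)) / 2) /
        Real.sqrt (2 * Real.pi * (n : ℝ)) : ℝ) : ℂ) *
    ((Real.sqrt (‖b‖ / ((1 - ξ ^ 2) * Real.sqrt (ξ ^ 2 - ‖a‖ ^ 2))) : ℝ) : ℂ) *
    exp ((Real.pi : ℂ) * I * ((((n : ℝ) - |(y : ℝ)|) / 2 : ℝ) : ℂ))

/-- The function `F_ψ` of the asymptotics, for `|a| < η < 1`. -/
def hiddenAmplitude (a b : ℂ) (φ ψ : ℂ × ℂ) (η : ℝ) : ℂ :=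
  binetCoeff (innC φ ψ) (innC (hiddenSymbol a b (saddlePoint ‖a‖ η) φ) ψ) (saddleExponent ‖a‖ η)

variable {a b : ℂ} {φ ψ : ℂ × ℂ} {ξ : ℝ}

lemma differentiable_innC_hiddenSymbol_pow (n : ℕ) :
    Differentiable ℂ fun z => innC ((hiddenSymbol a b z ^ n) φ) ψ := by
  simp only [← innCLeft_apply]
  exact (innCLeft ψ).differentiable.comp
    (((differentiable_hiddenSymbol a b).pow n).clm_apply (differentiable_const φ))

lemma contDiffAt_hiddenAmplitude {η : ℝ} (haη : ‖a‖ < η) (hη : η < 1) {n : WithTop ℕ∞} :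
    ContDiffAt ℝ n (hiddenAmplitude a b φ ψ) η := by
  have hσ : ContDiffAt ℝ n (fun t => (saddlePoint ‖a‖ t : ℂ)) η :=
    ofRealCLM.contDiff.contDiffAt.comp η (contDiffAt_saddlePoint (norm_nonneg a) haη hη)
  have hν : ContDiffAt ℝ n (fun t => (saddleExponent ‖a‖ t : ℂ)) η :=
    ofRealCLM.contDiff.contDiffAt.comp η (contDiffAt_saddleExponent (norm_nonneg a) haη hη)
  have hsymbol : ContDiff ℝ n fun z => innC (hiddenSymbol a b z φ) ψ :=
    (by simpa only [pow_one] using differentiable_innC_hiddenSymbol_pow 1 :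
      Differentiable ℂ _).contDiff.restrict_scalars ℝ
  have hcosh : 2 * cosh (saddleExponent ‖a‖ η : ℂ) ≠ 0 := by
    exact_mod_cast (mul_pos two_pos (Real.cosh_pos _)).ne'
  have hdenom : ContDiffAt ℝ n (fun t => 2 * cosh (saddleExponent ‖a‖ t : ℂ)) η :=
    contDiffAt_const.mul ((contDiff_cosh.restrict_scalars ℝ).contDiffAt.comp η hν)
  unfold hiddenAmplitude binetCoeff
  simp only [div_eq_mul_inv]
  exact ((hsymbol.contDiffAt.comp η hσ).add (hν.neg.cexp.mul contDiffAt_const)).mul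
    (hdenom.inv hcosh)

lemma isBigO_exp_mul_sqrt_mul_sub {κ : ℝ} {D : ℕ → ℝ} {J : ℕ → ℂ} {g : ℂ} (hκ : 0 < κ)
    (hD : D =O[atTop] fun n : ℕ => 1 / (n : ℝ))
    (hJ : (fun n : ℕ => J n - g * √(2 * Real.pi / (n * κ)))
      =O[atTop] fun n : ℕ => 1 / (n * √n)) :
    (fun n : ℕ => (Real.exp (D n) * √(n * κ / (2 * Real.pi)) : ℝ) * J n - g)
      =O[atTop] fun n : ℕ => 1 / (n : ℝ) := by
  have hinv : Tendsto (fun n : ℕ => 1 / (n : ℝ)) atTop (𝓝 0) := tendsto_one_div_atTop_nhds_zero_nat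
  have hscaled : (fun n : ℕ => (√(n * κ / (2 * Real.pi)) : ℂ) * J n - g)
      =O[atTop] fun n : ℕ => 1 / (n : ℝ) := by
    have hsqrt : (fun n : ℕ => √(n * κ / (2 * Real.pi))) =O[atTop] fun n : ℕ => √n := by
      refine (isBigO_const_mul_self (√(κ / (2 * Real.pi))) _ _).congr_left fun n => ?_
      rw [← Real.sqrt_mul (by positivity), div_mul_eq_mul_div, mul_comm κ]
    refine ((isBigO_ofReal_left.2 hsqrt).mul hJ).congr' ?_ ?_
    · filter_upwards [eventually_gt_atTop 0] with n hn
      have hone : √(n * κ / (2 * Real.pi)) * √(2 * Real.pi / (n * κ)) = 1 := by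
        rw [← Real.sqrt_mul (by positivity), div_mul_div_cancel₀ (by positivity),
          div_self (by positivity), Real.sqrt_one]
      have hone' : (√(n * κ / (2 * Real.pi)) : ℂ) * √(2 * Real.pi / (n * κ)) = 1 := by
        exact_mod_cast hone
      linear_combination -g * hone'
    · filter_upwards [eventually_gt_atTop 0] with n hn
      field_simp
  have hexp : (fun n => Real.exp (D n) - 1) =O[atTop] fun n : ℕ => 1 / (n : ℝ) := by
    have hderiv := (Real.hasDerivAt_exp 0).isBigO_sub
    simp only [Real.exp_zero, sub_zero] at hderiv
    exact (hderiv.comp_tendsto (hD.trans_tendsto hinv)).trans hD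
  have hbdd : (fun n : ℕ => (√(n * κ / (2 * Real.pi)) : ℂ) * J n) =O[atTop] fun _ => (1 : ℝ) := by
    simpa only [sub_add_cancel] using
      (hscaled.trans (hinv.isBigO_one ℝ)).add (isBigO_const_const g one_ne_zero atTop)
  have hproduct := (isBigO_ofReal_left.2 hexp).mul hbdd
  simp only [mul_one] at hproduct
  refine (hproduct.add hscaled).congr_left fun n => ?_
  push_cast
  ring

lemma exp_neg_mul_div_two_pi {σ ν κ h y n : ℝ} (hκ : 0 < κ) (hn : 0 < n) :
    Real.exp (-(y * σ)) / (2 * Real.pi) =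
      Real.exp (-n * h / 2) / √(2 * Real.pi * n) * √κ⁻¹ *
        (Real.exp (n * ν - y * σ + n * h / 2) * √(n * κ / (2 * Real.pi))) *
        Real.exp (-(n * ν)) := by
  have hsqrt : √κ⁻¹ * √(n * κ / (2 * Real.pi)) / √(2 * Real.pi * n) = (2 * Real.pi)⁻¹ := by
    rw [← Real.sqrt_mul (by positivity), ← Real.sqrt_div (by positivity),
      Real.sqrt_eq_iff_mul_self_eq (by positivity) (by positivity)]
    field_simp
  have hexp : Real.exp (-(y * σ)) = Real.exp (-n * h / 2) *
      Real.exp (n * ν - y * σ + n * h / 2) * Real.exp (-(n * ν)) := by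
    rw [← Real.exp_add, ← Real.exp_add]
    ring_nf
  rw [hexp, div_eq_mul_inv, ← hsqrt]
  ring

/-- The transition amplitude at `(n, y)` divided by `hiddenPrefactor a b ξ n y`, as a saddle point
integral. The last exponential is `1` for `y ≥ 0`. -/
def hiddenQuotient (a b : ℂ) (φ ψ : ℂ × ℂ) (ξ : ℝ) (n : ℕ) (y : ℤ) : ℂ :=
  (Real.exp (n * saddleExponent ‖a‖ ξ - y * saddlePoint ‖a‖ ξ + n * HQ a b (y / n) / 2) *
      √(n * (Real.tanh (saddleExponent ‖a‖ ξ) * (1 - ξ ^ 2)) / (2 * Real.pi)) : ℝ) *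
    (∫ x in -(Real.pi / 2)..Real.pi / 2, exp (-(n * saddleExponent ‖a‖ ξ)) *
      innC ((hiddenSymbol a b (saddlePoint ‖a‖ ξ + x * I) ^ n) φ) ψ * exp (-((y : ℝ) * x * I))) *
    exp (Real.pi * I * ((|(y : ℝ)| - y) / 2 : ℝ))

lemma innC_qwStep_iterate_eq_prefactor_mul (hab1 : ‖a‖ ^ 2 + ‖b‖ ^ 2 = 1) (ha : a ≠ 0)
    (haξ : ‖a‖ < ξ) (hξ : ξ < 1) {n : ℕ} (hn : 0 < n) (y : ℤ) :
    innC ((qwStep a b)^[n] (qwDelta φ) y) ψ =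
      hiddenPrefactor a b ξ n y * hiddenQuotient a b φ ψ ξ n y := by
  have hphase : exp (Real.pi * I * (((n : ℝ) - y) / 2 : ℝ)) =
      exp (Real.pi * I * (((n : ℝ) - |(y : ℝ)|) / 2 : ℝ)) *
        exp (Real.pi * I * ((|(y : ℝ)| - y) / 2 : ℝ)) := by
    rw [← exp_add]
    push_cast
    ring_nf
  rw [innC_qwStep_iterate ha (saddlePoint ‖a‖ ξ), hphase, exp_neg_mul_div_two_pi
    (ν := saddleExponent ‖a‖ ξ) (h := HQ a b (y / n))
    (tanh_saddleExponent_mul_pos (norm_nonneg a) haξ hξ) (Nat.cast_pos.2 hn), hiddenPrefactor,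
    hiddenQuotient, div_eq_inv_tanh_mul hab1 haξ hξ]
  simp only [mul_assoc, intervalIntegral.integral_const_mul]
  push_cast
  ring

theorem isBigO_hiddenQuotient_sub (hab1 : ‖a‖ ^ 2 + ‖b‖ ^ 2 = 1) (ha : a ≠ 0)
    (haξ : ‖a‖ < ξ) (hξ : ξ < 1) {y : ℕ → ℤ}
    (hy : (fun n : ℕ => (y n : ℝ) - n * ξ) =O[atTop] fun _ => (1 : ℝ)) :
    (fun n => hiddenQuotient a b φ ψ ξ n (y n) - hiddenAmplitude a b φ ψ ξ)
      =O[atTop] fun n : ℕ => 1 / (n : ℝ) := by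
  have hr := norm_pos_iff.2 ha
  have hintegral := isBigO_saddle_integral (k := fun n z => innC ((hiddenSymbol a b z ^ n) φ) ψ)
    ((abs_norm a).trans_lt (haξ.trans hξ)) (saddleExponent_pos hr.le haξ hξ)
    (sinh_saddleExponent hr.ne') (saddlePoint_equation hr haξ hξ) rfl
    (differentiable_innC_hiddenSymbol_pow 0) (differentiable_innC_hiddenSymbol_pow 1)
    (innC_hiddenSymbol_pow_add_two hab1 ha) hy
  have hy₀ : ∀ᶠ n in atTop, 0 ≤ (y n : ℝ) := by
    obtain ⟨C, hC⟩ := hy.bound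
    have hlinear : Tendsto (fun n : ℕ => n * ξ) atTop atTop :=
      tendsto_natCast_atTop_atTop.atTop_mul_const (hr.trans haξ)
    filter_upwards [hC, hlinear.eventually_ge_atTop C] with n hn hnC
    rw [norm_one, mul_one, Real.norm_eq_abs] at hn
    linarith [neg_le_of_abs_le hn]
  refine (isBigO_exp_mul_sqrt_mul_sub (tanh_saddleExponent_mul_pos hr.le haξ hξ)
    (isBigO_exponent_defect ha hab1 haξ hξ hy) hintegral).congr' ?_ EventuallyEq.rfl
  filter_upwards [hy₀] with n hn
  have hphase : exp (Real.pi * I * ((|(y n : ℝ)| - y n) / 2 : ℝ)) = 1 := by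
    rw [abs_of_nonneg hn, sub_self, zero_div, ofReal_zero, mul_zero, exp_zero]
  rw [hiddenQuotient, hphase, mul_one, hiddenAmplitude, pow_zero, pow_one, one_apply_eq_self]

lemma qwStep_iterate_reflect (n : ℕ) (x : ℤ) :
    (qwStep (conj a) (-conj b))^[n] (qwDelta φ.swap) x =
      ((qwStep a b)^[n] (qwDelta φ) (-x)).swap := by
  induction n generalizing x with
  | zero =>
    simp only [Function.iterate_zero, id_eq, qwDelta, neg_eq_zero]
    split_ifs <;> rfl
  | succ n ih =>
    rw [Function.iterate_succ_apply', Function.iterate_succ_apply']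
    simp only [qwStep, ih, Prod.fst_swap, Prod.snd_swap, map_neg, conj_conj, neg_neg,
      Prod.swap_prod_mk, Prod.mk.injEq]
    rw [neg_add', neg_sub', sub_neg_eq_add]
    constructor <;> ring

lemma hiddenPrefactor_reflect (ha : a ≠ 0) (n : ℕ) (y : ℤ) :
    hiddenPrefactor (conj a) (-conj b) (-ξ) n (-y) = hiddenPrefactor a b ξ n y := by
  have hsign : (-1 : ℂ) ^ ((n : ℤ) + -y) = (-1 : ℂ) ^ ((n : ℤ) + y) := by
    rw [zpow_add₀ (by norm_num), zpow_add₀ (by norm_num), zpow_neg, ← inv_zpow, inv_neg_one]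
  have hphase : (conj a / (‖a‖ : ℂ)) ^ (- -y) = (a / (‖a‖ : ℂ)) ^ (-y) := by
    have hr : (‖a‖ : ℂ) ≠ 0 := by simpa using ha
    have hinv : conj a / (‖a‖ : ℂ) = (a / (‖a‖ : ℂ))⁻¹ := by
      refine (inv_eq_of_mul_eq_one_right ?_).symm
      rw [div_mul_div_comm, mul_conj', pow_two, div_self (mul_ne_zero hr hr)]
    rw [hinv, inv_zpow', neg_neg]
  have hrate : HQ (conj a) (-conj b) ((-y : ℤ) / n) = HQ a b (y / n) := by
    simp only [HQ, norm_neg, RCLike.norm_conj, Int.cast_neg, neg_div, abs_neg, neg_sq]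
  rw [hiddenPrefactor, hiddenPrefactor, hsign, hrate, norm_neg, RCLike.norm_conj, RCLike.norm_conj,
    hphase, Int.cast_neg, abs_neg, neg_sq]

lemma innC_swap (u v : ℂ × ℂ) : innC u.swap v.swap = innC u v := add_comm _ _

/-- The function `F_ψ` of the asymptotics on the whole hidden region; negative `η` are reduced to
positive ones by the reflection `x ↦ -x` of the walk. -/
def hiddenLimit (a b : ℂ) (φ ψ : ℂ × ℂ) (η : ℝ) : ℂ :=
  if 0 < η then hiddenAmplitude a b φ ψ η
  else hiddenAmplitude (conj a) (-conj b) φ.swap ψ.swap (-η)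

lemma contDiffOn_hiddenLimit {n : WithTop ℕ∞} :
    ContDiffOn ℝ n (hiddenLimit a b φ ψ) {η : ℝ | ‖a‖ < |η| ∧ |η| < 1} := by
  rintro η ⟨haη, hη⟩
  refine ContDiffAt.contDiffWithinAt ?_
  have hη₀ : η ≠ 0 := abs_pos.1 ((norm_nonneg a).trans_lt haη)
  rcases hη₀.lt_or_gt with hneg | hpos
  · rw [abs_of_neg hneg] at haη hη
    rw [← RCLike.norm_conj] at haη
    refine ((contDiffAt_hiddenAmplitude (b := -conj b) (φ := φ.swap) (ψ := ψ.swap) haη hη).comp η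
      contDiffAt_id.neg).congr_of_eventuallyEq ?_
    filter_upwards [gt_mem_nhds hneg] with t ht using if_neg ht.not_gt
  · rw [abs_of_pos hpos] at haη hη
    refine (contDiffAt_hiddenAmplitude (b := b) (φ := φ) (ψ := ψ) haη hη).congr_of_eventuallyEq ?_
    filter_upwards [lt_mem_nhds hpos] with t ht using if_pos ht

theorem stmt15_general (a b : ℂ) (hab1 : ‖a‖ ^ 2 + ‖b‖ ^ 2 = 1) (ha : a ≠ 0) (φ ψ : ℂ × ℂ) :
    ∃ F : ℝ → ℂ, ContDiffOn ℝ (⊤ : ℕ∞) F {η : ℝ | ‖a‖ < |η| ∧ |η| < 1} ∧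
      ∀ ξ : ℝ, ‖a‖ < |ξ| → |ξ| < 1 → ∀ y : ℕ → ℤ,
        ((fun n : ℕ => (y n : ℝ) - (n : ℝ) * ξ) =O[atTop] fun _ : ℕ => (1 : ℝ)) →
        ∃ E : ℕ → ℂ, (E =O[atTop] fun n : ℕ => 1 / (n : ℝ)) ∧ ∀ n : ℕ, 0 < n →
          innC ((qwStep a b)^[n] (qwDelta φ) (y n)) ψ =
            hiddenPrefactor a b ξ n (y n) * (F ξ + E n) := by
  refine ⟨hiddenLimit a b φ ψ, contDiffOn_hiddenLimit, fun ξ haξ hξ y hy => ?_⟩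
  rcases lt_or_ge 0 ξ with hpos | hneg
  · rw [abs_of_pos hpos] at haξ hξ
    refine ⟨_, isBigO_hiddenQuotient_sub (φ := φ) (ψ := ψ) hab1 ha haξ hξ hy, fun n hn => ?_⟩
    rw [innC_qwStep_iterate_eq_prefactor_mul hab1 ha haξ hξ hn, hiddenLimit, if_pos hpos,
      add_sub_cancel]
  · rw [abs_of_nonpos hneg] at haξ hξ
    have hy' : (fun n : ℕ => ((-y n : ℤ) : ℝ) - n * -ξ) =O[atTop] fun _ => (1 : ℝ) :=
      hy.neg_left.congr_left fun n => by push_cast; ring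
    have hab1' : ‖conj a‖ ^ 2 + ‖-conj b‖ ^ 2 = 1 := by simpa using hab1
    have ha' : conj a ≠ 0 := (map_ne_zero _).2 ha
    rw [← RCLike.norm_conj] at haξ
    refine ⟨_, isBigO_hiddenQuotient_sub (φ := φ.swap) (ψ := ψ.swap) hab1' ha' haξ hξ hy',
      fun n hn => ?_⟩
    rw [hiddenLimit, if_neg hneg.not_gt, add_sub_cancel, ← hiddenPrefactor_reflect ha,
      ← innC_qwStep_iterate_eq_prefactor_mul hab1' ha' haξ hξ hn, qwStep_iterate_reflect, neg_neg,
      innC_swap]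

end HiddenRegion

/-- Proposition `amp3hidden`: asymptotics of the transition amplitude in
the hidden region `|a| < |ξ| < 1`, `y_n = nξ + O(1)`. -/
theorem stmt15 (a b : ℂ) (hab1 : ‖a‖ ^ 2 + ‖b‖ ^ 2 = 1) (hab : a * b ≠ 0)
    (φ : ℂ × ℂ) (hφ : nsq φ = 1) (ξ : ℝ) (hξ1 : ‖a‖ < |ξ|) (hξ2 : |ξ| < 1)
    (y : ℕ → ℤ) (hy : (fun n : ℕ => (y n : ℝ) - (n : ℝ) * ξ) =O[atTop] fun _ : ℕ => (1 : ℝ))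
    (ψ : ℂ × ℂ) (hψ : nsq ψ = 1) :
    ∃ F : ℝ → ℂ,
      ContDiffOn ℝ (⊤ : ℕ∞) F {η : ℝ | ‖a‖ < |η| ∧ |η| < 1} ∧
      ∃ E : ℕ → ℂ, (E =O[atTop] fun n : ℕ => 1 / (n : ℝ)) ∧
        ∀ n : ℕ, 0 < n →
          innC (((qwStep a b)^[n] (qwDelta φ)) (y n)) ψ =
            (1 + (-1 : ℂ) ^ ((n : ℤ) + y n)) * (a / (‖a‖ : ℂ)) ^ (-(y n)) *
              ((Real.exp (-(n : ℝ) * HQ a b ((y n : ℝ) / (n : ℝ)) / 2) /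
                  Real.sqrt (2 * Real.pi * (n : ℝ)) : ℝ) : ℂ) *
              ((Real.sqrt (‖b‖ / ((1 - ξ ^ 2) * Real.sqrt (ξ ^ 2 - ‖a‖ ^ 2))) : ℝ) : ℂ) *
              Complex.exp ((Real.pi : ℂ) * Complex.I *
                ((((n : ℝ) - |(y n : ℝ)|) / 2 : ℝ) : ℂ)) *
              (F ξ + E n) := by
  obtain ⟨F, hF, h⟩ := stmt15_general a b hab1 (left_ne_zero_of_mul hab) φ ψ
  exact ⟨F, hF, h ξ hξ1 hξ2 y hy⟩
end
end

section
/- Let η ∈ ℝ with |a| < |η| < 1. Then the solutions z ∈ D_A of the equation z λ_A′(z)/λ_A(z) = η are exactly z = i r(η) and z = −i r(η), where r(η) = (|b|η + √(η² − |a|²))/(|a|√(1 − η²)). -/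
/-!
Write `ψ_A = ζ + s` with `s` a branch of `√(ζ² − 1)` off `[−1, 1]`. Since `ψ_A′/ψ_A = 1/s`, and
since `u = (z + z⁻¹)/2` and `v = (z − z⁻¹)/2` satisfy `z u′ = v`, the equation is
`|a| v = η s(|a| u)` subject to `u² − v² = 1`. Squaring it determines `u²`, and as `s` is odd, the
solutions `(u, v)` form a single pair `±(u₀, v₀)`. The value `s(iy) = i√(1 + y²)` for `y > 0` shows
that `(u₀, v₀) = (iq, ip)` is a solution, where `r(η) = p + q` splits the formula for `r` into its
two summands. Hence `z = u + v = ±i(p + q)`.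
-/

open Filter Topology Asymptotics MeasureTheory

noncomputable section

/-- `ψ_A(ζ) = ζ + (ζ − 1)√((ζ + 1)/(ζ − 1))`, the branch of the square root (principal
complex power) being positive on the positive real axis. -/
def psiA (ζ : ℂ) : ℂ := ζ + (ζ - 1) * ((ζ + 1) / (ζ - 1)) ^ ((1 : ℂ) / 2)

/-- `φ̃(z) = (z + z⁻¹)/2` as a complex function. -/
def phitC (z : ℂ) : ℂ := (z + z⁻¹) / 2

/-- The eigenvalue branch `λ_A(z) = ψ_A(|a| φ̃(z))`, holomorphic on `D_A`. -/
def lamAn (a : ℂ) (z : ℂ) : ℂ := psiA ((‖a‖ : ℂ) * phitC z)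

/-- The domain
`D_A = ℂ ∖ (S¹ ∪ {0} ∪ [−(1+|b|)/|a|, −(1−|b|)/|a|] ∪ [(1−|b|)/|a|, (1+|b|)/|a|])`. -/
def DA (a b : ℂ) : Set ℂ :=
  {z : ℂ | ‖z‖ ≠ 1 ∧ z ≠ 0 ∧
    z ∉ (fun x : ℝ => (x : ℂ)) '' Set.Icc (-((1 + ‖b‖) / ‖a‖)) (-((1 - ‖b‖) / ‖a‖)) ∧
    z ∉ (fun x : ℝ => (x : ℂ)) '' Set.Icc ((1 - ‖b‖) / ‖a‖) ((1 + ‖b‖) / ‖a‖)}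

/-- `r(η) = (|b|η + √(η² − |a|²))/(|a|√(1 − η²))`. -/
def rfun (a b : ℂ) (η : ℝ) : ℝ :=
  (‖b‖ * η + Real.sqrt (η ^ 2 - ‖a‖ ^ 2)) / (‖a‖ * Real.sqrt (1 - η ^ 2))

/-- The slit `[−1, 1]` off which `ψ_A` is holomorphic. -/
def psiCut : Set ℂ := (fun x : ℝ => (x : ℂ)) '' Set.Icc (-1) 1

/-- The branch `s` of `√(ζ² − 1)` on `ℂ ∖ [−1, 1]` for which `ψ_A(ζ) = ζ + s(ζ)`. -/
def sqrtBranch (ζ : ℂ) : ℂ := (ζ - 1) * ((ζ + 1) / (ζ - 1)) ^ ((1 : ℂ) / 2)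

/-- The companion `(z − z⁻¹)/2` of `φ̃`: for `z = eʷ` they are `sinh w` and `cosh w`. -/
def skewPhitC (z : ℂ) : ℂ := (z - z⁻¹) / 2

/-- The first summand `p = |b|η/(|a|√(1 − η²))` of `r(η)`. -/
def rfunFst (a b : ℂ) (η : ℝ) : ℝ := ‖b‖ * η / (‖a‖ * √(1 - η ^ 2))

/-- The second summand `q = √(η² − |a|²)/(|a|√(1 − η²))` of `r(η)`. -/
def rfunSnd (a : ℂ) (η : ℝ) : ℝ := √(η ^ 2 - ‖a‖ ^ 2) / (‖a‖ * √(1 - η ^ 2))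

section SqrtBranch

variable {ζ : ℂ}

lemma ne_one_of_notMem_psiCut (hζ : ζ ∉ psiCut) : ζ ≠ 1 := by
  rintro rfl
  exact hζ ⟨1, by norm_num, Complex.ofReal_one⟩

lemma ne_neg_one_of_notMem_psiCut (hζ : ζ ∉ psiCut) : ζ ≠ -1 := by
  rintro rfl
  exact hζ ⟨-1, by norm_num, by simp⟩

open ComplexOrder in
lemma add_one_div_sub_one_mem_slitPlane (hζ : ζ ∉ psiCut) :
    (ζ + 1) / (ζ - 1) ∈ Complex.slitPlane := by
  rw [Complex.mem_slitPlane_iff_not_le_zero]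
  intro hle
  obtain ⟨t, ht, htζ⟩ := RCLike.nonpos_iff_exists_ofReal.1 hle
  have hζ1 : ζ - 1 ≠ 0 := sub_ne_zero.2 (ne_one_of_notMem_psiCut hζ)
  have htζ' : (t : ℂ) * (ζ - 1) = ζ + 1 := (eq_div_iff hζ1).1 htζ
  have ht1 : t - 1 < 0 := by linarith
  have ht1' : (t : ℂ) - 1 ≠ 0 := mod_cast ht1.ne
  refine hζ ⟨(t + 1) / (t - 1), ⟨?_, ?_⟩, ?_⟩
  · rw [le_div_iff_of_neg ht1]; linarith
  · rw [div_le_iff_of_neg ht1]; linarith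
  · push_cast
    rw [div_eq_iff ht1']
    linear_combination -htζ'

lemma sqrtBranch_sq (ζ : ℂ) : sqrtBranch ζ ^ 2 = ζ ^ 2 - 1 := by
  rcases eq_or_ne ζ 1 with rfl | hζ
  · simp [sqrtBranch]
  · have hζ1 : ζ - 1 ≠ 0 := sub_ne_zero.2 hζ
    rw [sqrtBranch, mul_pow, one_div, Complex.cpow_ofNat_inv_pow]
    field_simp [hζ1]
    ring

lemma sqrtBranch_neg (hζ : ζ ∉ psiCut) : sqrtBranch (-ζ) = -sqrtBranch ζ := by
  have hζ1 : ζ - 1 ≠ 0 := sub_ne_zero.2 (ne_one_of_notMem_psiCut hζ)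
  have hslit := add_one_div_sub_one_mem_slitPlane hζ
  have hinv : (-ζ + 1) / (-ζ - 1) = ((ζ + 1) / (ζ - 1))⁻¹ := by
    rw [inv_div, ← neg_div_neg_eq]
    ring_nf
  have hsq : (((ζ + 1) / (ζ - 1)) ^ ((1 : ℂ) / 2)) ^ 2 = (ζ + 1) / (ζ - 1) := by
    rw [one_div, Complex.cpow_ofNat_inv_pow]
  rw [sqrtBranch, sqrtBranch, hinv, Complex.inv_cpow _ _ (Complex.mem_slitPlane_iff_arg.1 hslit).1]
  generalize ((ζ + 1) / (ζ - 1)) ^ ((1 : ℂ) / 2) = w at hsq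
  have hw : w ≠ 0 := by
    rintro rfl
    exact Complex.slitPlane_ne_zero hslit (by rw [← hsq, zero_pow two_ne_zero])
  rw [eq_div_iff hζ1] at hsq
  rw [← div_eq_mul_inv, div_eq_iff hw]
  linear_combination hsq

lemma sqrtBranch_ne_zero (hζ : ζ ∉ psiCut) : sqrtBranch ζ ≠ 0 := by
  rw [← pow_ne_zero_iff two_ne_zero, sqrtBranch_sq, sub_ne_zero, sq_ne_one_iff]
  exact ⟨ne_one_of_notMem_psiCut hζ, ne_neg_one_of_notMem_psiCut hζ⟩

lemma hasDerivAt_sqrtBranch (hζ : ζ ∉ psiCut) :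
    HasDerivAt sqrtBranch (ζ / sqrtBranch ζ) ζ := by
  have hdiff : DifferentiableAt ℂ sqrtBranch ζ := by
    have hslit := add_one_div_sub_one_mem_slitPlane hζ
    have hζ1 : ζ - 1 ≠ 0 := sub_ne_zero.2 (ne_one_of_notMem_psiCut hζ)
    unfold sqrtBranch
    fun_prop (disch := assumption)
  have hsq : HasDerivAt (fun ζ => ζ ^ 2 - 1) (2 * sqrtBranch ζ * deriv sqrtBranch ζ) ζ := by
    simpa [← sqrtBranch_sq] using hdiff.hasDerivAt.fun_pow 2
  have hsq' : HasDerivAt (fun ζ : ℂ => ζ ^ 2 - 1) (2 * ζ) ζ := by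
    simpa using (hasDerivAt_pow 2 ζ).sub_const 1
  have hderiv : deriv sqrtBranch ζ = ζ / sqrtBranch ζ := by
    rw [eq_div_iff (sqrtBranch_ne_zero hζ)]
    linear_combination hsq.unique hsq' / 2
  exact hderiv ▸ hdiff.hasDerivAt

lemma sqrtBranch_eq_of_sq_eq {s : ℂ} (hs : s ^ 2 = ζ ^ 2 - 1) (hre : 0 < (s / (ζ - 1)).re) :
    sqrtBranch ζ = s := by
  have hζ1 : ζ - 1 ≠ 0 := by
    intro h
    simp [h] at hre
  have hquot : (ζ + 1) / (ζ - 1) = (s / (ζ - 1)) ^ 2 := by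
    rw [div_pow, hs]
    field_simp
    ring
  rw [sqrtBranch, hquot, one_div, Complex.sq_cpow_two_inv hre, mul_div_cancel₀ _ hζ1]

lemma sqrtBranch_I_mul {y : ℝ} (hy : 0 < y) :
    sqrtBranch (Complex.I * y) = Complex.I * √(1 + y ^ 2) := by
  apply sqrtBranch_eq_of_sq_eq
  · have hsqrt : (√(1 + y ^ 2) : ℂ) ^ 2 = 1 + (y : ℂ) ^ 2 :=
      mod_cast Real.sq_sqrt (by positivity : 0 ≤ 1 + y ^ 2)
    rw [mul_pow, mul_pow, hsqrt, Complex.I_sq]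
    ring
  · have hre : (Complex.I * √(1 + y ^ 2) / (Complex.I * y - 1)).re =
        √(1 + y ^ 2) * y / (1 + y ^ 2) := by
      simp [Complex.div_re, Complex.normSq_apply, sq]
    rw [hre]
    positivity

end SqrtBranch

lemma psiA_ne_zero (ζ : ℂ) : psiA ζ ≠ 0 := by
  have hmul : psiA ζ * (ζ - sqrtBranch ζ) = 1 := by
    change (ζ + sqrtBranch ζ) * (ζ - sqrtBranch ζ) = 1
    linear_combination -sqrtBranch_sq ζ
  exact left_ne_zero_of_mul_eq_one hmul

lemma hasDerivAt_psiA {ζ : ℂ} (hζ : ζ ∉ psiCut) :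
    HasDerivAt psiA (psiA ζ / sqrtBranch ζ) ζ := by
  have hderiv : psiA ζ / sqrtBranch ζ = 1 + ζ / sqrtBranch ζ := by
    change (ζ + sqrtBranch ζ) / sqrtBranch ζ = _
    rw [add_div, div_self (sqrtBranch_ne_zero hζ), add_comm]
  exact hderiv ▸ (hasDerivAt_id' ζ).add (hasDerivAt_sqrtBranch hζ)

lemma phitC_sq_sub_skewPhitC_sq {z : ℂ} (hz : z ≠ 0) : phitC z ^ 2 - skewPhitC z ^ 2 = 1 := by
  rw [phitC, skewPhitC]
  field_simp
  ring

lemma phitC_eq_and_skewPhitC_eq_iff {u v z : ℂ} (huv : u ^ 2 - v ^ 2 = 1) :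
    phitC z = u ∧ skewPhitC z = v ↔ z = u + v := by
  constructor
  · rintro ⟨rfl, rfl⟩
    rw [phitC, skewPhitC]
    ring
  · rintro rfl
    have hinv : (u + v)⁻¹ = u - v := inv_eq_of_mul_eq_one_right (by linear_combination huv)
    rw [phitC, skewPhitC, hinv]
    constructor <;> ring

lemma hasDerivAt_phitC {z : ℂ} (hz : z ≠ 0) : HasDerivAt phitC (skewPhitC z / z) z := by
  refine (((hasDerivAt_id' z).add (hasDerivAt_inv hz)).div_const 2).congr_deriv ?_
  rw [skewPhitC]
  field_simp
  ring

lemma mul_deriv_lamAn_div_lamAn {a z : ℂ} (hz : z ≠ 0) (hcut : ‖a‖ * phitC z ∉ psiCut) :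
    z * deriv (lamAn a) z / lamAn a z = ‖a‖ * skewPhitC z / sqrtBranch (‖a‖ * phitC z) := by
  have hderiv : HasDerivAt (lamAn a) _ z :=
    (hasDerivAt_psiA hcut).comp z ((hasDerivAt_phitC hz).const_mul (‖a‖ : ℂ))
  have hpsi := psiA_ne_zero (‖a‖ * phitC z)
  have hs := sqrtBranch_ne_zero hcut
  rw [hderiv.deriv, lamAn]
  field_simp

lemma im_eq_zero_or_norm_eq_one_of_phitC_im_eq_zero {z : ℂ} (h : (phitC z).im = 0) :
    z.im = 0 ∨ ‖z‖ = 1 := by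
  have him : (phitC z).im = z.im * (1 - (Complex.normSq z)⁻¹) / 2 := by
    simp only [phitC, Complex.div_ofNat_im, Complex.add_im, Complex.inv_im]
    ring
  rw [him, div_eq_zero_iff, or_iff_left two_ne_zero, mul_eq_zero, sub_eq_zero, eq_comm (a := 1),
    inv_eq_one, Complex.normSq_eq_norm_sq] at h
  exact h.imp_right fun hsq => (pow_eq_one_iff_of_nonneg (norm_nonneg z) two_ne_zero).1 hsq

lemma abs_mem_Icc_of_abs_mul_add_inv_le {α β x : ℝ} (hα : 0 < α) (hβ : 0 ≤ β)
    (hαβ : α ^ 2 + β ^ 2 = 1) (hx : x ≠ 0) (h : |α * ((x + x⁻¹) / 2)| ≤ 1) :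
    |x| ∈ Set.Icc ((1 - β) / α) ((1 + β) / α) := by
  have hquad : α * (|x| ^ 2 + 1) ≤ 2 * |x| :=
    calc α * (|x| ^ 2 + 1) = 2 * (x * (α * ((x + x⁻¹) / 2))) := by rw [sq_abs]; field_simp
      _ ≤ 2 * (|x| * |α * ((x + x⁻¹) / 2)|) := by rw [← abs_mul]; gcongr; exact le_abs_self _
      _ ≤ 2 * |x| := by gcongr; exact mul_le_of_le_one_right (abs_nonneg x) h
  have hsq : (α * |x| - 1) ^ 2 ≤ β ^ 2 := by
    nlinarith [mul_le_mul_of_nonneg_left hquad hα.le]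
  obtain ⟨hlower, hupper⟩ := abs_le.1 (abs_le_of_sq_le_sq hsq hβ)
  constructor
  · rw [div_le_iff₀ hα]; linarith
  · rw [le_div_iff₀ hα]; linarith

lemma norm_mul_phitC_notMem_psiCut {a b z : ℂ} (ha : a ≠ 0) (hab : ‖a‖ ^ 2 + ‖b‖ ^ 2 = 1)
    (hz : z ∈ DA a b) : ‖a‖ * phitC z ∉ psiCut := by
  rintro ⟨t, ht, htz⟩
  obtain ⟨hnorm, hz0, hneg, hpos⟩ := hz
  have ha' : 0 < ‖a‖ := norm_pos_iff.2 ha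
  have him : (phitC z).im = 0 := by
    have := congrArg Complex.im htz
    simpa [ha] using this.symm
  have hreal : ((z.re : ℝ) : ℂ) = z :=
    Complex.ext rfl ((im_eq_zero_or_norm_eq_one_of_phitC_im_eq_zero him).resolve_right hnorm).symm
  obtain ⟨x, rfl⟩ : ∃ x : ℝ, (x : ℂ) = z := ⟨z.re, hreal⟩
  have htx : t = ‖a‖ * ((x + x⁻¹) / 2) := by
    have htz' : (t : ℂ) = ‖a‖ * ((x + (x : ℂ)⁻¹) / 2) := htz
    exact mod_cast htz'
  have hx := abs_mem_Icc_of_abs_mul_add_inv_le ha' (norm_nonneg b) hab (mod_cast hz0)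
    (htx ▸ abs_le.2 ht)
  rcases abs_choice x with habs | habs <;> rw [habs] at hx
  · exact hpos ⟨x, hx, rfl⟩
  · exact hneg ⟨x, ⟨neg_le.1 hx.2, le_neg.1 hx.1⟩, rfl⟩

lemma sq_eq_sq_of_mul_eq_mul_sqrtBranch {α η u v u₀ v₀ : ℂ} (hα : α ≠ 0) (hη : η ^ 2 ≠ 1)
    (huv : u ^ 2 - v ^ 2 = 1) (huv₀ : u₀ ^ 2 - v₀ ^ 2 = 1)
    (h : α * v = η * sqrtBranch (α * u)) (h₀ : α * v₀ = η * sqrtBranch (α * u₀)) :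
    u ^ 2 = u₀ ^ 2 := by
  have hcoef : α ^ 2 * (1 - η ^ 2) ≠ 0 :=
    mul_ne_zero (pow_ne_zero 2 hα) (sub_ne_zero.2 hη.symm)
  have hsq : (α * v) ^ 2 = η ^ 2 * ((α * u) ^ 2 - 1) := by rw [h, mul_pow, sqrtBranch_sq]
  have hsq₀ : (α * v₀) ^ 2 = η ^ 2 * ((α * u₀) ^ 2 - 1) := by rw [h₀, mul_pow, sqrtBranch_sq]
  apply mul_left_cancel₀ hcoef
  linear_combination hsq - hsq₀ + α ^ 2 * huv - α ^ 2 * huv₀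

lemma mul_eq_mul_sqrtBranch_iff {α η u v u₀ v₀ : ℂ} (hα : α ≠ 0) (hη : η ^ 2 ≠ 1)
    (hcut : α * u ∉ psiCut) (huv : u ^ 2 - v ^ 2 = 1) (huv₀ : u₀ ^ 2 - v₀ ^ 2 = 1)
    (h₀ : α * v₀ = η * sqrtBranch (α * u₀)) :
    α * v = η * sqrtBranch (α * u) ↔ (u = u₀ ∧ v = v₀) ∨ (u = -u₀ ∧ v = -v₀) := by
  have hodd (hu : u = -u₀) : η * sqrtBranch (α * u) = α * -v₀ := by
    have hu₀ : α * u₀ = -(α * u) := by rw [hu, mul_neg, neg_neg]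
    rw [hu₀, sqrtBranch_neg hcut] at h₀
    linear_combination h₀
  constructor
  · intro h
    rcases sq_eq_sq_iff_eq_or_eq_neg.1
      (sq_eq_sq_of_mul_eq_mul_sqrtBranch hα hη huv huv₀ h h₀) with hu | hu
    · exact .inl ⟨hu, mul_left_cancel₀ hα (by rw [h, h₀, hu])⟩
    · exact .inr ⟨hu, mul_left_cancel₀ hα (h.trans (hodd hu))⟩
  · rintro (⟨rfl, rfl⟩ | ⟨hu, rfl⟩)
    · exact h₀
    · exact (hodd hu).symm

section Rfun

variable {a b : ℂ} {η : ℝ}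

lemma rfun_eq_add (a b : ℂ) (η : ℝ) : rfun a b η = rfunFst a b η + rfunSnd a η :=
  add_div _ _ _

lemma rfunSnd_pos (ha : a ≠ 0) (haη : ‖a‖ ^ 2 < η ^ 2) (hη : η ^ 2 < 1) : 0 < rfunSnd a η := by
  have ha' : 0 < ‖a‖ := norm_pos_iff.2 ha
  exact div_pos (Real.sqrt_pos.2 (sub_pos.2 haη))
    (mul_pos ha' (Real.sqrt_pos.2 (sub_pos.2 hη)))

lemma norm_mul_rfunFst (ha : a ≠ 0) : ‖a‖ * rfunFst a b η = η * (‖b‖ / √(1 - η ^ 2)) := by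
  have ha' : ‖a‖ ≠ 0 := norm_ne_zero_iff.2 ha
  rw [rfunFst, ← mul_div_assoc, mul_div_mul_left _ _ ha', mul_comm ‖b‖, mul_div_assoc]

lemma norm_mul_rfunSnd_sq (ha : a ≠ 0) (haη : ‖a‖ ^ 2 ≤ η ^ 2) (hη : η ^ 2 < 1) :
    (‖a‖ * rfunSnd a η) ^ 2 = (η ^ 2 - ‖a‖ ^ 2) / (1 - η ^ 2) := by
  have ha' : ‖a‖ ≠ 0 := norm_ne_zero_iff.2 ha
  rw [rfunSnd, ← mul_div_assoc, mul_div_mul_left _ _ ha', div_pow,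
    Real.sq_sqrt (sub_nonneg.2 haη), Real.sq_sqrt (sub_nonneg.2 hη.le)]

lemma norm_div_sqrt_sq (ha : a ≠ 0) (hab : ‖a‖ ^ 2 + ‖b‖ ^ 2 = 1) (haη : ‖a‖ ^ 2 ≤ η ^ 2)
    (hη : η ^ 2 < 1) : (‖b‖ / √(1 - η ^ 2)) ^ 2 = 1 + (‖a‖ * rfunSnd a η) ^ 2 := by
  have hη' : 1 - η ^ 2 ≠ 0 := (sub_pos.2 hη).ne'
  rw [norm_mul_rfunSnd_sq ha haη hη, div_pow, Real.sq_sqrt (sub_nonneg.2 hη.le)]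
  field_simp
  linarith

lemma rfunFst_sq_sub_rfunSnd_sq (ha : a ≠ 0) (hab : ‖a‖ ^ 2 + ‖b‖ ^ 2 = 1)
    (haη : ‖a‖ ^ 2 ≤ η ^ 2) (hη : η ^ 2 < 1) : rfunFst a b η ^ 2 - rfunSnd a η ^ 2 = 1 := by
  have ha' : ‖a‖ ^ 2 ≠ 0 := pow_ne_zero 2 (norm_ne_zero_iff.2 ha)
  have hη' : 1 - η ^ 2 ≠ 0 := (sub_pos.2 hη).ne'
  have hscaled : (‖a‖ * rfunFst a b η) ^ 2 - (‖a‖ * rfunSnd a η) ^ 2 = ‖a‖ ^ 2 := by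
    rw [norm_mul_rfunFst ha, mul_pow, norm_div_sqrt_sq ha hab haη hη,
      norm_mul_rfunSnd_sq ha haη hη]
    field_simp
    ring
  exact mul_left_cancel₀ ha' (by linear_combination hscaled)

lemma norm_mul_I_mul_rfunFst (ha : a ≠ 0) (hab : ‖a‖ ^ 2 + ‖b‖ ^ 2 = 1)
    (haη : ‖a‖ ^ 2 < η ^ 2) (hη : η ^ 2 < 1) :
    ‖a‖ * (Complex.I * rfunFst a b η) = η * sqrtBranch (‖a‖ * (Complex.I * rfunSnd a η)) := by
  have hq : 0 < ‖a‖ * rfunSnd a η := mul_pos (norm_pos_iff.2 ha) (rfunSnd_pos ha haη hη)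
  have hp : (‖a‖ * rfunFst a b η : ℂ) = η * (‖b‖ / √(1 - η ^ 2) : ℝ) :=
    mod_cast norm_mul_rfunFst ha
  have hsqrt : √(1 + (‖a‖ * rfunSnd a η) ^ 2) = ‖b‖ / √(1 - η ^ 2) := by
    rw [← norm_div_sqrt_sq ha hab haη.le hη, Real.sqrt_sq (by positivity)]
  calc (‖a‖ : ℂ) * (Complex.I * rfunFst a b η)
      = η * (Complex.I * √(1 + (‖a‖ * rfunSnd a η) ^ 2)) := by
        rw [hsqrt, mul_left_comm, hp, mul_left_comm]
    _ = η * sqrtBranch (‖a‖ * (Complex.I * rfunSnd a η)) := by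
        rw [← sqrtBranch_I_mul hq, Complex.ofReal_mul, mul_left_comm]

lemma I_mul_rfunSnd_sq_sub_I_mul_rfunFst_sq (ha : a ≠ 0) (hab : ‖a‖ ^ 2 + ‖b‖ ^ 2 = 1)
    (haη : ‖a‖ ^ 2 ≤ η ^ 2) (hη : η ^ 2 < 1) :
    (Complex.I * rfunSnd a η) ^ 2 - (Complex.I * rfunFst a b η) ^ 2 = 1 := by
  have hpq : (rfunFst a b η : ℂ) ^ 2 - rfunSnd a η ^ 2 = 1 :=
    mod_cast rfunFst_sq_sub_rfunSnd_sq ha hab haη hη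
  rw [mul_pow, mul_pow, Complex.I_sq]
  linear_combination hpq

end Rfun

/-- Lemma `cp`: for `|a| < |η| < 1`, the solutions `z ∈ D_A` of
`z λ_A′(z)/λ_A(z) = η` are exactly `z = ± i r(η)`. -/
theorem stmt16 (a b : ℂ) (hab1 : ‖a‖ ^ 2 + ‖b‖ ^ 2 = 1) (hab : a * b ≠ 0)
    (η : ℝ) (hη1 : ‖a‖ < |η|) (hη2 : |η| < 1) :
    ∀ z ∈ DA a b,
      (z * deriv (lamAn a) z / lamAn a z = (η : ℂ) ↔
        z = Complex.I * (rfun a b η : ℂ) ∨ z = -(Complex.I * (rfun a b η : ℂ))) := by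
  intro z hz
  have hz0 : z ≠ 0 := hz.2.1
  have ha : a ≠ 0 := left_ne_zero_of_mul hab
  have haη : ‖a‖ ^ 2 < η ^ 2 := sq_lt_sq.2 (by rwa [abs_norm])
  have hη : η ^ 2 < 1 := (sq_lt_one_iff_abs_lt_one η).2 hη2
  have hcut := norm_mul_phitC_notMem_psiCut ha hab1 hz
  have huv₀ := I_mul_rfunSnd_sq_sub_I_mul_rfunFst_sq ha hab1 haη.le hη
  rw [mul_deriv_lamAn_div_lamAn hz0 hcut, div_eq_iff (sqrtBranch_ne_zero hcut),
    mul_eq_mul_sqrtBranch_iff (mod_cast norm_ne_zero_iff.2 ha) (mod_cast hη.ne) hcut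
      (phitC_sq_sub_skewPhitC_sq hz0) huv₀ (norm_mul_I_mul_rfunFst ha hab1 haη hη),
    phitC_eq_and_skewPhitC_eq_iff huv₀, phitC_eq_and_skewPhitC_eq_iff (by rwa [neg_sq, neg_sq]),
    rfun_eq_add, Complex.ofReal_add, ← neg_add, ← mul_add, add_comm (rfunFst a b η : ℂ)]
end
end

section
/- Let r satisfy r > (1 + |b|)/|a| or 0 < r < (1 − |b|)/|a|. Then for every t ∈ [−π, π], |λ_A(r)| = |λ_A(−r)| ≤ |λ_A(r e^{it})| ≤ |λ_A(i r)| = |λ_A(−i r)|. The left equality holds if and only if t ∈ {0, π, −π}, and the right equality holds if and only if t = ±π/2. -/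
/-!
`ψ_A` inverts the Joukowski map `φ̃`, and `|ψ_A| ≥ 1`. Since `φ̃ z ∓ 1 = (z ∓ 1)² / (2 z)`, the
parallelogram law gives `|φ̃ z - 1| + |φ̃ z + 1| = |z| + |z|⁻¹`, so `|ψ_A ζ|` and the sum of the
distances from `ζ` to `±1` are increasing functions of each other.

Put `c = |a|`. As `t` varies, `c φ̃(r e^{it})` runs through an ellipse with foci `±c` and semi-axes
`A > |B|`, and squaring the sum `S` of its distances to `±1` gives `S² = 2 (P + R)`, where
`P = B² + 1 + c² cos² t` and `R² = P² - 4 A² cos² t`. Hence, for two parameters `s` and `t`,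
`(S_s² - S_t²) (R_s + R_t) = 2 (cos² t - cos² s) (4 A² - c² (S_s² + S_t²) / 2)`.
Moving the foci from `±c` to `±1` changes the sum of distances by at most `2 (1 - c)`, so
`S ≤ 2 A + 2 (1 - c) < 2 A / c` and the last factor is positive: `S` is a strictly decreasing
function of `cos² t`.
-/

open Filter Topology Asymptotics MeasureTheory

noncomputable section

section Joukowski

lemma strictMonoOn_add_inv : StrictMonoOn (fun x : ℝ => x + x⁻¹) (Set.Ici 1) := by
  intro x (hx : 1 ≤ x) y (hy : 1 ≤ y) hxy
  have hfactor : y + y⁻¹ - (x + x⁻¹) = (y - x) * (x * y - 1) / (x * y) := by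
    field_simp
    ring
  have hprod : 1 < x * y := one_lt_mul_of_le_of_lt hx (hx.trans_lt hxy)
  have hpos : 0 < (y - x) * (x * y - 1) / (x * y) :=
    div_pos (mul_pos (sub_pos.mpr hxy) (sub_pos.mpr hprod)) (by positivity)
  exact sub_pos.mp (hfactor ▸ hpos)

lemma two_lt_add_inv {r : ℝ} (hr0 : 0 < r) (hr1 : r ≠ 1) : 2 < r + r⁻¹ := by
  have hsq : r + r⁻¹ - 2 = (r - 1) ^ 2 / r := by
    field_simp
    ring
  have hpos : 0 < (r - 1) ^ 2 / r := div_pos (sq_pos_of_ne_zero (sub_ne_zero.mpr hr1)) hr0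
  linarith

/-- The sum of the distances from `ζ` to `c` and `-c`; its level curves are the ellipses with foci
`±c`. -/
def focalSum (c ζ : ℂ) : ℝ := ‖ζ - c‖ + ‖ζ + c‖

lemma focalSum_nonneg (c ζ : ℂ) : 0 ≤ focalSum c ζ := by
  unfold focalSum
  positivity

lemma focalSum_one_phitC {z : ℂ} (hz : z ≠ 0) : focalSum 1 (phitC z) = ‖z‖ + ‖z‖⁻¹ := by
  have hsub : phitC z - 1 = (z - 1) ^ 2 / (2 * z) := by
    unfold phitC
    field_simp
    ring
  have hadd : phitC z + 1 = (z + 1) ^ 2 / (2 * z) := by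
    unfold phitC
    field_simp
    ring
  have hpar := parallelogram_law_with_norm ℝ z 1
  have hz' : ‖z‖ ≠ 0 := norm_ne_zero_iff.mpr hz
  rw [focalSum, hsub, hadd]
  simp only [norm_div, norm_pow, norm_mul, Complex.norm_ofNat]
  rw [norm_one] at hpar
  field_simp
  linear_combination hpar

lemma cpow_half_sq_mul_sub_one {ζ : ℂ} (hζ : ζ ≠ 1) :
    (((ζ + 1) / (ζ - 1)) ^ ((1 : ℂ) / 2)) ^ 2 * (ζ - 1) = ζ + 1 := by
  rw [one_div, Complex.cpow_ofNat_inv_pow, div_mul_cancel₀ _ (sub_ne_zero.mpr hζ)]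

lemma psiA_mul_two_mul_sub (ζ : ℂ) : psiA ζ * (2 * ζ - psiA ζ) = 1 := by
  rcases eq_or_ne ζ 1 with rfl | hζ
  · norm_num [psiA]
  unfold psiA
  linear_combination (1 - ζ) * cpow_half_sq_mul_sub_one hζ

lemma inv_psiA (ζ : ℂ) : (psiA ζ)⁻¹ = 2 * ζ - psiA ζ :=
  inv_eq_of_mul_eq_one_right (psiA_mul_two_mul_sub ζ)

lemma phitC_psiA (ζ : ℂ) : phitC (psiA ζ) = ζ := by
  rw [phitC, inv_psiA]
  ring

lemma norm_sub_one_le_norm_add_one {w : ℂ} (hw : 0 ≤ w.re) : ‖w - 1‖ ≤ ‖w + 1‖ := by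
  refine le_of_sq_le_sq ?_ (norm_nonneg _)
  simp only [Complex.sq_norm, Complex.normSq_apply, Complex.sub_re, Complex.add_re, Complex.sub_im,
    Complex.add_im, Complex.one_re, Complex.one_im]
  linarith

lemma one_le_norm_psiA (ζ : ℂ) : 1 ≤ ‖psiA ζ‖ := by
  rcases eq_or_ne ζ 1 with rfl | hζ
  · simp [psiA]
  set w := ((ζ + 1) / (ζ - 1)) ^ ((1 : ℂ) / 2) with hw
  have hre : 0 ≤ w.re := by
    rw [hw, one_div, Complex.cpow_inv_two_re]
    exact Real.sqrt_nonneg _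
  have hsq : w ^ 2 * (ζ - 1) = ζ + 1 := cpow_half_sq_mul_sub_one hζ
  have hpsi : psiA ζ = (ζ - 1) / 2 * (w + 1) ^ 2 := by
    rw [psiA, ← hw]
    linear_combination -hsq / 2
  have hinv : (psiA ζ)⁻¹ = (ζ - 1) / 2 * (w - 1) ^ 2 := by
    rw [inv_psiA, psiA, ← hw]
    linear_combination -hsq / 2
  have hle : ‖psiA ζ‖⁻¹ ≤ ‖psiA ζ‖ := by
    rw [← norm_inv, hinv, hpsi, norm_mul, norm_mul, norm_pow, norm_pow]
    gcongr
    exact norm_sub_one_le_norm_add_one hre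
  by_contra! hlt
  have hinv_gt : 1 < ‖psiA ζ‖⁻¹ := (one_lt_inv₀ (norm_pos_iff.mpr (psiA_ne_zero ζ))).mpr hlt
  exact hle.not_gt (hlt.trans hinv_gt)

lemma norm_psiA_add_inv (ζ : ℂ) : ‖psiA ζ‖ + ‖psiA ζ‖⁻¹ = focalSum 1 ζ := by
  rw [← focalSum_one_phitC (psiA_ne_zero ζ), phitC_psiA]

lemma norm_psiA_le_norm_psiA_iff {ζ ξ : ℂ} :
    ‖psiA ζ‖ ≤ ‖psiA ξ‖ ↔ focalSum 1 ζ ≤ focalSum 1 ξ := by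
  rw [← norm_psiA_add_inv, ← norm_psiA_add_inv]
  exact (strictMonoOn_add_inv.le_iff_le (one_le_norm_psiA ζ) (one_le_norm_psiA ξ)).symm

end Joukowski

section Ellipse

lemma focalSum_le_focalSum_add (c d ζ : ℂ) : focalSum d ζ ≤ focalSum c ζ + 2 * ‖d - c‖ := by
  have hsub : ‖ζ - d‖ ≤ ‖ζ - c‖ + ‖d - c‖ := by
    simpa only [sub_sub_sub_cancel_right] using norm_sub_le (ζ - c) (d - c)
  have hadd : ‖ζ + d‖ ≤ ‖ζ + c‖ + ‖d - c‖ := by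
    simpa only [add_add_sub_cancel] using norm_add_le (ζ + c) (d - c)
  unfold focalSum
  linarith

lemma focalSum_sq (c ζ : ℂ) :
    focalSum c ζ ^ 2 = 2 * (‖ζ‖ ^ 2 + ‖c‖ ^ 2 + ‖ζ ^ 2 - c ^ 2‖) := by
  have hpar := parallelogram_law_with_norm ℝ ζ c
  rw [focalSum, sq_sub_sq, norm_mul]
  linear_combination hpar

lemma norm_sq_sub_ofReal_sq_sq (c : ℝ) (ζ : ℂ) :
    ‖ζ ^ 2 - (c : ℂ) ^ 2‖ ^ 2 = (‖ζ‖ ^ 2 + c ^ 2) ^ 2 - (2 * c * ζ.re) ^ 2 := by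
  rw [Complex.sq_norm, Complex.sq_norm]
  simp only [Complex.normSq_apply, sq, Complex.sub_re, Complex.sub_im, Complex.mul_re,
    Complex.mul_im, Complex.ofReal_re, Complex.ofReal_im]
  ring

/-- The point with parameter `t` on the ellipse with semi-axes `A` and `B` along the real and the
imaginary axis. -/
def ellipsePoint (A B t : ℝ) : ℂ := ⟨A * Real.cos t, B * Real.sin t⟩

variable {A B c : ℝ}

lemma norm_ellipsePoint_sq (h : A ^ 2 = B ^ 2 + c ^ 2) (t : ℝ) :
    ‖ellipsePoint A B t‖ ^ 2 = B ^ 2 + c ^ 2 * Real.cos t ^ 2 := by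
  rw [Complex.sq_norm, Complex.normSq_apply, ellipsePoint]
  linear_combination Real.cos t ^ 2 * h + B ^ 2 * Real.sin_sq_add_cos_sq t

lemma norm_ellipsePoint_sq_sub_sq_sq (h : A ^ 2 = B ^ 2 + c ^ 2) (d t : ℝ) :
    ‖ellipsePoint A B t ^ 2 - (d : ℂ) ^ 2‖ ^ 2 =
      (B ^ 2 + c ^ 2 * Real.cos t ^ 2 + d ^ 2) ^ 2 - (2 * d * A) ^ 2 * Real.cos t ^ 2 := by
  rw [norm_sq_sub_ofReal_sq_sq, norm_ellipsePoint_sq h, ellipsePoint]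
  ring

lemma focalSum_ellipsePoint_sq (h : A ^ 2 = B ^ 2 + c ^ 2) (d t : ℝ) :
    focalSum d (ellipsePoint A B t) ^ 2 =
      2 * (B ^ 2 + c ^ 2 * Real.cos t ^ 2 + d ^ 2 + ‖ellipsePoint A B t ^ 2 - (d : ℂ) ^ 2‖) := by
  rw [focalSum_sq, norm_ellipsePoint_sq h, Complex.norm_real, Real.norm_eq_abs, sq_abs]

lemma focalSum_ellipsePoint_self (h : A ^ 2 = B ^ 2 + c ^ 2) (hA : 0 ≤ A) (t : ℝ) :
    focalSum c (ellipsePoint A B t) = 2 * A := by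
  have hnonneg : 0 ≤ A ^ 2 - c ^ 2 * Real.cos t ^ 2 := by
    nlinarith [Real.cos_sq_le_one t, sq_nonneg B, sq_nonneg c]
  have hnorm : ‖ellipsePoint A B t ^ 2 - (c : ℂ) ^ 2‖ = A ^ 2 - c ^ 2 * Real.cos t ^ 2 := by
    rw [← pow_left_inj₀ (norm_nonneg _) hnonneg two_ne_zero, norm_ellipsePoint_sq_sub_sq_sq h,
      show B ^ 2 = A ^ 2 - c ^ 2 by linarith]
    ring
  rw [← pow_left_inj₀ (focalSum_nonneg _ _) (by positivity) two_ne_zero,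
    focalSum_ellipsePoint_sq h, hnorm]
  linear_combination -2 * h

lemma mul_focalSum_ellipsePoint_lt {d : ℝ} (h : A ^ 2 = B ^ 2 + c ^ 2) (hc : 0 ≤ c) (hcd : c < d)
    (hcA : c < A) (t : ℝ) : c * focalSum d (ellipsePoint A B t) < 2 * d * A := by
  have hbound : focalSum d (ellipsePoint A B t) ≤ 2 * A + 2 * (d - c) := by
    have hmove := focalSum_le_focalSum_add c d (ellipsePoint A B t)
    rwa [focalSum_ellipsePoint_self h (hc.trans hcA.le), ← Complex.ofReal_sub, Complex.norm_real,
      Real.norm_of_nonneg (sub_nonneg.mpr hcd.le)] at hmove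
  calc c * focalSum d (ellipsePoint A B t) ≤ c * (2 * A + 2 * (d - c)) := by gcongr
    _ < 2 * d * A := by linarith [mul_pos (sub_pos.mpr hcd) (sub_pos.mpr hcA)]

lemma focalSum_ellipsePoint_congr (h : A ^ 2 = B ^ 2 + c ^ 2) (d : ℝ) {s t : ℝ}
    (hst : Real.cos s ^ 2 = Real.cos t ^ 2) :
    focalSum d (ellipsePoint A B s) = focalSum d (ellipsePoint A B t) := by
  have hnorm : ‖ellipsePoint A B s ^ 2 - (d : ℂ) ^ 2‖ = ‖ellipsePoint A B t ^ 2 - (d : ℂ) ^ 2‖ := by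
    rw [← pow_left_inj₀ (norm_nonneg _) (norm_nonneg _) two_ne_zero,
      norm_ellipsePoint_sq_sub_sq_sq h, norm_ellipsePoint_sq_sub_sq_sq h, hst]
  rw [← pow_left_inj₀ (focalSum_nonneg _ _) (focalSum_nonneg _ _) two_ne_zero,
    focalSum_ellipsePoint_sq h, focalSum_ellipsePoint_sq h, hnorm, hst]

lemma focalSum_ellipsePoint_sq_sub_sq_mul (h : A ^ 2 = B ^ 2 + c ^ 2) (d s t : ℝ) :
    (focalSum d (ellipsePoint A B s) ^ 2 - focalSum d (ellipsePoint A B t) ^ 2) *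
        (‖ellipsePoint A B s ^ 2 - (d : ℂ) ^ 2‖ + ‖ellipsePoint A B t ^ 2 - (d : ℂ) ^ 2‖) =
      2 * (Real.cos t ^ 2 - Real.cos s ^ 2) *
        ((2 * d * A) ^ 2 - ((c * focalSum d (ellipsePoint A B s)) ^ 2 +
          (c * focalSum d (ellipsePoint A B t)) ^ 2) / 2) := by
  rw [mul_pow c, mul_pow c, focalSum_ellipsePoint_sq h, focalSum_ellipsePoint_sq h]
  linear_combination 2 * (norm_ellipsePoint_sq_sub_sq_sq h d s -
    norm_ellipsePoint_sq_sub_sq_sq h d t)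

lemma focalSum_ellipsePoint_lt {d : ℝ} (h : A ^ 2 = B ^ 2 + c ^ 2) (hc : 0 ≤ c) (hcd : c < d)
    (hcA : c < A) {s t : ℝ} (hst : Real.cos s ^ 2 < Real.cos t ^ 2) :
    focalSum d (ellipsePoint A B t) < focalSum d (ellipsePoint A B s) := by
  have hsq_lt (x : ℝ) : (c * focalSum d (ellipsePoint A B x)) ^ 2 < (2 * d * A) ^ 2 :=
    pow_lt_pow_left₀ (mul_focalSum_ellipsePoint_lt h hc hcd hcA x)
      (mul_nonneg hc (focalSum_nonneg _ _)) two_ne_zero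
  have hpos : 0 < (focalSum d (ellipsePoint A B s) ^ 2 - focalSum d (ellipsePoint A B t) ^ 2) *
      (‖ellipsePoint A B s ^ 2 - (d : ℂ) ^ 2‖ + ‖ellipsePoint A B t ^ 2 - (d : ℂ) ^ 2‖) := by
    rw [focalSum_ellipsePoint_sq_sub_sq_mul h]
    exact mul_pos (by linarith) (by linarith [hsq_lt s, hsq_lt t])
  exact lt_of_pow_lt_pow_left₀ 2 (focalSum_nonneg _ _)
    (sub_pos.mp (pos_of_mul_pos_left hpos (by positivity)))

lemma focalSum_ellipsePoint_le_iff {d : ℝ} (h : A ^ 2 = B ^ 2 + c ^ 2) (hc : 0 ≤ c) (hcd : c < d)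
    (hcA : c < A) {s t : ℝ} :
    focalSum d (ellipsePoint A B s) ≤ focalSum d (ellipsePoint A B t) ↔
      Real.cos t ^ 2 ≤ Real.cos s ^ 2 := by
  refine ⟨fun hle => ?_, fun hle => ?_⟩
  · by_contra! hlt
    exact hle.not_gt (focalSum_ellipsePoint_lt h hc hcd hcA hlt)
  · rcases hle.lt_or_eq with hlt | heq
    · exact (focalSum_ellipsePoint_lt h hc hcd hcA hlt).le
    · exact (focalSum_ellipsePoint_congr h d heq).ge

end Ellipse

section Circle

lemma ofReal_mul_phitC_circle (c r t : ℝ) :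
    (c : ℂ) * phitC (r * Complex.exp (Complex.I * t)) =
      ellipsePoint (c * ((r + r⁻¹) / 2)) (c * ((r - r⁻¹) / 2)) t := by
  rw [phitC, mul_inv, ← Complex.exp_neg, mul_comm Complex.I, ← neg_mul, Complex.exp_mul_I,
    Complex.exp_mul_I, Complex.cos_neg, Complex.sin_neg, ellipsePoint, Complex.mk_eq_add_mul_I]
  push_cast
  ring

variable {a : ℂ} {r : ℝ}

lemma norm_lamAn_circle_le_iff (ha0 : a ≠ 0) (ha1 : ‖a‖ < 1) (hr0 : 0 < r) (hr1 : r ≠ 1)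
    {s t : ℝ} :
    ‖lamAn a (r * Complex.exp (Complex.I * s))‖ ≤ ‖lamAn a (r * Complex.exp (Complex.I * t))‖ ↔
      Real.cos t ^ 2 ≤ Real.cos s ^ 2 := by
  have hfocal : (‖a‖ * ((r + r⁻¹) / 2)) ^ 2 = (‖a‖ * ((r - r⁻¹) / 2)) ^ 2 + ‖a‖ ^ 2 := by
    linear_combination ‖a‖ ^ 2 * mul_inv_cancel₀ hr0.ne'
  have haxis : ‖a‖ < ‖a‖ * ((r + r⁻¹) / 2) :=
    lt_mul_of_one_lt_right (norm_pos_iff.mpr ha0) (by linarith [two_lt_add_inv hr0 hr1])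
  rw [lamAn, lamAn, norm_psiA_le_norm_psiA_iff, ofReal_mul_phitC_circle, ofReal_mul_phitC_circle]
  exact_mod_cast focalSum_ellipsePoint_le_iff hfocal (norm_nonneg a) ha1 haxis

lemma norm_lamAn_circle_eq_iff (ha0 : a ≠ 0) (ha1 : ‖a‖ < 1) (hr0 : 0 < r) (hr1 : r ≠ 1)
    {s t : ℝ} :
    ‖lamAn a (r * Complex.exp (Complex.I * s))‖ = ‖lamAn a (r * Complex.exp (Complex.I * t))‖ ↔
      Real.cos s ^ 2 = Real.cos t ^ 2 := by
  rw [le_antisymm_iff, norm_lamAn_circle_le_iff ha0 ha1 hr0 hr1,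
    norm_lamAn_circle_le_iff ha0 ha1 hr0 hr1, and_comm, ← le_antisymm_iff]

lemma cos_sq_eq_one_iff_of_mem_Icc {t : ℝ} (ht : t ∈ Set.Icc (-Real.pi) Real.pi) :
    Real.cos t ^ 2 = 1 ↔ t = 0 ∨ t = Real.pi ∨ t = -Real.pi := by
  refine ⟨fun h => ?_, by rintro (rfl | rfl | rfl) <;> simp⟩
  have hmem : |t| ∈ Set.Icc 0 Real.pi := ⟨abs_nonneg t, abs_le.mpr ht⟩
  rcases sq_eq_one_iff.mp h with hcos | hcos
  · have habs : |t| = 0 := Real.injOn_cos hmem ⟨le_rfl, Real.pi_pos.le⟩ (by simpa using hcos)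
    exact Or.inl (abs_eq_zero.mp habs)
  · have habs : |t| = Real.pi :=
      Real.injOn_cos hmem ⟨Real.pi_pos.le, le_rfl⟩ (by simpa using hcos)
    exact Or.inr ((abs_eq Real.pi_pos.le).mp habs)

lemma cos_sq_eq_zero_iff_of_mem_Icc {t : ℝ} (ht : t ∈ Set.Icc (-Real.pi) Real.pi) :
    Real.cos t ^ 2 = 0 ↔ t = Real.pi / 2 ∨ t = -(Real.pi / 2) := by
  have hmem : |t| ∈ Set.Icc 0 Real.pi := ⟨abs_nonneg t, abs_le.mpr ht⟩
  have hhalf : Real.pi / 2 ∈ Set.Icc 0 Real.pi := ⟨by positivity, half_le_self Real.pi_pos.le⟩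
  rw [sq_eq_zero_iff, ← Real.cos_abs, ← Real.cos_pi_div_two, Real.injOn_cos.eq_iff hmem hhalf,
    abs_eq (by positivity)]

end Circle

lemma lt_one_of_sq_add_sq_eq_one {x y : ℝ} (h : x ^ 2 + y ^ 2 = 1) (hy : y ≠ 0) : x < 1 := by
  have hx : x ^ 2 < 1 ^ 2 := by linarith [sq_pos_of_ne_zero hy]
  exact lt_of_pow_lt_pow_left₀ 2 zero_le_one hx

lemma pos_and_ne_one_of_lt_or_lt {α β r : ℝ} (hα : 0 < α) (hβ : 0 ≤ β) (h : α ^ 2 + β ^ 2 = 1)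
    (hr : (1 + β) / α < r ∨ (0 < r ∧ r < (1 - β) / α)) : 0 < r ∧ r ≠ 1 := by
  have houter : 1 ≤ (1 + β) / α := (one_le_div hα).mpr (by nlinarith)
  have hinner : (1 - β) / α ≤ 1 := (div_le_one hα).mpr (by nlinarith)
  rcases hr with hr | ⟨hr0, hr⟩
  · exact ⟨zero_lt_one.trans (houter.trans_lt hr), (houter.trans_lt hr).ne'⟩
  · exact ⟨hr0, (hr.trans_le hinner).ne⟩

/-- The circle may cross the preimage of the cut `[-1, 1]`: there `psiA` takes a boundary value of
`ψ_A`, of modulus `1` from either side (at `ζ = 1`, where the code divides by `0`, it takes the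
limit `1`), so `|λ_A|` extends continuously across the cut. -/
theorem stmt17_general (a : ℂ) (ha0 : a ≠ 0) (ha1 : ‖a‖ < 1) (r : ℝ) (hr0 : 0 < r) (hr1 : r ≠ 1) :
    ‖lamAn a ((r : ℂ))‖ = ‖lamAn a (-(r : ℂ))‖ ∧
    ‖lamAn a (Complex.I * (r : ℂ))‖ = ‖lamAn a (-(Complex.I * (r : ℂ)))‖ ∧
    ∀ t ∈ Set.Icc (-Real.pi) Real.pi,
      ‖lamAn a ((r : ℂ))‖ ≤ ‖lamAn a ((r : ℂ) * Complex.exp (Complex.I * (t : ℂ)))‖ ∧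
      ‖lamAn a ((r : ℂ) * Complex.exp (Complex.I * (t : ℂ)))‖ ≤ ‖lamAn a (Complex.I * (r : ℂ))‖ ∧
      (‖lamAn a ((r : ℂ) * Complex.exp (Complex.I * (t : ℂ)))‖ = ‖lamAn a ((r : ℂ))‖ ↔
        t = 0 ∨ t = Real.pi ∨ t = -Real.pi) ∧
      (‖lamAn a ((r : ℂ) * Complex.exp (Complex.I * (t : ℂ)))‖ = ‖lamAn a (Complex.I * (r : ℂ))‖ ↔
        t = Real.pi / 2 ∨ t = -(Real.pi / 2)) := by
  have hle {s t : ℝ} := norm_lamAn_circle_le_iff (s := s) (t := t) ha0 ha1 hr0 hr1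
  have heq {s t : ℝ} := norm_lamAn_circle_eq_iff (s := s) (t := t) ha0 ha1 hr0 hr1
  have hzero : ‖lamAn a r‖ = ‖lamAn a (r * Complex.exp (Complex.I * (0 : ℝ)))‖ := by simp
  have hpi : -(r : ℂ) = r * Complex.exp (Complex.I * Real.pi) := by
    rw [mul_comm Complex.I, Complex.exp_pi_mul_I, mul_neg_one]
  have hhalf : Complex.I * (r : ℂ) = r * Complex.exp (Complex.I * (Real.pi / 2 : ℝ)) := by
    simp [mul_comm Complex.I]
  have hneg_half :
      -(Complex.I * (r : ℂ)) = r * Complex.exp (Complex.I * (-(Real.pi / 2) : ℝ)) := by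
    rw [hhalf, mul_comm Complex.I, mul_comm Complex.I, ← neg_div]
    push_cast
    rw [Complex.exp_pi_div_two_mul_I, Complex.exp_neg_pi_div_two_mul_I, mul_neg]
  rw [hpi, hneg_half, hhalf, hzero]
  refine ⟨heq.mpr (by simp), heq.mpr (by simp), fun t ht =>
    ⟨hle.mpr ?_, hle.mpr ?_, heq.trans ?_, heq.trans ?_⟩⟩
  · simpa using Real.cos_sq_le_one t
  · simpa using sq_nonneg (Real.cos t)
  · rw [Real.cos_zero, one_pow, cos_sq_eq_one_iff_of_mem_Icc ht]
  · rw [Real.cos_pi_div_two, zero_pow two_ne_zero, cos_sq_eq_zero_iff_of_mem_Icc ht]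

/-- Lemma `ellipse1`: for `r > (1+|b|)/|a|` or `0 < r < (1−|b|)/|a|`,
`|λ_A(±r)| ≤ |λ_A(r e^{it})| ≤ |λ_A(±ir)|` on `[−π, π]`, with equality on the left iff
`t ∈ {0, π, −π}` and on the right iff `t = ±π/2`. -/
theorem stmt17 (a b : ℂ) (hab1 : ‖a‖ ^ 2 + ‖b‖ ^ 2 = 1) (hab : a * b ≠ 0)
    (r : ℝ) (hr : (1 + ‖b‖) / ‖a‖ < r ∨ (0 < r ∧ r < (1 - ‖b‖) / ‖a‖)) :
    ‖lamAn a ((r : ℂ))‖ = ‖lamAn a (-(r : ℂ))‖ ∧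
    ‖lamAn a (Complex.I * (r : ℂ))‖ = ‖lamAn a (-(Complex.I * (r : ℂ)))‖ ∧
    ∀ t ∈ Set.Icc (-Real.pi) Real.pi,
      ‖lamAn a ((r : ℂ))‖ ≤ ‖lamAn a ((r : ℂ) * Complex.exp (Complex.I * (t : ℂ)))‖ ∧
      ‖lamAn a ((r : ℂ) * Complex.exp (Complex.I * (t : ℂ)))‖ ≤ ‖lamAn a (Complex.I * (r : ℂ))‖ ∧
      (‖lamAn a ((r : ℂ) * Complex.exp (Complex.I * (t : ℂ)))‖ = ‖lamAn a ((r : ℂ))‖ ↔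
        t = 0 ∨ t = Real.pi ∨ t = -Real.pi) ∧
      (‖lamAn a ((r : ℂ) * Complex.exp (Complex.I * (t : ℂ)))‖ = ‖lamAn a (Complex.I * (r : ℂ))‖ ↔
        t = Real.pi / 2 ∨ t = -(Real.pi / 2)) := by
  have ha0 : a ≠ 0 := left_ne_zero_of_mul hab
  obtain ⟨hr0, hr1⟩ := pos_and_ne_one_of_lt_or_lt (norm_pos_iff.mpr ha0) (norm_nonneg b) hab1 hr
  exact stmt17_general a ha0
    (lt_one_of_sq_add_sq_eq_one hab1 (norm_ne_zero_iff.mpr (right_ne_zero_of_mul hab))) r hr0 hr1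
end
end
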